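/- arXiv:2102.04203 — 2 statements merged into one kernel-verified Lean document; each statement's English description precedes it below -/
import Mathlib

section
/- Let G be a (possibly infinite) graph, let s, t ∈ V(G) be distinct, and let 𝒫 be a system of pairwise edge-disjoint st-paths. Then there is a large st-wave 𝒲 such that the set of edges of 𝒲 incident with s contains the set of edges of 𝒫 incident with s. -/
/-!
Common definitions: multigraphs (parallel edges allowed, no loops), walks,
paths, cuts, waves and related notions used in the statements below.
-/

universe u v

/-- A multigraph with vertex type `V` and edge type `E`: every edge is assigned
an unordered pair of *distinct* end-vertices (parallel edges allowed, no loops). -/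
structure Multigraph (V : Type u) (E : Type v) : Type (max u v) where
  inc : E → Sym2 V
  not_isDiag : ∀ e, ¬ (inc e).IsDiag

namespace Multigraph

variable {V : Type u} {E : Type v}

/-- Walks in a multigraph, recorded together with the edges they traverse. -/
inductive Walk (G : Multigraph V E) : V → V → Type (max u v)
  | nil (v : V) : Walk G v v
  | cons {u v w : V} (e : E) (he : G.inc e = s(u, v)) (p : Walk G v w) : Walk G u w

namespace Walk

variable {G : Multigraph V E}

/-- The list of vertices visited by a walk. -/
def support : ∀ {u w : V}, G.Walk u w → List V
  | _, _, .nil v => [v]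
  | u, _, .cons _ _ p => u :: p.support

/-- The list of edges traversed by a walk. -/
def edges : ∀ {u w : V}, G.Walk u w → List E
  | _, _, .nil _ => []
  | _, _, .cons e _ p => e :: p.edges

end Walk

/-- `δ_G(v)`: the set of edges incident with the vertex `v`. -/
def inci (G : Multigraph V E) (v : V) : Set E := {e | v ∈ G.inc e}

/-- `δ_G(X)`: the set of edges with exactly one end-vertex in `X`. -/
def cut (G : Multigraph V E) (X : Set V) : Set E :=
  {e | ∃ x y, G.inc e = s(x, y) ∧ x ∈ X ∧ y ∉ X}

/-- Connectedness of a multigraph. -/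
def Connected (G : Multigraph V E) : Prop := ∀ u v : V, Nonempty (G.Walk u v)

/-- A `T`-path: a path connecting two distinct vertices of `T`
with no internal vertex in `T`. -/
structure TPath (G : Multigraph V E) (T : Set V) : Type (max u v) where
  first : V
  last : V
  walk : G.Walk first last
  first_mem : first ∈ T
  last_mem : last ∈ T
  ne : first ≠ last
  support_nodup : walk.support.Nodup
  internal : ∀ x ∈ walk.support, x ∈ T → x = first ∨ x = last

/-- A system of pairwise edge-disjoint `T`-paths. -/
def TPathDisjoint (G : Multigraph V E) {T : Set V} (P : Set (G.TPath T)) : Prop :=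
  ∀ p ∈ P, ∀ q ∈ P, p ≠ q → ∀ e, e ∈ p.walk.edges → e ∉ q.walk.edges

/-- An `st`-path: a path from `s` to `t` (no internal vertex is `s` or `t`,
which is automatic as the vertices of a path are distinct). -/
structure STPath (G : Multigraph V E) (s t : V) : Type (max u v) where
  walk : G.Walk s t
  support_nodup : walk.support.Nodup

/-- A system of pairwise edge-disjoint `st`-paths. -/
def STPathDisjoint (G : Multigraph V E) {s t : V} (P : Set (G.STPath s t)) : Prop :=
  ∀ p ∈ P, ∀ q ∈ P, p ≠ q → ∀ e, e ∈ p.walk.edges → e ∉ q.walk.edges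

/-- A nontrivial path starting at `s`. -/
structure SPath (G : Multigraph V E) (s : V) : Type (max u v) where
  last : V
  walk : G.Walk s last
  support_nodup : walk.support.Nodup
  edges_ne_nil : walk.edges ≠ []

/-- A system of pairwise edge-disjoint paths starting at `s`. -/
def SPathDisjoint (G : Multigraph V E) {s : V} (W : Set (G.SPath s)) : Prop :=
  ∀ p ∈ W, ∀ q ∈ W, p ≠ q → ∀ e, e ∈ p.walk.edges → e ∉ q.walk.edges

/-- The set of last edges of a system of paths starting at `s`. -/
def lastEdges (G : Multigraph V E) {s : V} (W : Set (G.SPath s)) : Set E :=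
  {e | ∃ p ∈ W, p.walk.edges.getLast? = some e}

/-- `C` is a cut separating `A` from `B`. -/
def SepCut (G : Multigraph V E) (A B : Set V) (C : Set E) : Prop :=
  ∃ X : Set V, A ⊆ X ∧ (∀ b ∈ B, b ∉ X) ∧ C = G.cut X

/-- `C` is a `⊆`-minimal cut separating `A` from `B`. -/
def IsMinSepCut (G : Multigraph V E) (A B : Set V) (C : Set E) : Prop :=
  G.SepCut A B C ∧ ∀ D : Set E, G.SepCut A B D → D ⊆ C → D = C

/-- An `s`-`B`-wave: a system of pairwise edge-disjoint paths starting at `s`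
whose set of last edges is a `⊆`-minimal cut separating `s` from `B`. -/
def IsWave (G : Multigraph V E) (s : V) (B : Set V) (W : Set (G.SPath s)) : Prop :=
  G.SPathDisjoint W ∧ G.IsMinSepCut {s} B (G.lastEdges W)

/-- An Erdős–Menger `st`-cut: an `st`-cut which is orthogonal to some system of
pairwise edge-disjoint `st`-paths, i.e. it consists of exactly one edge chosen
from each path of the system. -/
def IsEMCut (G : Multigraph V E) (s t : V) (C : Set E) : Prop :=
  (∃ X : Set V, s ∈ X ∧ t ∉ X ∧ C = G.cut X) ∧
  ∃ P : Set (G.STPath s t), G.STPathDisjoint P ∧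
    (∀ p ∈ P, ∃! e, e ∈ C ∧ e ∈ p.walk.edges) ∧
    (∀ e ∈ C, ∃ p ∈ P, e ∈ p.walk.edges)

/-- The order `≼` on `st`-cuts: the `s`-side of `C` is contained in the
`s`-side of `D` (in a connected graph the `s`-side is unique). -/
def CutLE (G : Multigraph V E) (s t : V) (C D : Set E) : Prop :=
  ∃ X Y : Set V, s ∈ X ∧ t ∉ X ∧ C = G.cut X ∧ s ∈ Y ∧ t ∉ Y ∧ D = G.cut Y ∧ X ⊆ Y

/-- A cut of the form `C_W` for some `st`-wave `W`. -/
def IsWaveCut (G : Multigraph V E) (s t : V) (C : Set E) : Prop :=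
  ∃ W : Set (G.SPath s), G.IsWave s {t} W ∧ G.lastEdges W = C

/-- Deletion of a set of edges. -/
def deleteEdges (G : Multigraph V E) (F : Set E) : Multigraph V {e : E // e ∉ F} where
  inc e := G.inc e.1
  not_isDiag e := G.not_isDiag e.1

open Classical in
/-- Contraction of the vertex set `X` to the vertex `s` (edges inside `X` are
deleted, edges leaving `X` are redirected to `s`). -/
noncomputable def contract (G : Multigraph V E) (X : Set V) (s : V) :
    Multigraph V {e : E // ¬ (Sym2.map (fun v => if v ∈ X then s else v) (G.inc e)).IsDiag} where
  inc e := Sym2.map (fun v => if v ∈ X then s else v) (G.inc e.1)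
  not_isDiag e := e.2

/-- Reachability inside a set `S` of vertices. -/
def ReachableIn (G : Multigraph V E) (S : Set V) (x y : V) : Prop :=
  ∃ p : G.Walk x y, ∀ z ∈ p.support, z ∈ S

/-- `Y` is (the vertex set of) a connected component of the subgraph of `G`
induced by `S`. -/
def IsComponentOf (G : Multigraph V E) (Y S : Set V) : Prop :=
  Y.Nonempty ∧ Y ⊆ S ∧ ∀ x ∈ Y, ∀ y ∈ S, (G.ReachableIn S x y ↔ y ∈ Y)

/-- A cycle in a multigraph (a closed walk with distinct edges whose
vertices are distinct except that the first one equals the last one). -/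
structure Cycle (G : Multigraph V E) : Type (max u v) where
  base : V
  walk : G.Walk base base
  edges_ne_nil : walk.edges ≠ []
  edges_nodup : walk.edges.Nodup
  support_tail_nodup : walk.support.tail.Nodup

/-- A graph is Eulerian if its edge set can be partitioned into
edge sets of cycles. -/
def IsEulerian (G : Multigraph V E) : Prop :=
  ∃ C : Set G.Cycle,
    (∀ c ∈ C, ∀ d ∈ C, c ≠ d → ∀ e, e ∈ c.walk.edges → e ∉ d.walk.edges) ∧
    ∀ e : E, ∃ c ∈ C, e ∈ c.walk.edges

/-- A `T`-partition: a family `{A t : t ∈ T}` of pairwise disjoint vertex sets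
with `A t ∩ T = {t}`. -/
def IsTPartition (T : Set V) (A : V → Set V) : Prop :=
  (∀ t ∈ T, A t ∩ T = {t}) ∧
  ∀ t₁ ∈ T, ∀ t₂ ∈ T, t₁ ≠ t₂ → Disjoint (A t₁) (A t₂)

end Multigraph

namespace Multigraph

variable {V : Type u} {E : Type v}

/-- `l` is the edge list of a walk starting at `u`, with all vertices in `A`
except the last one, which lies in `B`. -/
inductive LW (G : Multigraph V E) (A B : Set V) : V → List E → Prop
  | nil (x : V) (hx : x ∈ B) : LW G A B x []
  | cons (x y : V) (e : E) (l : List E) (hx : x ∈ A) (he : G.inc e = s(x, y))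
      (h : LW G A B y l) : LW G A B x (e :: l)

/-- Edge list of a walk from `s` that stays in `X` until its last vertex and never returns to `s`. -/
def SW (G : Multigraph V E) (s : V) (X : Set V) (l : List E) : Prop :=
  ∃ e tl y, l = e :: tl ∧ G.inc e = s(s, y) ∧ G.LW (X \ {s}) Xᶜ y tl

/-- Pairwise disjointness of a set of lists. -/
def LDisj (F : Set (List E)) : Prop :=
  ∀ l ∈ F, ∀ k ∈ F, ∀ e, e ∈ l → e ∈ k → l = k

/-- `F` links `s` to the cut of `X`. -/
structure Sys (G : Multigraph V E) (s t : V) (X : Set V) (F : Set (List E)) : Prop where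
  hs : s ∈ X
  ht : t ∉ X
  sw : ∀ l ∈ F, G.SW s X l
  disj : LDisj F
  cover : ∀ e ∈ G.cut X, ∃ l ∈ F, e ∈ l

variable {G : Multigraph V E} {s t : V}

theorem mem_cut_iff {X : Set V} {e : E} {x y : V} (he : G.inc e = s(x, y)) :
    e ∈ G.cut X ↔ (x ∈ X ∧ y ∉ X) ∨ (y ∈ X ∧ x ∉ X) := by
  constructor
  · rintro ⟨a, b, h, ha, hb⟩
    rw [he, Sym2.eq_iff] at h
    rcases h with ⟨rfl, rfl⟩ | ⟨rfl, rfl⟩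
    · exact Or.inl ⟨ha, hb⟩
    · exact Or.inr ⟨ha, hb⟩
  · rintro (⟨h1, h2⟩ | ⟨h1, h2⟩)
    · exact ⟨x, y, he, h1, h2⟩
    · exact ⟨y, x, by rw [he, Sym2.eq_swap], h1, h2⟩

theorem inc_ne {e : E} {x y : V} (he : G.inc e = s(x, y)) : x ≠ y := by
  intro h
  apply G.not_isDiag e
  rw [he, h]
  simp

theorem LW.mono {A B A' B' : Set V} (hA : A ⊆ A') (hB : B ⊆ B') {x : V} {l : List E}
    (h : G.LW A B x l) : G.LW A' B' x l := by
  induction h with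
  | nil x hx => exact .nil x (hB hx)
  | cons x y e l hx he h ih => exact .cons x y e l (hA hx) he ih

theorem SW.toLW {X : Set V} (hs : s ∈ X) {l : List E} (h : G.SW s X l) : G.LW X Xᶜ s l := by
  obtain ⟨e, l', y, rfl, he, h⟩ := h
  exact .cons s y e l' hs he (h.mono Set.sdiff_subset subset_rfl)

theorem LW.start {A B : Set V} {x : V} {l : List E} (h : G.LW A B x l) : x ∈ A ∨ x ∈ B := by
  cases h with
  | nil x hx => exact Or.inr hx
  | cons x y e l hx he h => exact Or.inl hx

theorem LW.nil_of {A B : Set V} {x : V} {l : List E} (h : G.LW A B x l) (hx : x ∉ A) : l = [] := by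
  cases h with
  | nil x hx => rfl
  | cons x y e l hxA he h => exact absurd hxA hx

/-- all ends of edges lie in `A ∪ B`. -/
theorem LW.ends {A B : Set V} {x : V} {l : List E} (h : G.LW A B x l) :
    ∀ e ∈ l, ∀ z ∈ G.inc e, z ∈ A ∨ z ∈ B := by
  induction h with
  | nil x hx => simp
  | cons x y e l hx he h ih =>
    intro f hf z hz
    rcases List.mem_cons.1 hf with rfl | hf
    · rw [he, Sym2.mem_iff] at hz
      rcases hz with rfl | rfl
      · exact Or.inl hx
      · exact h.start
    · exact ih f hf z hz

/-- all edges touch `A`. -/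
theorem LW.touch {A B : Set V} {x : V} {l : List E} (h : G.LW A B x l) :
    ∀ e ∈ l, ∃ z ∈ G.inc e, z ∈ A := by
  induction h with
  | nil x hx => simp
  | cons x y e l hx he h ih =>
    intro f hf
    rcases List.mem_cons.1 hf with rfl | hf
    · exact ⟨x, by simp [he], hx⟩
    · exact ih f hf

theorem LW.exists_cut {X : Set V} {x : V} {l : List E} (h : G.LW X Xᶜ x l) (hx : x ∈ X) :
    ∃ e ∈ l, e ∈ G.cut X := by
  induction h with
  | nil x hx' => exact absurd hx hx'
  | cons x y e l hx he h ih =>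
    by_cases hy : y ∈ X
    · obtain ⟨f, hf, hc⟩ := ih hy
      exact ⟨f, List.mem_cons_of_mem _ hf, hc⟩
    · exact ⟨e, by simp, x, y, he, hx, hy⟩

theorem LW.cut_last {X : Set V} {x : V} {l : List E} (h : G.LW X Xᶜ x l) :
    ∀ a e b, l = a ++ e :: b → e ∈ G.cut X → b = [] := by
  induction h with
  | nil x hx' => simp
  | cons x y e l hx he h ih =>
    intro a f b hl hf
    cases a with
    | nil =>
      simp only [List.nil_append, List.cons.injEq] at hl
      obtain ⟨rfl, rfl⟩ := hl
      rw [mem_cut_iff he] at hf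
      apply h.nil_of
      tauto
    | cons c a =>
      simp only [List.cons_append, List.cons.injEq] at hl
      exact ih a f b hl.2 hf

theorem LW.cut_unique {X : Set V} {x : V} {l : List E} (h : G.LW X Xᶜ x l) {e f : E}
    (he : e ∈ l) (hf : f ∈ l) (hec : e ∈ G.cut X) (hfc : f ∈ G.cut X) : e = f := by
  obtain ⟨a, b, hab⟩ := List.append_of_mem he
  obtain ⟨c, d, hcd⟩ := List.append_of_mem hf
  obtain rfl := h.cut_last _ _ _ hab hec
  obtain rfl := h.cut_last _ _ _ hcd hfc
  rw [hab] at hcd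
  exact (List.append_inj' hcd rfl).2 |> List.singleton_inj.1

/-- Splicing two walks with a common edge. -/
theorem LW.splice {A B : Set V} {x y : V} {a b c d : List E} {m : E}
    (h1 : G.LW A B x (a ++ m :: b)) (h2 : G.LW A B y (c ++ m :: d)) :
    ∃ l, G.LW A B x (a ++ l) ∧ (∀ f ∈ l, f = m ∨ f ∈ d) := by
  have key1 : ∀ (a : List E) (x : V), G.LW A B x (a ++ m :: b) → ∃ p q, G.inc m = s(p, q) ∧
      (∀ d', G.LW A B q d' → G.LW A B x (a ++ m :: d')) ∧
      (∀ d', G.LW A B p d' → G.LW A B x (a ++ d')) := by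
    intro a
    induction a with
    | nil =>
      intro x h
      cases h with
      | cons x y e l hx he h =>
        exact ⟨x, y, he, fun d' hd => .cons x y m d' hx he hd, fun d' hd => hd⟩
    | cons c a ih =>
      intro x h
      cases h with
      | cons x y e l hx he h =>
        obtain ⟨p, q, hm, k1, k2⟩ := ih y h
        exact ⟨p, q, hm, fun d' hd => .cons x y c _ hx he (k1 d' hd),
          fun d' hd => .cons x y c _ hx he (k2 d' hd)⟩
  have key2 : ∀ (c : List E) (y : V), G.LW A B y (c ++ m :: d) → ∃ p q, G.inc m = s(p, q) ∧
      G.LW A B q d := by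
    intro a
    induction a with
    | nil =>
      intro x h
      cases h with
      | cons x y e l hx he h => exact ⟨x, y, he, h⟩
    | cons c a ih =>
      intro x h
      cases h with
      | cons x y e l hx he h => exact ih y h
  obtain ⟨p, q, hm, k1, k2⟩ := key1 a x h1
  obtain ⟨p', q', hm', hd⟩ := key2 c y h2
  rw [hm, Sym2.eq_iff] at hm'
  rcases hm' with ⟨rfl, rfl⟩ | ⟨rfl, rfl⟩
  · exact ⟨m :: d, k1 d hd, by simp⟩
  · exact ⟨d, k2 d hd, fun f hf => Or.inr hf⟩

theorem SW.splice {X : Set V} (hs : s ∈ X) {a b c d : List E} {m : E}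
    (h1 : G.SW s X (a ++ m :: b)) (h2 : G.SW s X (c ++ m :: d)) :
    ∃ l, G.SW s X l ∧ l.head? = (a ++ m :: b).head? ∧ ∀ f ∈ l, f ∈ a ∨ f = m ∨ f ∈ d := by
  have noS : ∀ {y l}, G.LW (X \ {s}) Xᶜ y l → m ∈ l → s ∈ G.inc m → False := by
    intro y l h hm hsm
    rcases h.ends m hm s hsm with h | h
    · exact h.2 rfl
    · exact h hs
  obtain ⟨e, l, y, hl, he, h⟩ := h1
  obtain ⟨e', l', y', hl', he', h'⟩ := h2
  cases a with
  | nil =>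
    simp only [List.nil_append, List.cons.injEq] at hl
    obtain ⟨rfl, rfl⟩ := hl
    cases c with
    | nil =>
      simp only [List.nil_append, List.cons.injEq] at hl'
      obtain ⟨rfl, rfl⟩ := hl'
      exact ⟨m :: d, ⟨m, d, y', rfl, he', h'⟩, by simp, by simp⟩
    | cons c0 c =>
      simp only [List.cons_append, List.cons.injEq] at hl'
      obtain ⟨rfl, rfl⟩ := hl'
      exact (noS h' (by simp) (by simp [he])).elim
  | cons a0 a =>
    simp only [List.cons_append, List.cons.injEq] at hl
    obtain ⟨rfl, rfl⟩ := hl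
    cases c with
    | nil =>
      simp only [List.nil_append, List.cons.injEq] at hl'
      obtain ⟨rfl, rfl⟩ := hl'
      exact (noS h (by simp) (by simp [he'])).elim
    | cons c0 c =>
      simp only [List.cons_append, List.cons.injEq] at hl'
      obtain ⟨rfl, rfl⟩ := hl'
      obtain ⟨l, hl, hf⟩ := h.splice h'
      refine ⟨a0 :: (a ++ l), ⟨a0, _, y, rfl, he, hl⟩, by simp, ?_⟩
      intro f hfm
      simp only [List.mem_cons, List.mem_append] at hfm ⊢
      rcases hfm with rfl | hfm | hfm
      · simp
      · simp [hfm]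
      · rcases hf f hfm with h | h <;> simp [h]

/-- Stable matchings. -/
theorem stable {α ι κ : Type*} (p : α → ι) (w : α → κ) (rp rw' : α → ℕ)
    (ip : ∀ e f, p e = p f → rp e = rp f → e = f)
    (iw : ∀ e f, w e = w f → rw' e = rw' f → e = f) :
    ∃ M : Set α, (∀ e ∈ M, ∀ f ∈ M, p e = p f → e = f) ∧
      (∀ e ∈ M, ∀ f ∈ M, w e = w f → e = f) ∧
      ∀ e, (∃ m ∈ M, p m = p e ∧ rp m ≤ rp e) ∨ (∃ m ∈ M, w m = w e ∧ rw' m ≤ rw' e) := by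
  let O : Set α → Set α := fun R => {e | ∀ f, p f = p e → rp f < rp e → f ∈ R}
  let Φ : Set α →o Set α := ⟨fun R => {e | ∃ f ∈ O R, w f = w e ∧ rw' f < rw' e}, by
    intro R R' hR e he
    obtain ⟨f, hf, h⟩ := he
    exact ⟨f, fun g h1 h2 => hR (hf g h1 h2), h⟩⟩
  let R := Φ.lfp
  have hR : ∀ e, e ∈ R ↔ ∃ f ∈ O R, w f = w e ∧ rw' f < rw' e := by
    intro e
    have : Φ R = R := Φ.map_lfp
    conv_lhs => rw [← this]
    rfl
  refine ⟨{e | e ∈ O R ∧ e ∉ R}, ?_, ?_, ?_⟩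
  · rintro e ⟨he, he'⟩ f ⟨hf, hf'⟩ h
    rcases lt_trichotomy (rp e) (rp f) with h1 | h1 | h1
    · exact (he' (hf e h h1)).elim
    · exact ip e f h h1
    · exact (hf' (he f h.symm h1)).elim
  · rintro e ⟨he, he'⟩ f ⟨hf, hf'⟩ h
    rcases lt_trichotomy (rw' e) (rw' f) with h1 | h1 | h1
    · exact (hf' ((hR f).2 ⟨e, he, h, h1⟩)).elim
    · exact iw e f h h1
    · exact (he' ((hR e).2 ⟨f, hf, h.symm, h1⟩)).elim
  · intro e
    by_cases he : e ∈ R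
    · right
      have h1 : ∃ n, ∃ f ∈ O R, w f = w e ∧ rw' f < rw' e ∧ rw' f = n := by
        obtain ⟨f, hf, h, h'⟩ := (hR e).1 he
        exact ⟨_, f, hf, h, h', rfl⟩
      classical
      obtain ⟨f, hf, h2, h3, h4⟩ := Nat.find_spec h1
      refine ⟨f, ⟨hf, fun hfR => ?_⟩, h2, h3.le⟩
      obtain ⟨g, hg, h5, h6⟩ := (hR f).1 hfR
      exact Nat.find_min h1 (h4 ▸ h6) ⟨g, hg, h5.trans h2, h6.trans h3, rfl⟩
    · left
      have h1 : ∃ n, ∃ f, f ∉ R ∧ p f = p e ∧ rp f ≤ rp e ∧ rp f = n :=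
        ⟨_, e, he, rfl, le_rfl, rfl⟩
      classical
      obtain ⟨f, hf, h2, h3, h4⟩ := Nat.find_spec h1
      refine ⟨f, ⟨fun g h5 h6 => ?_, hf⟩, h2, h3⟩
      by_contra hg
      exact Nat.find_min h1 (h4 ▸ h6) ⟨g, hg, h5.trans h2, h6.le.trans h3, rfl⟩

theorem split_first [DecidableEq E] {l : List E} {m : E} (h : m ∈ l) :
    ∃ a b, l = a ++ m :: b ∧ ∀ f ∈ a, f ∈ l ∧ l.idxOf f ≤ l.idxOf m := by
  obtain ⟨a, b, rfl, hm⟩ := List.eq_append_cons_of_mem h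
  refine ⟨a, b, rfl, fun f hf => ⟨by simp [hf], ?_⟩⟩
  rw [List.idxOf_append_of_mem hf, List.idxOf_append_of_notMem hm]
  have := List.idxOf_lt_length_of_mem hf
  omega

theorem split_last [DecidableEq E] {l : List E} {m : E} (h : m ∈ l) :
    ∃ c d, l = c ++ m :: d ∧ ∀ f ∈ d, f ∈ l ∧ l.reverse.idxOf f ≤ l.reverse.idxOf m := by
  obtain ⟨a, b, h1, h2⟩ := split_first (List.mem_reverse.2 h)
  refine ⟨b.reverse, a.reverse, ?_, ?_⟩
  · rw [← List.reverse_reverse l, h1]; simp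
  · intro f hf
    have := h2 f (List.mem_reverse.1 hf)
    exact ⟨List.mem_reverse.1 this.1, this.2⟩

/-- Edge version of Pym's theorem. -/
theorem pym {X : Set V} {F P : Set (List E)} (hF : G.Sys s t X F)
    (hP : ∀ l ∈ P, G.SW s X l) (hPd : LDisj P) :
    ∃ F', G.Sys s t X F' ∧ ∀ l ∈ P, ∃ l' ∈ F', l'.head? = l.head? := by
  classical
  let U := {e : E // (∃ l ∈ P, e ∈ l) ∧ ∃ l ∈ F, e ∈ l}
  choose p hpP hp using fun e : U => e.2.1
  choose w hwF hw using fun e : U => e.2.2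
  have peq : ∀ (e : U) l, l ∈ P → e.1 ∈ l → p e = l := fun e l hl h => hPd _ (hpP e) _ hl _ (hp e) h
  have weq : ∀ (e : U) l, l ∈ F → e.1 ∈ l → w e = l :=
    fun e l hl h => hF.disj _ (hwF e) _ hl _ (hw e) h
  have ip : ∀ e f : U, p e = p f → (p e).idxOf e.1 = (p f).idxOf f.1 → e = f := by
    intro e f h1 h2
    rw [h1] at h2
    exact Subtype.ext (List.idxOf_inj (h1 ▸ hp e) |>.1 h2)
  have iw : ∀ e f : U, w e = w f → (w e).reverse.idxOf e.1 = (w f).reverse.idxOf f.1 → e = f := by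
    intro e f h1 h2
    rw [h1] at h2
    exact Subtype.ext (List.idxOf_inj (List.mem_reverse.2 (h1 ▸ hw e)) |>.1 h2)
  obtain ⟨M, hM1, hM2, hM3⟩ := stable p w (fun e => (p e).idxOf e.1)
    (fun e => (w e).reverse.idxOf e.1) ip iw
  have hsp : ∀ m : U, ∃ l, G.SW s X l ∧ l.head? = (p m).head? ∧
      (∀ f ∈ l, (f ∈ p m ∧ (p m).idxOf f ≤ (p m).idxOf m.1) ∨
        (f ∈ w m ∧ (w m).reverse.idxOf f ≤ (w m).reverse.idxOf m.1)) ∧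
      ∀ e ∈ G.cut X, e ∈ w m → e ∈ l := by
    intro m
    obtain ⟨a, b, hab, ha⟩ := split_first (hp m)
    obtain ⟨c, d, hcd, hd⟩ := split_last (hw m)
    have s1 := hP _ (hpP m)
    have s2 := hF.sw _ (hwF m)
    have s1' := s1
    have s2' := s2
    rw [hab] at s1'
    rw [hcd] at s2'
    obtain ⟨l, hl, hh, hf⟩ := SW.splice hF.hs s1' s2'
    refine ⟨l, hl, by rw [hh, hab], ?_, ?_⟩
    · intro f hfl
      rcases hf f hfl with h | rfl | h
      · exact Or.inl (ha f h)
      · exact Or.inl ⟨hp m, le_rfl⟩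
      · exact Or.inr (hd f h)
    · intro e he hew
      obtain ⟨e', he', hc⟩ := (hl.toLW hF.hs).exists_cut hF.hs
      rcases hf e' he' with h | h | h
      · exfalso
        obtain ⟨a1, a2, rfl⟩ := List.append_of_mem h
        have := (s1'.toLW hF.hs).cut_last a1 e' (a2 ++ m.1 :: b) (by simp) hc
        simp at this
      · have : e = e' := (s2.toLW hF.hs).cut_unique hew (h ▸ hw m) he hc
        rwa [this]
      · have : e = e' := (s2.toLW hF.hs).cut_unique hew (hd _ h).1 he hc
        rwa [this]
  choose g hg1 hg2 hg3 hg4 using hsp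
  refine ⟨{l | (∃ m ∈ M, l = g m) ∨ (l ∈ F ∧ ∀ m ∈ M, w m ≠ l)}, ⟨hF.hs, hF.ht, ?_, ?_, ?_⟩, ?_⟩
  · rintro l (⟨m, hm, rfl⟩ | ⟨hl, -⟩)
    · exact hg1 m
    · exact hF.sw l hl
  · have mixed : ∀ m ∈ M, ∀ m' ∈ M, ∀ f, (f ∈ p m ∧ (p m).idxOf f ≤ (p m).idxOf m.1) →
        (f ∈ w m' ∧ (w m').reverse.idxOf f ≤ (w m').reverse.idxOf m'.1) → m = m' := by
      rintro m hm m' hm' f ⟨h1, h2⟩ ⟨h3, h4⟩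
      let φ : U := ⟨f, ⟨_, hpP m, h1⟩, ⟨_, hwF m', h3⟩⟩
      have e1 : p φ = p m := peq φ _ (hpP m) h1
      have e2 : w φ = w m' := weq φ _ (hwF m') h3
      rcases hM3 φ with ⟨n, hn, h5, h6⟩ | ⟨n, hn, h5, h6⟩
      · obtain rfl := hM1 n hn m hm (h5.trans e1)
        have : φ = n := ip _ _ e1 (le_antisymm (by rw [e1]; exact h2) h6)
        exact hM2 n hn m' hm' (this ▸ e2)
      · obtain rfl := hM2 n hn m' hm' (h5.trans e2)
        have : φ = n := iw _ _ e2 (le_antisymm (by rw [e2]; exact h4) h6)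
        exact (hM1 n hn m hm (this ▸ e1)).symm
    have mixed2 : ∀ m ∈ M, ∀ l ∈ F, (∀ m ∈ M, w m ≠ l) → ∀ f, f ∈ g m → f ∈ l → False := by
      intro m hm l hl hun f hf hfl
      rcases hg3 m f hf with ⟨h1, h2⟩ | ⟨h1, h2⟩
      · let φ : U := ⟨f, ⟨_, hpP m, h1⟩, ⟨_, hl, hfl⟩⟩
        have e1 : p φ = p m := peq φ _ (hpP m) h1
        have e2 : w φ = l := weq φ _ hl hfl
        rcases hM3 φ with ⟨n, hn, h5, h6⟩ | ⟨n, hn, h5, h6⟩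
        · obtain rfl := hM1 n hn m hm (h5.trans e1)
          have : φ = n := ip _ _ e1 (le_antisymm (by rw [e1]; exact h2) h6)
          exact hun n hn (this ▸ e2)
        · exact hun n hn (h5.trans e2)
      · exact hun m hm (hF.disj _ (hwF m) _ hl f h1 hfl)
    rintro l (⟨m, hm, rfl⟩ | ⟨hl, hun⟩) l' (⟨m', hm', rfl⟩ | ⟨hl', hun'⟩) f hf hf'
    · congr 1
      rcases hg3 m f hf with h1 | h1 <;> rcases hg3 m' f hf' with h2 | h2
      · exact hM1 m hm m' hm' (hPd _ (hpP m) _ (hpP m') f h1.1 h2.1)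
      · exact mixed m hm m' hm' f h1 h2
      · exact (mixed m' hm' m hm f h2 h1).symm
      · exact hM2 m hm m' hm' (hF.disj _ (hwF m) _ (hwF m') f h1.1 h2.1)
    · exact (mixed2 m hm l' hl' hun' f hf hf').elim
    · exact (mixed2 m' hm' l hl hun f hf' hf).elim
    · exact hF.disj l hl l' hl' f hf hf'
  · intro e he
    obtain ⟨l, hl, hel⟩ := hF.cover e he
    by_cases h : ∀ m ∈ M, w m ≠ l
    · exact ⟨l, Or.inr ⟨hl, h⟩, hel⟩
    · push Not at h
      obtain ⟨m, hm, rfl⟩ := h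
      exact ⟨g m, Or.inl ⟨m, hm, rfl⟩, hg4 m e he hel⟩
  · intro l hl
    obtain ⟨e, hel, hec⟩ := ((hP l hl).toLW hF.hs).exists_cut hF.hs
    obtain ⟨l', hl', hel'⟩ := hF.cover e hec
    let φ : U := ⟨e, ⟨l, hl, hel⟩, ⟨l', hl', hel'⟩⟩
    have e1 : p φ = l := peq φ _ hl hel
    have e2 : w φ = l' := weq φ _ hl' hel'
    have : ∃ m ∈ M, p m = l := by
      rcases hM3 φ with ⟨n, hn, h5, h6⟩ | ⟨n, hn, h5, h6⟩
      · exact ⟨n, hn, h5.trans e1⟩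
      · refine ⟨n, hn, ?_⟩
        have h0 : (w φ).reverse.idxOf e = 0 := by
          rw [e2]
          obtain ⟨a, b, hab⟩ := List.append_of_mem hel'
          obtain rfl := ((hF.sw l' hl').toLW hF.hs).cut_last _ _ _ hab hec
          rw [hab]; simp
        have : n = φ := iw _ _ h5 (by
          change _ ≤ (w φ).reverse.idxOf e at h6
          change _ = (w φ).reverse.idxOf e
          omega)
        rw [this, e1]
    obtain ⟨m, hm, rfl⟩ := this
    exact ⟨g m, Or.inl ⟨m, hm, rfl⟩, hg2 m⟩

/-- Extending a walk beyond its last vertex. -/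
theorem LW.extend {A X Z : Set V} {B : Set V} {x : V} {l d : List E} {e : E} {a b : V}
    (h : G.LW A Xᶜ x l) (hA : A ⊆ X) (hAB : A ⊆ B)
    (he : e ∈ l) (hab : G.inc e = s(a, b)) (hb : b ∉ X) (hd : G.LW B Z b d) :
    G.LW B Z x (l ++ d) := by
  induction h with
  | nil x hx => simp at he
  | cons x y f l hx hf h ih =>
    by_cases hel : e ∈ l
    · exact .cons x y f _ (hAB hx) hf (ih hel)
    · have : e = f := by simpa [hel] using he
      subst this
      rw [hf, Sym2.eq_iff] at hab
      rcases hab with ⟨rfl, rfl⟩ | ⟨rfl, rfl⟩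
      · obtain rfl := h.nil_of (fun h => hb (hA h))
        exact .cons x y e _ (hAB hx) hf hd
      · exact absurd (hA hx) hb

theorem SW.extend {X Y : Set V} (hs : s ∈ X) (hXY : X ⊆ Y) {l d : List E} {e : E} {a b : V}
    (h : G.SW s X l) (he : e ∈ l) (hab : G.inc e = s(a, b)) (hb : b ∉ X)
    (hd : G.LW (Y \ {s}) Yᶜ b d) : G.SW s Y (l ++ d) := by
  obtain ⟨f, l, y, rfl, hf, h⟩ := h
  refine ⟨f, l ++ d, y, rfl, hf, ?_⟩
  by_cases hel : e ∈ l
  · exact h.extend Set.sdiff_subset (Set.sdiff_subset_sdiff_left hXY) hel hab hb hd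
  · have : e = f := by simpa [hel] using he
    subst this
    rw [hf, Sym2.eq_iff] at hab
    rcases hab with ⟨rfl, rfl⟩ | ⟨rfl, rfl⟩
    · obtain rfl := h.nil_of (fun h => hb h.1)
      exact hd
    · exact absurd hs hb

theorem SW.extend_nil {X Y : Set V} (hs : s ∈ X) (hXY : X ⊆ Y) {l : List E} {e : E}
    (h : G.SW s X l) (he : e ∈ l) (hc : e ∈ G.cut Y) : G.SW s Y l := by
  obtain ⟨a, b, hab, ha, hb⟩ := hc
  have := h.extend hs hXY he hab (fun h => hb (hXY h)) (LW.nil b hb)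
  simpa using this

/-- an edge of a list in `X` which is in the cut of a bigger set is in the cut of `X`. -/
theorem cut_down {X Y Z : Set V} (hs : s ∈ X) (hXY : X ⊆ Y) (hYZ : Y ⊆ Z) {l : List E} {e : E}
    (h : G.SW s X l) (he : e ∈ l) (hc : e ∈ G.cut Z) : e ∈ G.cut Y := by
  obtain ⟨z, hz, hzX⟩ := (h.toLW hs).touch e he
  obtain ⟨a, b, hab, ha, hb⟩ := hc
  rw [hab, Sym2.mem_iff] at hz
  rcases hz with rfl | rfl
  · exact ⟨z, b, hab, hXY hzX, fun h => hb (hYZ h)⟩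
  · exact absurd (hYZ (hXY hzX)) hb

theorem LW.last_exit {X Y : Set V} {u : V} {l : List E} (h : G.LW Y Yᶜ u l) {f : E} {x y : V}
    (hf : f ∈ l) (hxy : G.inc f = s(x, y)) (hx : x ∉ X) (hy : y ∉ X ∪ Y) :
    (G.LW (Y \ X) (X ∪ Y)ᶜ u l) ∨
    ∃ c e d a b, l = c ++ e :: d ∧ G.inc e = s(a, b) ∧ a ∈ X ∧ b ∉ X ∧
      G.LW (Y \ X) (X ∪ Y)ᶜ b d ∧ f ∈ d := by
  induction h with
  | nil x hx => simp at hf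
  | cons p q g l hp hg h ih =>
    by_cases hfl : f ∈ l
    · rcases ih hfl with h1 | ⟨c, e, d, a, b, rfl, h1⟩
      · by_cases hpX : p ∈ X
        · right
          refine ⟨[], g, l, p, q, rfl, hg, hpX, ?_, h1, hfl⟩
          rcases h1.start with h2 | h2
          · exact h2.2
          · exact fun h3 => h2 (Or.inl h3)
        · exact Or.inl (.cons p q g l ⟨hp, hpX⟩ hg h1)
      · exact Or.inr ⟨g :: c, e, d, a, b, rfl, h1⟩
    · have : f = g := by simpa [hfl] using hf
      subst this
      rw [hg, Sym2.eq_iff] at hxy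
      rcases hxy with ⟨rfl, rfl⟩ | ⟨rfl, rfl⟩
      · obtain rfl := h.nil_of (fun h => hy (Or.inr h))
        exact Or.inl (.cons p q f [] ⟨hp, hx⟩ hg (.nil q hy))
      · exact absurd (Or.inr hp) hy

theorem split_eq {c c' d d' : List E} {e e' : E} (h : c ++ e :: d = c' ++ e' :: d')
    (h1 : e ∉ d') (h2 : e' ∉ d) : e = e' ∧ d = d' := by
  rw [List.append_eq_append_iff] at h
  rcases h with ⟨a, h3, h4⟩ | ⟨a, h3, h4⟩
  · cases a with
    | nil => simpa using h4
    | cons x a =>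
      simp only [List.cons_append, List.cons.injEq] at h4
      exact absurd (by rw [h4.2]; simp) h2
  · cases a with
    | nil => simpa [eq_comm] using h4
    | cons x a =>
      simp only [List.cons_append, List.cons.injEq] at h4
      exact absurd (by rw [h4.2]; simp) h1

theorem Sys.union {X Y : Set V} {F F' : Set (List E)} (h : G.Sys s t X F) (h' : G.Sys s t Y F') :
    ∃ K, G.Sys s t (X ∪ Y) K ∧ ∀ l ∈ F, (∃ e ∈ l, e ∈ G.cut (X ∪ Y)) → l ∈ K := by
  have hXY : X ⊆ X ∪ Y := Set.subset_union_left
  -- tail edges do not touch X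
  have tail : ∀ {b d}, G.LW (Y \ X) (X ∪ Y)ᶜ b d → ∀ f ∈ d, ∀ z ∈ G.inc f, z ∉ X := by
    intro b d hd f hf z hz
    rcases hd.ends f hf z hz with h1 | h1
    · exact h1.2
    · exact fun h2 => h1 (Or.inl h2)
  have htouch : ∀ l ∈ F, ∀ {b d}, G.LW (Y \ X) (X ∪ Y)ᶜ b d → ∀ f ∈ l, f ∈ d → False := by
    intro l hl b d hd f hf hfd
    obtain ⟨z, hz, hzX⟩ := ((h.sw l hl).toLW h.hs).touch f hf
    exact tail hd f hfd z hz hzX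
  refine ⟨{l | (l ∈ F ∧ ∃ e ∈ l, e ∈ G.cut (X ∪ Y)) ∨
    ∃ l1 ∈ F, ∃ e ∈ l1, ∃ c d a b, l = l1 ++ d ∧ c ++ e :: d ∈ F' ∧ G.inc e = s(a, b) ∧
      a ∈ X ∧ b ∉ X ∧ G.LW (Y \ X) (X ∪ Y)ᶜ b d}, ⟨Or.inl h.hs, ?_, ?_, ?_, ?_⟩, ?_⟩
  · rintro (h1 | h1)
    · exact h.ht h1
    · exact h'.ht h1
  · rintro l (⟨hl, e, he, hc⟩ | ⟨l1, hl1, e, he, c, d, a, b, rfl, hF', hab, ha, hb, hd⟩)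
    · exact (h.sw l hl).extend_nil h.hs hXY he hc
    · refine (h.sw l1 hl1).extend h.hs hXY he hab hb (hd.mono ?_ subset_rfl)
      rintro z ⟨h1, h2⟩
      refine ⟨Or.inr h1, ?_⟩
      rintro rfl
      exact h2 h.hs
  · have mixed : ∀ l ∈ F, (∃ e ∈ l, e ∈ G.cut (X ∪ Y)) → ∀ l1 ∈ F, ∀ e ∈ l1, ∀ d a b,
        G.inc e = s(a, b) → a ∈ X → b ∉ X → G.LW (Y \ X) (X ∪ Y)ᶜ b d → ∀ f, f ∈ l →
        f ∈ l1 ++ d → l = l1 ++ d := by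
      rintro l hl ⟨e0, he0, hc0⟩ l1 hl1 e he d a b hab ha hb hd f hf hf'
      rcases List.mem_append.1 hf' with h1 | h1
      · obtain rfl := h.disj l hl l1 hl1 f hf h1
        have hc1 : e0 ∈ G.cut X := cut_down h.hs subset_rfl hXY (h.sw l hl) he0 hc0
        obtain rfl := ((h.sw l hl).toLW h.hs).cut_unique he0 he hc1 ⟨a, b, hab, ha, hb⟩
        rw [mem_cut_iff hab] at hc0
        have : b ∉ X ∪ Y := by
          rcases hc0 with h2 | h2
          · exact h2.2
          · exact absurd (Or.inl ha) h2.2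
        obtain rfl := hd.nil_of (fun h2 => this (Or.inr h2.1))
        simp
      · exact (htouch l hl hd f hf h1).elim
    rintro l (⟨hl, hc⟩ | ⟨l1, hl1, e, he, c, d, a, b, rfl, hF', hab, ha, hb, hd⟩)
      l' (⟨hl', hc'⟩ | ⟨l1', hl1', e', he', c', d', a', b', rfl, hF'', hab', ha', hb', hd'⟩) f hf hf'
    · exact h.disj l hl l' hl' f hf hf'
    · exact mixed l hl hc l1' hl1' e' he' d' a' b' hab' ha' hb' hd' f hf hf'
    · exact (mixed l' hl' hc' l1 hl1 e he d a b hab ha hb hd f hf' hf).symm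
    · have n1 : e ∉ d' := fun h1 => tail hd' e h1 a (by simp [hab]) ha
      have n2 : e' ∉ d := fun h1 => tail hd e' h1 a' (by simp [hab']) ha'
      by_cases hll : l1 = l1'
      · subst hll
        obtain rfl := ((h.sw l1 hl1).toLW h.hs).cut_unique he he' ⟨a, b, hab, ha, hb⟩
          ⟨a', b', hab', ha', hb'⟩
        have := h'.disj _ hF' _ hF'' e (by simp) (by simp)
        rw [(split_eq this n1 n2).2]
      · rcases List.mem_append.1 hf with h1 | h1 <;> rcases List.mem_append.1 hf' with h2 | h2
        · exact absurd (h.disj _ hl1 _ hl1' f h1 h2) hll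
        · exact (htouch l1 hl1 hd' f h1 h2).elim
        · exact (htouch l1' hl1' hd f h2 h1).elim
        · have := h'.disj _ hF' _ hF'' f (by simp [h1]) (by simp [h2])
          obtain ⟨rfl, rfl⟩ := split_eq this n1 n2
          exact absurd (h.disj _ hl1 _ hl1' e he he') hll
  · rintro f ⟨x, y, hxy, hx, hy⟩
    by_cases hxX : x ∈ X
    · obtain ⟨l, hl, hfl⟩ := h.cover f ⟨x, y, hxy, hxX, fun h1 => hy (Or.inl h1)⟩
      exact ⟨l, Or.inl ⟨hl, f, hfl, x, y, hxy, hx, hy⟩, hfl⟩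
    · have hxY : x ∈ Y := hx.resolve_left hxX
      obtain ⟨l, hl, hfl⟩ := h'.cover f ⟨x, y, hxy, hxY, fun h1 => hy (Or.inr h1)⟩
      rcases ((h'.sw l hl).toLW h'.hs).last_exit hfl hxy hxX hy with h1 |
        ⟨c, e, d, a, b, rfl, hab, ha, hb, hd, hfd⟩
      · rcases h1.start with h2 | h2
        · exact absurd h.hs h2.2
        · exact absurd (Or.inl h.hs) h2
      · obtain ⟨l1, hl1, hel1⟩ := h.cover e ⟨a, b, hab, ha, hb⟩
        exact ⟨l1 ++ d, Or.inr ⟨l1, hl1, e, hel1, c, d, a, b, rfl, hl, hab, ha, hb, hd⟩,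
          by simp [hfd]⟩
  · intro l hl hc
    exact Or.inl ⟨hl, hc⟩

theorem Sys.base (hst : s ≠ t) : G.Sys s t {s} {l | ∃ e ∈ G.cut {s}, l = [e]} := by
  refine ⟨rfl, fun h => hst h.symm, ?_, ?_, fun e he => ⟨[e], ⟨e, he, rfl⟩, by simp⟩⟩
  · rintro l ⟨e, ⟨x, y, hxy, hx, hy⟩, rfl⟩
    obtain rfl : x = s := hx
    exact ⟨e, [], y, rfl, hxy, .nil y hy⟩
  · rintro l ⟨e, he, rfl⟩ l' ⟨e', he', rfl⟩ f hf hf'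
    simp only [List.mem_singleton] at hf hf'
    rw [← hf, ← hf']

theorem Sys.exists_max (G : Multigraph V E) (hst : s ≠ t) :
    ∃ X F, G.Sys s t X F ∧ ∀ Y F', G.Sys s t Y F' → Y ⊆ X := by
  let S := {q : Set V × Set (List E) // G.Sys s t q.1 q.2}
  let r : S → S → Prop := fun a b => a.1.1 ⊆ b.1.1 ∧
    ∀ l ∈ a.1.2, (∃ e ∈ l, e ∈ G.cut b.1.1) → l ∈ b.1.2
  have hchain : ∀ c : Set S, IsChain r c → ∃ ub, ∀ a ∈ c, r a ub := by
    intro c hc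
    rcases c.eq_empty_or_nonempty with rfl | ⟨a0, ha0⟩
    · exact ⟨⟨(_, _), Sys.base hst⟩, by simp⟩
    let X : Set V := {x | ∃ a ∈ c, x ∈ a.1.1}
    let F : Set (List E) := {l | (∃ a ∈ c, l ∈ a.1.2) ∧ ∃ e ∈ l, e ∈ G.cut X}
    have hX : ∀ a ∈ c, a.1.1 ⊆ X := fun a ha x hx => ⟨a, ha, hx⟩
    have hsys : G.Sys s t X F := by
      refine ⟨⟨a0, ha0, a0.2.hs⟩, ?_, ?_, ?_, ?_⟩
      · rintro ⟨a, ha, h⟩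
        exact a.2.ht h
      · rintro l ⟨⟨a, ha, hl⟩, e, he, hec⟩
        exact (a.2.sw l hl).extend_nil a.2.hs (hX a ha) he hec
      · have key : ∀ a ∈ c, ∀ b ∈ c, r a b → ∀ l ∈ a.1.2, ∀ l' ∈ b.1.2,
            (∃ e ∈ l, e ∈ G.cut X) → ∀ f, f ∈ l → f ∈ l' → l = l' := by
          rintro a ha b hb hab l hl l' hl' ⟨e, he, hec⟩ f hf hf'
          refine b.2.disj l (hab.2 l hl ⟨e, he, ?_⟩) l' hl' f hf hf'
          exact cut_down a.2.hs hab.1 (hX b hb) (a.2.sw l hl) he hec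
        rintro l ⟨⟨a, ha, hl⟩, hle⟩ l' ⟨⟨b, hb, hl'⟩, hle'⟩ f hf hf'
        by_cases hab : a = b
        · subst hab
          exact a.2.disj l hl l' hl' f hf hf'
        · rcases hc ha hb hab with h | h
          · exact key a ha b hb h l hl l' hl' hle f hf hf'
          · exact (key b hb a ha h l' hl' l hl hle' f hf' hf).symm
      · rintro e ⟨x, y, hxy, ⟨a, ha, hx⟩, hy⟩
        obtain ⟨l, hl, hel⟩ := a.2.cover e ⟨x, y, hxy, hx, fun h => hy (hX a ha h)⟩
        exact ⟨l, ⟨⟨a, ha, hl⟩, e, hel, x, y, hxy, ⟨a, ha, hx⟩, hy⟩, hel⟩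
    exact ⟨⟨(X, F), hsys⟩, fun a ha => ⟨hX a ha, fun l hl he => ⟨⟨a, ha, hl⟩, he⟩⟩⟩
  have htrans : ∀ {a b c : S}, r a b → r b c → r a c := by
    rintro a b c hab hbc
    refine ⟨hab.1.trans hbc.1, fun l hl hle => hbc.2 l (hab.2 l hl ?_) hle⟩
    obtain ⟨e, he, hec⟩ := hle
    exact ⟨e, he, cut_down a.2.hs hab.1 hbc.1 (a.2.sw l hl) he hec⟩
  obtain ⟨m, hm⟩ := exists_maximal_of_chains_bounded hchain htrans
  refine ⟨m.1.1, m.1.2, m.2, fun Y F' hY => ?_⟩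
  obtain ⟨K, hK, hK'⟩ := m.2.union hY
  have := hm ⟨(_, K), hK⟩ ⟨Set.subset_union_left, hK'⟩
  exact Set.subset_union_right.trans this.1

theorem LW.cut_sub {X Z : Set V} {u : V} {l : List E} (h : G.LW X Xᶜ u l) (hu : u ∈ Z)
    (hZX : Z ⊆ X) (hc : G.cut Z ⊆ G.cut X) {e : E} (he : e ∈ l) (heX : e ∈ G.cut X) :
    e ∈ G.cut Z := by
  induction h with
  | nil x hx => simp at he
  | cons p q g l hp hg h ih =>
    by_cases hel : e ∈ l
    · apply ih _ hel
      by_contra hq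
      have := hc ⟨p, q, hg, hu, hq⟩
      rw [mem_cut_iff hg] at this
      have hqX : q ∉ X := by tauto
      rw [h.nil_of hqX] at hel
      simp at hel
    · have : e = g := by simpa [hel] using he
      subst this
      rw [mem_cut_iff hg] at heX
      exact ⟨p, q, hg, hu, fun h => by have := hZX h; tauto⟩

theorem max_minimal {X : Set V} {F : Set (List E)} (h : G.Sys s t X F)
    (hmax : ∀ Y F', G.Sys s t Y F' → Y ⊆ X) : G.IsMinSepCut {s} {t} (G.cut X) := by
  refine ⟨⟨X, by simpa using h.hs, by simpa using h.ht, rfl⟩, ?_⟩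
  rintro D ⟨Z, hsZ, htZ, rfl⟩ hsub
  have hsZ : s ∈ Z := hsZ rfl
  have htZ : t ∉ Z := htZ t rfl
  have hXZ : X ⊆ X ∪ Z := Set.subset_union_left
  have hZX : Z ⊆ X := by
    refine Set.subset_union_right.trans (hmax (X ∪ Z) {l | l ∈ F ∧ ∃ e ∈ l, e ∈ G.cut (X ∪ Z)}
      ⟨Or.inl h.hs, ?_, ?_, ?_, ?_⟩)
    · rintro (h1 | h1)
      · exact h.ht h1
      · exact htZ h1
    · rintro l ⟨hl, e, he, hec⟩
      exact (h.sw l hl).extend_nil h.hs hXZ he hec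
    · rintro l ⟨hl, -⟩ l' ⟨hl', -⟩
      exact h.disj l hl l' hl'
    · intro e he
      have heX : e ∈ G.cut X := by
        obtain ⟨x, y, hxy, hx, hy⟩ := he
        rcases hx with hx | hx
        · exact ⟨x, y, hxy, hx, fun h => hy (Or.inl h)⟩
        · exact hsub ⟨x, y, hxy, hx, fun h => hy (Or.inr h)⟩
      obtain ⟨l, hl, hel⟩ := h.cover e heX
      exact ⟨l, ⟨hl, e, hel, he⟩, hel⟩
  refine subset_antisymm hsub fun e he => ?_
  obtain ⟨l, hl, hel⟩ := h.cover e he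
  exact ((h.sw l hl).toLW h.hs).cut_sub hsZ hZX hsub hel he

/-! ### Conversions between walks and lists -/

theorem Walk.start_mem {u w : V} (q : G.Walk u w) : u ∈ q.support := by
  cases q <;> simp [Walk.support]

theorem Walk.ends_mem {u w : V} (q : G.Walk u w) : ∀ e ∈ q.edges, ∀ z ∈ G.inc e, z ∈ q.support := by
  induction q with
  | nil v => simp [Walk.edges]
  | cons e he p ih =>
    intro f hf z hz
    simp only [Walk.edges, List.mem_cons] at hf
    simp only [Walk.support, List.mem_cons]
    rcases hf with rfl | hf
    · rw [he, Sym2.mem_iff] at hz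
      rcases hz with rfl | rfl
      · exact Or.inl rfl
      · exact Or.inr p.start_mem
    · exact Or.inr (ih f hf z hz)

theorem Walk.edges_nodup {u w : V} (q : G.Walk u w) (h : q.support.Nodup) : q.edges.Nodup := by
  induction q with
  | nil v => simp [Walk.edges]
  | cons e he p ih =>
    simp only [Walk.support, Walk.edges, List.nodup_cons] at h ⊢
    exact ⟨fun h1 => h.1 (p.ends_mem e h1 _ (by simp [he])), ih h.2⟩

theorem Walk.toLW {X : Set V} {u y : V} (q : G.Walk u y)
    (h : ∀ a e b, q.edges = a ++ e :: b → (e ∈ G.cut X ↔ b = []))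
    (h1 : q.edges ≠ [] → u ∈ X) (h2 : q.edges = [] → u ∉ X) (h3 : s ∉ q.support) :
    G.LW (X \ {s}) Xᶜ u q.edges := by
  induction q with
  | nil v => exact .nil v (h2 rfl)
  | @cons u v w e he p ih =>
    simp only [Walk.support, List.mem_cons, not_or] at h3
    have hu : u ∈ X := h1 (by simp [Walk.edges])
    have he' := h [] e p.edges rfl
    rw [mem_cut_iff he] at he'
    refine .cons u v e _ ⟨hu, fun h => h3.1 (by simpa using h.symm)⟩ he (ih ?_ ?_ ?_ h3.2)
    · intro a f b hab
      exact h (e :: a) f b (by simp [Walk.edges, hab])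
    · intro hne
      by_contra hv
      exact hne (he'.1 (Or.inl ⟨hu, hv⟩))
    · intro hnil
      have := he'.2 hnil
      tauto

theorem sys_of_wave {W : Set (G.SPath s)} (h : G.IsWave s {t} W) :
    ∃ X F, G.Sys s t X F ∧ G.lastEdges W = G.cut X := by
  obtain ⟨hd, ⟨X, hsX, htX, hX⟩, -⟩ := h
  have hsX : s ∈ X := hsX rfl
  have htX : t ∉ X := htX t rfl
  refine ⟨X, {l | ∃ p ∈ W, l = p.walk.edges}, ⟨hsX, htX, ?_, ?_, ?_⟩, hX⟩
  · rintro l ⟨p, hp, rfl⟩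
    have key : ∀ a e b, p.walk.edges = a ++ e :: b → (e ∈ G.cut X ↔ b = []) := by
      intro a e b hab
      constructor
      · intro he
        rw [← hX] at he
        obtain ⟨p', hp', hl⟩ := he
        have : p = p' := by
          by_contra hne
          exact hd p hp p' hp' hne e (by simp [hab]) (List.mem_of_getLast? hl)
        subst this
        by_contra hb
        have hnd := p.walk.edges_nodup p.support_nodup
        rw [hab] at hnd hl
        have hl' : b.getLast? = some e := by
          obtain ⟨b', x, rfl⟩ := List.eq_nil_or_concat b |>.resolve_left hb
          rw [List.concat_eq_append, ← List.cons_append, ← List.append_assoc,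
            List.getLast?_concat] at hl
          simpa using hl
        have := List.mem_of_getLast? hl'
        rw [List.nodup_append] at hnd
        exact (List.nodup_cons.1 hnd.2.1).1 this
      · rintro rfl
        rw [← hX]
        exact ⟨p, hp, by simp [hab]⟩
    obtain ⟨y, walk, hnd, hne⟩ := p
    cases walk with
    | nil => exact absurd rfl hne
    | @cons _ v _ e he q =>
      simp only [Walk.support, List.nodup_cons] at hnd
      refine ⟨e, q.edges, v, rfl, he, q.toLW ?_ ?_ ?_ hnd.1⟩
      · intro a f b hab
        exact key (e :: a) f b (by simp [Walk.edges, hab])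
      · intro hq
        by_contra hv
        exact hq ((key [] e q.edges rfl).1 ⟨s, v, he, hsX, hv⟩)
      · intro hq
        have := (key [] e q.edges rfl).2 hq
        rw [mem_cut_iff he] at this
        tauto
  · rintro l ⟨p, hp, rfl⟩ l' ⟨p', hp', rfl⟩ e he he'
    by_contra hne
    exact hd p hp p' hp' (fun h => hne (by rw [h])) e he he'
  · intro e he
    rw [← hX] at he
    obtain ⟨p, hp, hl⟩ := he
    exact ⟨_, ⟨p, hp, rfl⟩, List.mem_of_getLast? hl⟩

theorem Walk.dropUntil {v y u : V} (q : G.Walk v y) (hu : u ∈ q.support) :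
    ∃ r : G.Walk u y, r.support.Sublist q.support ∧ r.edges ⊆ q.edges := by
  induction q with
  | nil v =>
    simp only [Walk.support, List.mem_singleton] at hu
    subst hu
    exact ⟨.nil u, by simp, by simp⟩
  | @cons a b c e he p ih =>
    by_cases h : u = a
    · subst h
      exact ⟨.cons e he p, List.Sublist.refl _, fun _ h => h⟩
    · simp only [Walk.support, List.mem_cons, h, false_or] at hu
      obtain ⟨r, h1, h2⟩ := ih hu
      exact ⟨r, h1.trans (List.sublist_cons_self _ _), fun f hf => List.mem_cons_of_mem _ (h2 hf)⟩

theorem LW.toWalk {A B : Set V} {u : V} {l : List E} (h : G.LW A B u l) :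
    ∃ y, ∃ q : G.Walk u y, q.support.Nodup ∧ q.edges ⊆ l ∧ y ∈ B ∧
      ∀ z ∈ q.support, z ∈ A ∨ z = y := by
  induction h with
  | nil x hx => exact ⟨x, .nil x, by simp [Walk.support], by simp [Walk.edges], hx,
      by simp [Walk.support]⟩
  | cons p q g l hp hg h ih =>
    obtain ⟨y, w, h1, h2, h3, h4⟩ := ih
    by_cases hpw : p ∈ w.support
    · obtain ⟨r, h5, h6⟩ := w.dropUntil hpw
      exact ⟨y, r, h1.sublist h5, fun f hf => List.mem_cons_of_mem _ (h2 (h6 hf)), h3,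
        fun z hz => h4 z (h5.subset hz)⟩
    · refine ⟨y, .cons g hg w, ?_, ?_, h3, ?_⟩
      · simp [Walk.support, hpw, h1]
      · intro f hf
        simp only [Walk.edges, List.mem_cons] at hf ⊢
        exact hf.imp_right (fun h => h2 h)
      · intro z hz
        simp only [Walk.support, List.mem_cons] at hz
        rcases hz with rfl | hz
        · exact Or.inl hp
        · exact h4 z hz

theorem Walk.last_cut {X : Set V} {u y : V} (q : G.Walk u y) (hy : y ∉ X)
    (h : ∀ z ∈ q.support, z ∈ X ∨ z = y) : ∀ e, q.edges.getLast? = some e → e ∈ G.cut X := by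
  induction q with
  | nil v => simp [Walk.edges]
  | @cons a b c e he p ih =>
    intro f hf
    simp only [Walk.support, List.mem_cons] at h
    cases p with
    | nil =>
      simp only [Walk.edges, List.getLast?_singleton, Option.some.injEq] at hf
      subst hf
      refine ⟨a, b, he, (h a (Or.inl rfl)).resolve_right (inc_ne he), hy⟩
    | cons e' he' p' =>
      apply ih hy (fun z hz => h z (Or.inr hz))
      simpa [Walk.edges] using hf

theorem SW.toSPath {X : Set V} (hs : s ∈ X) {l : List E} (h : G.SW s X l) :
    ∃ p : G.SPath s, p.walk.edges ⊆ l ∧ p.walk.edges.head? = l.head? ∧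
      ∃ e ∈ G.cut X, p.walk.edges.getLast? = some e := by
  obtain ⟨e, l', v, rfl, he, h⟩ := h
  obtain ⟨y, q, h1, h2, h3, h4⟩ := h.toWalk
  have hsq : s ∉ q.support := by
    intro hsq
    rcases h4 s hsq with h5 | rfl
    · exact h5.2 rfl
    · exact h3 hs
  refine ⟨⟨y, .cons e he q, by simp [Walk.support, hsq, h1], by simp [Walk.edges]⟩, ?_, ?_, ?_⟩
  · intro f hf
    simp only [Walk.edges, List.mem_cons] at hf ⊢
    exact hf.imp_right (fun h => h2 h)
  · simp [Walk.edges]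
  · have hne : (Walk.cons e he q).edges ≠ [] := by simp [Walk.edges]
    have hg := List.getLast?_eq_some_getLast hne
    refine ⟨_, (Walk.cons e he q).last_cut h3 ?_ _ hg, hg⟩
    intro z hz
    simp only [Walk.support, List.mem_cons] at hz
    rcases hz with rfl | hz
    · exact Or.inl hs
    · exact (h4 z hz).imp_left (fun h => h.1)

theorem Walk.truncate {X : Set V} {u : V} (q : G.Walk u t) (ht : t ∉ X) (h3 : s ∉ q.support) :
    ∃ l, G.LW (X \ {s}) Xᶜ u l ∧ l ⊆ q.edges := by
  induction q with
  | nil v => exact ⟨[], .nil v ht, by simp⟩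
  | @cons a b c e he p ih =>
    simp only [Walk.support, List.mem_cons, not_or] at h3
    by_cases ha : a ∈ X
    · obtain ⟨l, hl, hsub⟩ := ih ht h3.2
      refine ⟨e :: l, .cons a b e l ⟨ha, fun h => h3.1 (by simpa using h.symm)⟩ he hl, ?_⟩
      intro f hf
      simp only [Walk.edges, List.mem_cons] at hf ⊢
      exact hf.imp_right (fun h => hsub h)
    · exact ⟨[], .nil a ha, by simp⟩

theorem STPath.truncate (hst : s ≠ t) {X : Set V} (p : G.STPath s t) (ht : t ∉ X) :
    ∃ l, G.SW s X l ∧ l ⊆ p.walk.edges ∧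
      ∀ e ∈ G.inci s, e ∈ p.walk.edges → l.head? = some e := by
  obtain ⟨walk, hnd⟩ := p
  cases walk with
  | nil => exact absurd rfl hst
  | @cons _ v _ e he q =>
    simp only [Walk.support, List.nodup_cons] at hnd
    obtain ⟨l, hl, hsub⟩ := q.truncate ht hnd.1
    refine ⟨e :: l, ⟨e, l, v, rfl, he, hl⟩, ?_, ?_⟩
    · intro f hf
      simp only [Walk.edges, List.mem_cons] at hf ⊢
      exact hf.imp_right (fun h => hsub h)
    · intro f hf hfe
      simp only [Walk.edges, List.mem_cons] at hfe
      rcases hfe with rfl | hfe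
      · rfl
      · exact absurd (q.ends_mem f hfe s hf) hnd.1

end Multigraph

/-- For every system `P` of pairwise edge-disjoint `st`-paths there is a large
`st`-wave `W` (its cut is `≼`-largest among all wave cuts) with
`δ_W(s) ⊇ δ_P(s)`. -/
theorem large_wave_extending {V : Type u} {E : Type v} (G : Multigraph V E)
    (s t : V) (hst : s ≠ t) (P : Set (G.STPath s t))
    (hP : G.STPathDisjoint P) :
    ∃ W : Set (G.SPath s), G.IsWave s {t} W ∧
      (∀ D : Set E, G.IsWaveCut s t D → G.CutLE s t D (G.lastEdges W)) ∧
      ∀ e ∈ G.inci s, (∃ p ∈ P, e ∈ p.walk.edges) → ∃ w ∈ W, e ∈ w.walk.edges := by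
  obtain ⟨X, F0, hF0, hmax⟩ := Multigraph.Sys.exists_max G hst
  choose f hf1 hf2 hf3 using fun p : G.STPath s t => p.truncate hst hF0.ht
  obtain ⟨F, hF, hhead⟩ := Multigraph.pym (P := {l | ∃ p ∈ P, l = f p}) hF0
    (by rintro l ⟨p, hp, rfl⟩; exact hf1 p)
    (by
      rintro l ⟨p, hp, rfl⟩ l' ⟨p', hp', rfl⟩ e he he'
      by_contra hne
      exact hP p hp p' hp' (fun h => hne (by rw [h])) e (hf2 p he) (hf2 p' he'))
  choose g hg1 hg2 hg3 using fun l : F => (hF.sw l.1 l.2).toSPath hF.hs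
  have hlast : G.lastEdges (Set.range g) = G.cut X := by
    ext e
    constructor
    · rintro ⟨_, ⟨l, rfl⟩, hl⟩
      obtain ⟨e', he', h⟩ := hg3 l
      rw [hl] at h
      cases h
      exact he'
    · intro he
      obtain ⟨l, hl, hel⟩ := hF.cover e he
      obtain ⟨e', he', h⟩ := hg3 ⟨l, hl⟩
      have : e = e' := ((hF.sw l hl).toLW hF.hs).cut_unique hel
        (hg1 ⟨l, hl⟩ (List.mem_of_getLast? h)) he he'
      subst this
      exact ⟨_, ⟨⟨l, hl⟩, rfl⟩, h⟩
  refine ⟨Set.range g, ⟨?_, ?_⟩, ?_, ?_⟩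
  · rintro _ ⟨l, rfl⟩ _ ⟨l', rfl⟩ hne e he he'
    exact hne (congrArg g (Subtype.ext (hF.disj _ l.2 _ l'.2 e (hg1 l he) (hg1 l' he'))))
  · rw [hlast]
    exact Multigraph.max_minimal hF hmax
  · rintro D ⟨W, hW, rfl⟩
    obtain ⟨Y, K, hY, hcut⟩ := Multigraph.sys_of_wave hW
    exact ⟨Y, X, hY.hs, hY.ht, hcut, hF.hs, hF.ht, hlast, hmax Y K hY⟩
  · rintro e he ⟨p, hp, hep⟩
    obtain ⟨l, hl, hh⟩ := hhead (f p) ⟨p, hp, rfl⟩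
    refine ⟨g ⟨l, hl⟩, ⟨_, rfl⟩, ?_⟩
    apply List.mem_of_head?
    rw [hg2, hh, hf3 p e he hep]
end

section
/- Let G be a (possibly infinite) graph and T ⊆ V(G) such that G is inner Eulerian with respect to T (there is no X ⊆ V(G)∖T with d_G(X) an odd natural number), and assume that for each t ∈ T there is a system 𝒫_t of pairwise edge-disjoint T-paths covering δ(t). Then for every t ∈ T and every edge e ∈ δ(t) there exists a T-path P through e such that in G − E(P), for each t' ∈ T there is still a system of pairwise edge-disjoint T-paths covering all edges of G − E(P) incident with t', and G − E(P) remains inner Eulerian w.r.t. T. -/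
/-!
Common definitions: multigraphs (parallel edges allowed, no loops), walks,
paths, cuts, waves and related notions used in the statements below.
-/

universe u v

namespace LC

variable {V : Type u} {E : Type v}

/-- `IsW inc u l w`: the list `l` of (edge, head) pairs is a walk from `u` to `w`. -/
def IsW (inc : E → Sym2 V) : V → List (E × V) → V → Prop
  | u, [], w => u = w
  | u, d :: l, w => inc d.1 = s(u, d.2) ∧ IsW inc d.2 l w

/-- Reachability by darts in `D`. -/
def DReach (inc : E → Sym2 V) (D : Set (E × V)) : V → V → Prop :=
  Relation.ReflTransGen (fun x y => ∃ e, (e, y) ∈ D ∧ inc e = s(x, y))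

/-- Reachability by edges in `F`. -/
def Reach (inc : E → Sym2 V) (F : Set E) : V → V → Prop :=
  Relation.ReflTransGen (fun x y => ∃ e ∈ F, inc e = s(x, y))

theorem isW_append {inc : E → Sym2 V} {u w : V} {l₁ l₂ : List (E × V)} :
    IsW inc u (l₁ ++ l₂) w ↔ ∃ v, IsW inc u l₁ v ∧ IsW inc v l₂ w := by
  induction l₁ generalizing u with
  | nil => simp [IsW]
  | cons d l ih => simp [IsW, ih, and_assoc]

theorem Reach.mono {inc : E → Sym2 V} {F F' : Set E} (h : F ⊆ F') {u w : V}
    (hr : Reach inc F u w) : Reach inc F' u w :=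
  Relation.ReflTransGen.mono (fun _ _ ⟨e, he, h'⟩ => ⟨e, h he, h'⟩) _ _ hr

theorem Reach.trans {inc : E → Sym2 V} {F : Set E} {u v w : V}
    (h1 : Reach inc F u v) (h2 : Reach inc F v w) : Reach inc F u w :=
  Relation.ReflTransGen.trans h1 h2

theorem Reach.refl {inc : E → Sym2 V} {F : Set E} {u : V} : Reach inc F u u :=
  Relation.ReflTransGen.refl

theorem Reach.symm {inc : E → Sym2 V} {F : Set E} {u v : V}
    (h1 : Reach inc F u v) : Reach inc F v u := by
  induction h1 with
  | refl => exact Reach.refl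
  | tail _ h ih =>
    obtain ⟨e, he, h⟩ := h
    exact Relation.ReflTransGen.head ⟨e, he, by rw [h, Sym2.eq_swap]⟩ ih

theorem Reach.single {inc : E → Sym2 V} {F : Set E} {u v : V} {e : E} (he : e ∈ F)
    (h : inc e = s(u, v)) : Reach inc F u v :=
  Relation.ReflTransGen.single ⟨e, he, h⟩

theorem Reach.congr {inc inc' : E → Sym2 V} {F : Set E} {u v : V}
    (hF : ∀ e ∈ F, inc e = inc' e) (h : Reach inc F u v) : Reach inc' F u v :=
  Relation.ReflTransGen.mono (fun _ _ ⟨e, he, h'⟩ => ⟨e, he, by rw [← hF e he, h']⟩) _ _ h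

theorem reach_iff_dreach {inc : E → Sym2 V} {F : Set E} {u v : V} :
    Reach inc F u v ↔ DReach inc {d | d.1 ∈ F} u v := Iff.rfl

theorem IsW.reach {inc : E → Sym2 V} {F : Set E} {u w : V} {l : List (E × V)}
    (h : IsW inc u l w) (hF : ∀ d ∈ l, d.1 ∈ F) : Reach inc F u w := by
  induction l generalizing u with
  | nil => cases h; exact Reach.refl
  | cons d l ih =>
    exact (Reach.single (hF d (by simp)) h.1).trans (ih h.2 fun d hd => hF d (by simp [hd]))

theorem IsW.split {inc : E → Sym2 V} {u w x : V} {l : List (E × V)}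
    (h : IsW inc u l w) (hx : x ∈ u :: l.map Prod.snd) :
    ∃ l₁ l₂, l = l₁ ++ l₂ ∧ IsW inc u l₁ x ∧ IsW inc x l₂ w := by
  induction l generalizing u with
  | nil =>
    simp at hx; subst hx
    exact ⟨[], [], rfl, rfl, h⟩
  | cons d l ih =>
    rcases List.mem_cons.1 hx with hx | hx
    · subst hx
      exact ⟨[], d :: l, rfl, rfl, h⟩
    · obtain ⟨l₁, l₂, e1, h1, h2⟩ := ih h.2 (by simpa using hx)
      exact ⟨d :: l₁, l₂, by simp [e1], ⟨h.1, h1⟩, h2⟩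

theorem DReach.simple {inc : E → Sym2 V} {D : Set (E × V)} {u w : V} (h : DReach inc D u w) :
    ∃ l, IsW inc u l w ∧ (∀ d ∈ l, d ∈ D) ∧ (u :: l.map Prod.snd).Nodup := by
  induction h using Relation.ReflTransGen.head_induction_on with
  | refl => exact ⟨[], rfl, by simp, by simp⟩
  | head h h' ih =>
    rename_i a c
    obtain ⟨e, he, hinc⟩ := h
    obtain ⟨l, h1, h2, h3⟩ := ih
    by_cases ha : a ∈ c :: l.map Prod.snd
    · obtain ⟨l₁, l₂, rfl, h4, h5⟩ := h1.split ha
      refine ⟨l₂, h5, fun d hd => h2 d (by simp [hd]), ?_⟩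
      rcases List.eq_nil_or_concat l₁ with rfl | ⟨l', b, rfl⟩
      · cases h4; simpa using h3
      · obtain ⟨v, -, h6⟩ := isW_append.1 (by simpa using h4)
        have : b.2 = a := h6.2
        subst this
        simp only [List.map_append, List.map_cons, List.map_nil, List.append_assoc, List.concat_eq_append] at h3
        exact (List.nodup_append.1 (List.nodup_cons.1 h3).2).2.1
    · exact ⟨(e, c) :: l, ⟨hinc, h1⟩, by
        intro d hd
        rcases List.mem_cons.1 hd with rfl | hd
        · exact he
        · exact h2 d hd, List.nodup_cons.2 ⟨ha, h3⟩⟩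

theorem Reach.simple {inc : E → Sym2 V} {F : Set E} {u w : V} (h : Reach inc F u w) :
    ∃ l, IsW inc u l w ∧ (∀ d ∈ l, d.1 ∈ F) ∧ (u :: l.map Prod.snd).Nodup :=
  DReach.simple (reach_iff_dreach.1 h)

theorem IsW.ends_mem {inc : E → Sym2 V} {u w x : V} {l : List (E × V)}
    (h : IsW inc u l w) {d : E × V} (hd : d ∈ l) (hx : x ∈ inc d.1) :
    x ∈ u :: l.map Prod.snd := by
  induction l generalizing u with
  | nil => simp at hd
  | cons d' l ih =>
    rcases List.mem_cons.1 hd with rfl | hd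
    · rw [h.1] at hx
      simp at hx ⊢; tauto
    · have := ih h.2 hd
      simp at this ⊢; tauto

theorem IsW.edges_nodup {inc : E → Sym2 V} {u w : V} {l : List (E × V)}
    (h : IsW inc u l w) (hn : (u :: l.map Prod.snd).Nodup) : (l.map Prod.fst).Nodup := by
  induction l generalizing u with
  | nil => simp
  | cons d l ih =>
    rw [List.map_cons, List.nodup_cons]
    refine ⟨?_, ih h.2 (List.nodup_cons.1 hn).2⟩
    intro hm
    obtain ⟨d', hd', he⟩ := List.mem_map.1 hm
    have := h.2.ends_mem hd' (x := u) (by rw [he, h.1]; simp)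
    exact (List.nodup_cons.1 hn).1 (by simpa using this)

theorem IsW.tail_not_start {inc : E → Sym2 V} {u w : V} {d : E × V} {l : List (E × V)}
    (h : IsW inc u (d :: l) w) (hn : ∀ d' ∈ d :: l, d'.2 ≠ u) :
    ∀ d' ∈ l, u ∉ inc d'.1 := by
  intro d' hd' hu
  have := h.2.ends_mem hd' hu
  rcases List.mem_cons.1 this with h' | h'
  · exact hn d (by simp) h'.symm
  · obtain ⟨d'', h1, h2⟩ := List.mem_map.1 h'
    exact hn d'' (by simp [h1]) h2

/-- Edges leaving `X`. -/
def cutI (inc : E → Sym2 V) (X : Set V) : Set E :=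
  {e | ∃ x y, inc e = s(x, y) ∧ x ∈ X ∧ y ∉ X}

theorem mem_cutI {inc : E → Sym2 V} {X : Set V} {e : E} {a b : V} (h : inc e = s(a, b)) :
    e ∈ cutI inc X ↔ ¬ (a ∈ X ↔ b ∈ X) := by
  constructor
  · rintro ⟨x, y, h1, hx, hy⟩
    rw [h, Sym2.eq_iff] at h1
    rcases h1 with ⟨rfl, rfl⟩ | ⟨rfl, rfl⟩ <;> tauto
  · intro h'
    by_cases ha : a ∈ X
    · exact ⟨a, b, h, ha, by tauto⟩
    · exact ⟨b, a, by rw [h, Sym2.eq_swap], by tauto, ha⟩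

open Classical in
theorem IsW.parity {inc : E → Sym2 V} {u w : V} {l : List (E × V)}
    (h : IsW inc u l w) (Y : Set V) :
    Even ((l.map Prod.fst).countP (fun e => decide (e ∈ cutI inc Y))) ↔ (u ∈ Y ↔ w ∈ Y) := by
  induction l generalizing u with
  | nil => cases h; simp
  | cons d l ih =>
    rw [List.map_cons, List.countP_cons]
    have h1 := ih h.2
    have h2 := mem_cutI (X := Y) h.1
    by_cases hc : d.1 ∈ cutI inc Y
    · simp only [hc, decide_true, if_true, Nat.even_add_one, h1]; tauto
    · simp only [hc, decide_false, Bool.false_eq_true, if_false, add_zero, h1]; tauto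

theorem IsW.parity' {inc : E → Sym2 V} {u w : V} {l : List (E × V)}
    (h : IsW inc u l w) (hn : (l.map Prod.fst).Nodup) (Y : Set V) :
    Even ({e | e ∈ l.map Prod.fst} ∩ cutI inc Y).ncard ↔ (u ∈ Y ↔ w ∈ Y) := by
  classical
  rw [← h.parity Y]
  have : ({e | e ∈ l.map Prod.fst} ∩ cutI inc Y)
      = (((l.map Prod.fst).filter (fun e => decide (e ∈ cutI inc Y))).toFinset : Set E) := by
    ext e; simp
  rw [this, Set.ncard_coe_finset, List.toFinset_card_of_nodup (hn.filter _),
    List.countP_eq_length_filter]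

/-- first exit -/
theorem Reach.exit {inc : E → Sym2 V} {F : Set E} {X : Set V} {u w : V}
    (h : Reach inc F u w) (hu : u ∈ X) (hw : w ∉ X) :
    ∃ e ∈ F, ∃ x y, inc e = s(x, y) ∧ x ∈ X ∧ y ∉ X ∧
      Reach inc (F ∩ {e | ∀ v ∈ inc e, v ∈ X}) u x := by
  induction h using Relation.ReflTransGen.head_induction_on with
  | refl => exact absurd hu hw
  | head h h' ih =>
    rename_i a c
    obtain ⟨e, he, hinc⟩ := h
    by_cases hc : c ∈ X
    · obtain ⟨e', he', x, y, h1, h2, h3, h4⟩ := ih hc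
      refine ⟨e', he', x, y, h1, h2, h3, ?_⟩
      refine Reach.trans (Reach.single (e := e) ⟨he, ?_⟩ hinc) h4
      intro v hv
      rw [hinc] at hv
      rcases Sym2.mem_iff.1 hv with rfl | rfl <;> assumption
    · exact ⟨e, he, a, c, hinc, hu, hc, Reach.refl⟩

theorem Reach.avoid {inc : E → Sym2 V} {F : Set E} {u w a b : V} {e : E}
    (hinc : inc e = s(a, b)) (h : Reach inc F u w) :
    Reach inc (F \ {e}) u w ∨ Reach inc (F \ {e}) u a ∨ Reach inc (F \ {e}) u b := by
  induction h using Relation.ReflTransGen.head_induction_on with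
  | refl => exact Or.inl Reach.refl
  | head h h' ih =>
    rename_i x y
    obtain ⟨e', he', hxy⟩ := h
    by_cases hee : e' = e
    · subst hee
      rw [hinc, Sym2.eq_iff] at hxy
      rcases hxy with ⟨rfl, rfl⟩ | ⟨rfl, rfl⟩
      · exact Or.inr (Or.inl Reach.refl)
      · exact Or.inr (Or.inr Reach.refl)
    · have hs : Reach inc (F \ {e}) x y := Reach.single (e := e') ⟨he', hee⟩ hxy
      rcases ih with h | h | h
      · exact Or.inl (hs.trans h)
      · exact Or.inr (Or.inl (hs.trans h))
      · exact Or.inr (Or.inr (hs.trans h))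

/-- A path set from `t` to `s` beginning with `c`. -/
theorem Reach.pathList {inc : E → Sym2 V} {F : Set E} {t s : V} {c : E}
    (h : Reach inc F t s) (hts : s ≠ t) (hF : ∀ e ∈ F, t ∈ inc e → e = c) :
    ∃ (v : V) (l : List (E × V)), IsW inc t ((c, v) :: l) s ∧ (∀ d ∈ (c, v) :: l, d.1 ∈ F) ∧
      (t :: ((c, v) :: l).map Prod.snd).Nodup := by
  obtain ⟨l, h1, h2, h3⟩ := h.simple
  cases l with
  | nil => exact absurd h1.symm hts
  | cons d l =>
    obtain ⟨c', v⟩ := d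
    have : c' = c := hF c' (h2 (c', v) (by simp)) (by rw [h1.1]; simp)
    subst this
    exact ⟨v, l, h1, h2, h3⟩

/-- Edges at `t` in `S`. -/
def del (inc : E → Sym2 V) (S : Set E) (t : V) : Set E := {e | e ∈ S ∧ t ∈ inc e}

structure Fam (inc : E → Sym2 V) (S : Set E) (T : Set V) (t : V) (C : Set E)
    (F : E → Set E) : Prop where
  sub : ∀ c ∈ C, F c ⊆ S
  mem : ∀ c ∈ C, c ∈ F c
  inc_t : ∀ c ∈ C, t ∈ inc c
  at_t : ∀ c ∈ C, ∀ e ∈ F c, t ∈ inc e → e = c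
  reach : ∀ c ∈ C, ∃ s ∈ T, s ≠ t ∧ Reach inc (F c) t s
  disj : ∀ c ∈ C, ∀ c' ∈ C, ∀ e, e ∈ F c → e ∈ F c' → c = c'

def Linkable (inc : E → Sym2 V) (S : Set E) (T : Set V) (t : V) : Prop :=
  ∃ F, Fam inc S T t (del inc S t) F

structure Tight (inc : E → Sym2 V) (S : Set E) (T : Set V) (t : V) (X : Set V)
    (I O : E → Set E) : Prop where
  tmem : t ∈ X
  tdisj : ∀ s ∈ T, s ≠ t → s ∉ X
  inI : ∀ h ∈ S, h ∈ cutI inc X → ∀ e ∈ I h, e ∈ S ∧ ∀ v ∈ inc e, v ∈ X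
  outO : ∀ h ∈ S, h ∈ cutI inc X → ∀ e ∈ O h, e ∈ S ∧ ∀ v ∈ inc e, v ∉ X
  reachI : ∀ h ∈ S, ∀ x y, inc h = s(x, y) → x ∈ X → y ∉ X → Reach inc (I h) t x
  reachO : ∀ h ∈ S, ∀ x y, inc h = s(x, y) → x ∈ X → y ∉ X →
    ∃ s ∈ T, s ≠ t ∧ Reach inc (O h) y s
  disjI : ∀ h ∈ S, h ∈ cutI inc X → ∀ h' ∈ S, h' ∈ cutI inc X →
    ∀ e, e ∈ I h → e ∈ I h' → h = h'
  disjO : ∀ h ∈ S, h ∈ cutI inc X → ∀ h' ∈ S, h' ∈ cutI inc X →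
    ∀ e, e ∈ O h → e ∈ O h' → h = h'
end LC

namespace LC

variable {V : Type u} {E : Type v}

structure AugSt (inc : E → Sym2 V) (S : Set E) (T : Set V) (t : V) (L : Set E)
    (p : E → List (E × V)) (c0 : E) (v : V) : Prop where
  c0mem : c0 ∈ L
  inc_t : ∀ c ∈ L, t ∈ inc c
  hd : ∀ c ∈ L, ∃ x l, p c = (c, x) :: l
  w0 : IsW inc t (p c0) v
  w : ∀ c ∈ L, c ≠ c0 → ∃ s ∈ T, s ≠ t ∧ IsW inc t (p c) s
  sub : ∀ c ∈ L, ∀ d ∈ p c, d.1 ∈ S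
  nt : ∀ c ∈ L, ∀ d ∈ p c, d.2 ≠ t
  nod : ∀ c ∈ L, ((p c).map Prod.fst).Nodup
  disj : ∀ c ∈ L, ∀ c' ∈ L, ∀ d ∈ p c, ∀ d' ∈ p c', d.1 = d'.1 → c = c'

theorem aug {inc : E → Sym2 V} {S : Set E} {T : Set V} {t s : V} {L : Set E}
    (hs : s ∈ T) (hst : s ≠ t) (r : List (E × V)) :
    ∀ (p : E → List (E × V)) (c0 : E) (v : V), AugSt inc S T t L p c0 v → IsW inc v r s →
      (∀ d ∈ r, d.1 ∈ S ∧ d.2 ≠ t) → r.Nodup → (∀ d ∈ r, ∀ c ∈ L, d ∉ p c) →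
      ∃ F, Fam inc S T t L F := by
  classical
  induction r with
  | nil =>
    intro p c0 v hA hr _ _ _
    have hvs : v = s := hr
    subst hvs
    have hw : ∀ c ∈ L, ∃ s ∈ T, s ≠ t ∧ IsW inc t (p c) s := by
      intro c hc
      by_cases h : c = c0
      · subst h; exact ⟨v, hs, hst, hA.w0⟩
      · exact hA.w c hc h
    refine ⟨fun c => {e | ∃ d ∈ p c, d.1 = e}, ?_, ?_, hA.inc_t, ?_, ?_, ?_⟩
    · rintro c hc e ⟨d, hd, rfl⟩
      exact hA.sub c hc d hd
    · intro c hc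
      obtain ⟨x, l, h⟩ := hA.hd c hc
      exact ⟨(c, x), by simp [h], rfl⟩
    · rintro c hc e ⟨d, hd, rfl⟩ he
      obtain ⟨x, l, h⟩ := hA.hd c hc
      obtain ⟨s', _, _, hW⟩ := hw c hc
      have hnt := hA.nt c hc
      rw [h] at hd hW hnt
      rcases List.mem_cons.1 hd with rfl | hd
      · rfl
      · exact absurd he (hW.tail_not_start hnt d hd)
    · intro c hc
      obtain ⟨s', h1, h2, hW⟩ := hw c hc
      exact ⟨s', h1, h2, hW.reach fun d hd => ⟨d, hd, rfl⟩⟩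
    · rintro c hc c' hc' e ⟨d, hd, rfl⟩ ⟨d', hd', h⟩
      exact hA.disj c hc c' hc' d hd d' hd' h.symm
  | cons d r ih =>
    obtain ⟨e, x⟩ := d
    intro p c0 v hA hr hS hn hU
    have hinc : inc e = s(v, x) := hr.1
    have hr' : IsW inc x r s := hr.2
    have heS : e ∈ S := (hS (e, x) (by simp)).1
    have hxt : x ≠ t := (hS (e, x) (by simp)).2
    have hS' : ∀ d ∈ r, d.1 ∈ S ∧ d.2 ≠ t := fun d hd => hS d (by simp [hd])
    have hn' := (List.nodup_cons.1 hn).2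
    have hnx := (List.nodup_cons.1 hn).1
    have hU' : ∀ d ∈ r, ∀ c ∈ L, d ∉ p c := fun d hd => hU d (by simp [hd])
    by_cases hex : ∃ c ∈ L, ∃ y, (e, y) ∈ p c
    · obtain ⟨c, hc, y, hy⟩ := hex
      obtain ⟨p1, p2, hp⟩ := List.append_of_mem hy
      have hW : ∃ s', IsW inc t (p c) s' := by
        by_cases h : c = c0
        · subst h; exact ⟨v, hA.w0⟩
        · obtain ⟨s', -, -, h⟩ := hA.w c hc h; exact ⟨s', h⟩
      have key : ∀ s', IsW inc t (p c) s' → y = v ∧ IsW inc t p1 x ∧ IsW inc v p2 s' := by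
        intro s' hW
        rw [hp] at hW
        obtain ⟨a, h1, h2⟩ := isW_append.1 hW
        have h3 : inc e = s(a, y) := h2.1
        rw [hinc, Sym2.eq_iff] at h3
        rcases h3 with ⟨rfl, rfl⟩ | ⟨rfl, rfl⟩
        · exact absurd hy (hU (e, x) (by simp) c hc)
        · exact ⟨rfl, h1, h2.2⟩
      have hyv : y = v := by
        obtain ⟨s', h⟩ := hW; exact (key s' h).1
      subst hyv
      have hp1 : IsW inc t p1 x := by
        obtain ⟨s', h⟩ := hW; exact (key s' h).2.1
      have hp1hd : ∃ z l, p1 = (c, z) :: l := by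
        obtain ⟨z, l, h⟩ := hA.hd c hc
        cases p1 with
        | nil => exact absurd hp1.symm hxt
        | cons d l' =>
          rw [h] at hp
          simp at hp
          exact ⟨z, l', by rw [hp.1]⟩
      have hnodc := hA.nod c hc
      rw [hp] at hnodc
      have hnodp1 : (p1.map Prod.fst).Nodup := by
        rw [List.map_append] at hnodc
        exact (List.nodup_append.1 hnodc).1
      have hnodp2 : (p2.map Prod.fst).Nodup := by
        rw [List.map_append, List.map_cons] at hnodc
        exact (List.nodup_cons.1 (List.nodup_append.1 hnodc).2.1).2
      have hp12 : ∀ d ∈ p1, ∀ d' ∈ p2, d.1 ≠ d'.1 := by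
        intro d hd d' hd'
        rw [List.map_append, List.map_cons] at hnodc
        exact (List.nodup_append.1 hnodc).2.2 d.1 (List.mem_map_of_mem hd) d'.1
          (List.mem_cons_of_mem _ (List.mem_map_of_mem hd'))
      have sub1 : ∀ d ∈ p1, d ∈ p c := by intro d hd; rw [hp]; simp [hd]
      have sub2 : ∀ d ∈ p2, d ∈ p c := by intro d hd; rw [hp]; simp [hd]
      by_cases hcc : c = c0
      · subst hcc
        have hsub : ∀ c', ∀ d ∈ Function.update p c p1 c', d ∈ p c' := by
          intro c' d hd
          by_cases h : c' = c
          · subst h; rw [Function.update_self] at hd; exact sub1 d hd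
          · rwa [Function.update_of_ne h] at hd
        refine ih (Function.update p c p1) c x ⟨hc, hA.inc_t, ?_, ?_, ?_, ?_, ?_, ?_, ?_⟩ hr' hS' hn'
          (fun d hd c' hc' h => hU' d hd c' hc' (hsub c' d h))
        · intro c' hc'
          by_cases h : c' = c
          · subst h; rw [Function.update_self]; exact hp1hd
          · rw [Function.update_of_ne h]; exact hA.hd c' hc'
        · rw [Function.update_self]; exact hp1
        · intro c' hc' h
          rw [Function.update_of_ne h]; exact hA.w c' hc' h
        · exact fun c' hc' d hd => hA.sub c' hc' d (hsub c' d hd)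
        · exact fun c' hc' d hd => hA.nt c' hc' d (hsub c' d hd)
        · intro c' hc'
          by_cases h : c' = c
          · subst h; rw [Function.update_self]; exact hnodp1
          · rw [Function.update_of_ne h]; exact hA.nod c' hc'
        · exact fun c' hc' c'' hc'' d hd d' hd' h =>
            hA.disj c' hc' c'' hc'' d (hsub c' d hd) d' (hsub c'' d' hd') h
      · obtain ⟨s', hs'T, hs't, hWc⟩ := hA.w c hc hcc
        have hp2 := (key s' hWc).2.2
        set q : E → List (E × V) :=
          Function.update (Function.update p c p1) c0 (p c0 ++ p2) with hq
        have hcc' : c0 ≠ c := fun h => hcc h.symm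
        have q0 : q c0 = p c0 ++ p2 := by simp [hq]
        have qc : q c = p1 := by simp [hq, hcc]
        have qo : ∀ c', c' ≠ c → c' ≠ c0 → q c' = p c' := by
          intro c' h1 h2; simp [hq, h1, h2]
        have hmem : ∀ c' d, d ∈ q c' → d ∈ p c' ∨ (c' = c0 ∧ d ∈ p2) := by
          intro c' d hd
          by_cases h1 : c' = c0
          · subst h1; rw [q0] at hd; simpa using hd
          · by_cases h2 : c' = c
            · subst h2; rw [qc] at hd; exact Or.inl (sub1 d hd)
            · rw [qo c' h2 h1] at hd; exact Or.inl hd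
        have hmem' : ∀ c' ∈ L, ∀ d ∈ q c', ∃ c'' ∈ L, d ∈ p c'' := by
          intro c' hc' d hd
          rcases hmem c' d hd with h | ⟨-, h⟩
          · exact ⟨c', hc', h⟩
          · exact ⟨c, hc, sub2 d h⟩
        have hdis2 : ∀ c' ∈ L, ∀ d ∈ q c', ∀ d' ∈ p2, d.1 = d'.1 → c' = c0 := by
          intro c' hc' d hd d' hd' h
          by_contra hne
          rcases hmem c' d hd with h' | ⟨h', -⟩
          · have := hA.disj c' hc' c hc d h' d' (sub2 d' hd') h
            subst this
            rw [qc] at hd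
            exact hp12 d hd d' hd' h
          · exact hne h'
        refine ih q c x ⟨hc, hA.inc_t, ?_, ?_, ?_, ?_, ?_, ?_, ?_⟩ hr' hS' hn' ?_
        · intro c' hc'
          by_cases h1 : c' = c0
          · subst h1
            obtain ⟨z, l, h⟩ := hA.hd c' hc'
            exact ⟨z, l ++ p2, by rw [q0, h]; rfl⟩
          · by_cases h2 : c' = c
            · subst h2; rw [qc]; exact hp1hd
            · rw [qo c' h2 h1]; exact hA.hd c' hc'
        · rw [qc]; exact hp1
        · intro c' hc' h2
          by_cases h1 : c' = c0
          · subst h1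
            exact ⟨s', hs'T, hs't, by rw [q0]; exact isW_append.2 ⟨_, hA.w0, hp2⟩⟩
          · rw [qo c' h2 h1]; exact hA.w c' hc' h1
        · intro c' hc' d hd
          obtain ⟨c'', h1, h2⟩ := hmem' c' hc' d hd
          exact hA.sub c'' h1 d h2
        · intro c' hc' d hd
          obtain ⟨c'', h1, h2⟩ := hmem' c' hc' d hd
          exact hA.nt c'' h1 d h2
        · intro c' hc'
          by_cases h1 : c' = c0
          · subst h1
            rw [q0, List.map_append, List.nodup_append]
            refine ⟨hA.nod c' hc', hnodp2, ?_⟩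
            intro a ha b hb hab
            obtain ⟨d, hd, rfl⟩ := List.mem_map.1 ha
            obtain ⟨d', hd', rfl⟩ := List.mem_map.1 hb
            exact hcc' (hA.disj c' hc' c hc d hd d' (sub2 d' hd') hab)
          · by_cases h2 : c' = c
            · subst h2; rw [qc]; exact hnodp1
            · rw [qo c' h2 h1]; exact hA.nod c' hc'
        · intro c' hc' c'' hc'' d hd d' hd' h
          rcases hmem c' d hd with h1 | ⟨h1, h1'⟩
          · rcases hmem c'' d' hd' with h2 | ⟨h2, h2'⟩
            · exact hA.disj c' hc' c'' hc'' d h1 d' h2 h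
            · rw [h2]; exact hdis2 c' hc' d hd d' h2' h
          · rw [h1]; exact (hdis2 c'' hc'' d' hd' d h1' h.symm).symm
        · intro d hd c' hc' h
          obtain ⟨c'', h1, h2⟩ := hmem' c' hc' d h
          exact hU' d hd c'' h1 h2
    · push Not at hex
      set q : E → List (E × V) := Function.update p c0 (p c0 ++ [(e, x)]) with hq
      have q0 : q c0 = p c0 ++ [(e, x)] := by simp [hq]
      have qo : ∀ c', c' ≠ c0 → q c' = p c' := by
        intro c' h2; simp [hq, h2]
      have hmem : ∀ c' d, d ∈ q c' → d ∈ p c' ∨ (c' = c0 ∧ d = (e, x)) := by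
        intro c' d hd
        by_cases h1 : c' = c0
        · subst h1; rw [q0] at hd; simpa using hd
        · rw [qo c' h1] at hd; exact Or.inl hd
      have hex' : ∀ c ∈ L, ∀ d ∈ p c, d.1 ≠ e := by
        rintro c hc ⟨e', y⟩ hd rfl
        exact hex c hc y hd
      refine ih q c0 x ⟨hA.c0mem, hA.inc_t, ?_, ?_, ?_, ?_, ?_, ?_, ?_⟩ hr' hS' hn' ?_
      · intro c' hc'
        by_cases h1 : c' = c0
        · subst h1
          obtain ⟨z, l, h⟩ := hA.hd c' hc'
          exact ⟨z, l ++ [(e, x)], by rw [q0, h]; rfl⟩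
        · rw [qo c' h1]; exact hA.hd c' hc'
      · rw [q0]; exact isW_append.2 ⟨v, hA.w0, hinc, rfl⟩
      · intro c' hc' h1
        rw [qo c' h1]; exact hA.w c' hc' h1
      · intro c' hc' d hd
        rcases hmem c' d hd with h | ⟨-, rfl⟩
        · exact hA.sub c' hc' d h
        · exact heS
      · intro c' hc' d hd
        rcases hmem c' d hd with h | ⟨-, rfl⟩
        · exact hA.nt c' hc' d h
        · exact hxt
      · intro c' hc'
        by_cases h1 : c' = c0
        · subst h1
          rw [q0, List.map_append, List.nodup_append]
          refine ⟨hA.nod c' hc', by simp, ?_⟩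
          intro a ha b hb hab
          obtain ⟨d, hd, rfl⟩ := List.mem_map.1 ha
          simp at hb
          exact hex' c' hc' d hd (hab.trans hb)
        · rw [qo c' h1]; exact hA.nod c' hc'
      · intro c' hc' c'' hc'' d hd d' hd' h
        rcases hmem c' d hd with h1 | ⟨h1, rfl⟩
        · rcases hmem c'' d' hd' with h2 | ⟨h2, rfl⟩
          · exact hA.disj c' hc' c'' hc'' d h1 d' h2 h
          · exact absurd h (hex' c' hc' d h1)
        · rcases hmem c'' d' hd' with h2 | ⟨h2, rfl⟩
          · exact absurd h.symm (hex' c'' hc'' d' h2)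
          · rw [h1, h2]
      · intro d hd c' hc' h
        rcases hmem c' d h with h | ⟨-, rfl⟩
        · exact hU' d hd c' hc' h
        · exact hnx hd
end LC

namespace LC

variable {V : Type u} {E : Type v}

theorem stay {inc : E → Sym2 V} {X : Set V} {U : Set (E × V)}
    (hU : ∀ d ∈ U, ∀ x, inc d.1 = s(x, d.2) → x ∉ X → d.2 ∉ X) (l : List (E × V)) :
    ∀ {u w : V}, IsW inc u l w → (∀ d ∈ l, d ∈ U) → u ∉ X →
      (∀ d ∈ l, ∀ x ∈ inc d.1, x ∉ X) ∧ w ∉ X := by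
  induction l with
  | nil => intro u w h _ hu; cases h; exact ⟨by simp, hu⟩
  | cons d l ih =>
    intro u w h hl hu
    have h1 := hU d (hl d (by simp)) u h.1 hu
    have h2 := ih h.2 (fun d hd => hl d (by simp [hd])) h1
    refine ⟨?_, h2.2⟩
    intro d' hd' x hx
    rcases List.mem_cons.1 hd' with rfl | hd'
    · rw [h.1] at hx
      rcases Sym2.mem_iff.1 hx with rfl | rfl <;> assumption
    · exact h2.1 d' hd' x hx

theorem stay' {inc : E → Sym2 V} {X : Set V} {U : Set (E × V)}
    (hU : ∀ d ∈ U, ∀ x, inc d.1 = s(x, d.2) → x ∉ X → d.2 ∉ X) (l : List (E × V)) :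
    ∀ {u w : V}, IsW inc u l w → (∀ d ∈ l, d ∈ U) → w ∈ X →
      (∀ d ∈ l, ∀ x ∈ inc d.1, x ∈ X) := by
  induction l with
  | nil => intro u w _ _ _; simp
  | cons d l ih =>
    intro u w h hl hw d' hd' x hx
    rcases List.mem_cons.1 hd' with rfl | hd'
    · have hu : u ∈ X := by
        by_contra hu
        exact (stay hU _ h hl hu).2 hw
      have hv : d'.2 ∈ X := by
        by_contra hu
        exact (stay hU _ h.2 (fun d hd => hl d (by simp [hd])) hu).2 hw
      rw [h.1] at hx
      rcases Sym2.mem_iff.1 hx with rfl | rfl <;> assumption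
    · exact ih h.2 (fun d hd => hl d (by simp [hd])) hw d' hd' x hx

theorem maxflow {inc : E → Sym2 V} (hl : ∀ e, ¬ (inc e).IsDiag) {S : Set E} {T : Set V} {t : V}
    {C : Set E} {F : E → Set E} (hF : Fam inc S T t C F) :
    (∃ g ∈ del inc S t, g ∉ C ∧ ∃ F', Fam inc S T t (insert g C) F') ∨
    ∃ X I O, Tight inc S T t X I O ∧
      ∀ h ∈ S, h ∈ cutI inc X → ∀ e ∈ I h, ∃ c ∈ C, e ∈ F c := by
  classical
  have hex : ∀ c, ∃ (v : V) (l : List (E × V)) (s : V), c ∈ C → s ∈ T ∧ s ≠ t ∧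
      IsW inc t ((c, v) :: l) s ∧ (∀ d ∈ (c, v) :: l, d.1 ∈ F c) ∧
      (t :: ((c, v) :: l).map Prod.snd).Nodup := by
    intro c
    by_cases hc : c ∈ C
    · obtain ⟨s, h1, h2, h3⟩ := hF.reach c hc
      obtain ⟨v, l, h4⟩ := h3.pathList h2 (hF.at_t c hc)
      exact ⟨v, l, s, fun _ => ⟨h1, h2, h4⟩⟩
    · exact ⟨t, [], t, fun h => absurd h hc⟩
  choose x l e hp using hex
  set p : E → List (E × V) := fun c => (c, x c) :: l c with hpdef
  have hpT : ∀ c ∈ C, e c ∈ T := fun c hc => (hp c hc).1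
  have hpt : ∀ c ∈ C, e c ≠ t := fun c hc => (hp c hc).2.1
  have hpW : ∀ c ∈ C, IsW inc t (p c) (e c) := fun c hc => (hp c hc).2.2.1
  have hpF : ∀ c ∈ C, ∀ d ∈ p c, d.1 ∈ F c := fun c hc => (hp c hc).2.2.2.1
  have hpN : ∀ c ∈ C, (t :: (p c).map Prod.snd).Nodup := fun c hc => (hp c hc).2.2.2.2
  have hpE : ∀ c ∈ C, ((p c).map Prod.fst).Nodup := fun c hc => (hpW c hc).edges_nodup (hpN c hc)
  have hpnt : ∀ c ∈ C, ∀ d ∈ p c, d.2 ≠ t := by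
    intro c hc d hd h
    exact (List.nodup_cons.1 (hpN c hc)).1 (List.mem_map.2 ⟨d, hd, h⟩)
  have hpd : ∀ c ∈ C, ∀ c' ∈ C, ∀ d ∈ p c, ∀ d' ∈ p c', d.1 = d'.1 → c = c' := by
    intro c hc c' hc' d hd d' hd' h
    exact hF.disj c hc c' hc' d.1 (hpF c hc d hd) (h ▸ hpF c' hc' d' hd')
  have hpS : ∀ c ∈ C, ∀ d ∈ p c, d.1 ∈ S := fun c hc d hd => hF.sub c hc (hpF c hc d hd)
  set U : Set (E × V) := {d | ∃ c ∈ C, d ∈ p c} with hU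
  set D : Set (E × V) := {d | d.1 ∈ S ∧ d.2 ≠ t ∧ d ∉ U} with hD
  set X : Set V := {v | DReach inc D t v} with hX
  have htX : t ∈ X := Relation.ReflTransGen.refl
  by_cases hs : ∃ s ∈ T, s ≠ t ∧ s ∈ X
  · left
    obtain ⟨s, hsT, hst, hsX⟩ := hs
    obtain ⟨r, hr, hrD, hrN⟩ := DReach.simple hsX
    cases r with
    | nil => exact absurd hr.symm hst
    | cons d r =>
      obtain ⟨g, y⟩ := d
      have hginc : inc g = s(t, y) := hr.1
      have hgD := hrD (g, y) (by simp)
      have hgS : g ∈ S := hgD.1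
      have hyt : y ≠ t := hgD.2.1
      have hgt : t ∈ inc g := by rw [hginc]; simp
      have hgC : g ∉ C := by
        intro hg
        have h1 : inc g = s(t, x g) := (hpW g hg).1
        rw [hginc, Sym2.congr_right] at h1
        exact hgD.2.2 ⟨g, hg, by simp [hpdef, h1]⟩
      have hgu : ∀ c ∈ C, ∀ d ∈ p c, d.1 ≠ g := by
        intro c hc d hd h
        have := hF.at_t c hc g (h ▸ hpF c hc d hd) hgt
        exact hgC (this ▸ hc)
      refine ⟨g, ⟨hgS, hgt⟩, hgC, ?_⟩
      set q : E → List (E × V) := Function.update p g [(g, y)] with hq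
      have qg : q g = [(g, y)] := by simp [hq]
      have qo : ∀ c ∈ C, q c = p c := by
        intro c hc
        have : c ≠ g := fun h => hgC (h ▸ hc)
        simp [hq, this]
      have hrNd : ((g, y) :: r).Nodup := List.Nodup.of_map _ (List.nodup_cons.1 hrN).2
      refine aug hsT hst r q g y ⟨by simp, ?_, ?_, ?_, ?_, ?_, ?_, ?_, ?_⟩ hr.2 ?_
        (List.nodup_cons.1 hrNd).2 ?_
      · rintro c (rfl | hc)
        · exact hgt
        · exact hF.inc_t c hc
      · rintro c (rfl | hc)
        · exact ⟨y, [], qg⟩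
        · exact ⟨x c, l c, qo c hc⟩
      · rw [qg]; exact ⟨hginc, rfl⟩
      · rintro c (rfl | hc) h
        · exact absurd rfl h
        · rw [qo c hc]; exact ⟨e c, hpT c hc, hpt c hc, hpW c hc⟩
      · rintro c (rfl | hc)
        · rw [qg]; simpa using hgS
        · rw [qo c hc]; exact hpS c hc
      · rintro c (rfl | hc)
        · rw [qg]; simpa using hyt
        · rw [qo c hc]; exact hpnt c hc
      · rintro c (rfl | hc)
        · rw [qg]; simp
        · rw [qo c hc]; exact hpE c hc
      · rintro c (rfl | hc) c' (rfl | hc')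
        · intros; rfl
        · rw [qg, qo c' hc']
          intro d hd d' hd' h
          simp at hd; subst hd
          exact absurd h.symm (hgu c' hc' d' hd')
        · rw [qg, qo c hc]
          intro d hd d' hd' h
          simp at hd'; subst hd'
          exact absurd h (hgu c hc d hd)
        · rw [qo c hc, qo c' hc']; exact hpd c hc c' hc'
      · intro d hd
        have := hrD d (by simp [hd])
        exact ⟨this.1, this.2.1⟩
      · rintro d hd c (rfl | hc) h
        · rw [qg] at h; simp at h; subst h
          exact (List.nodup_cons.1 hrNd).1 hd
        · rw [qo c hc] at h
          exact (hrD d (by simp [hd])).2.2 ⟨c, hc, h⟩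
  · right
    push Not at hs
    have hstep : ∀ d ∈ U, ∀ a, inc d.1 = s(a, d.2) → a ∉ X → d.2 ∉ X := by
      rintro ⟨ε, b⟩ ⟨c, hc, hd⟩ a hinc ha hb
      apply ha
      refine Relation.ReflTransGen.tail hb ⟨ε, ⟨show ε ∈ S from hpS c hc (ε, b) hd, fun h => ha ?_, ?_⟩, ?_⟩
      · have h : a = t := h
        rw [h]; exact htX
      · rintro ⟨c', hc', hd'⟩
        have := hpd c hc c' hc' _ hd _ hd' rfl
        subst this
        have := List.inj_on_of_nodup_map (hpE c hc) hd hd' rfl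
        have hba : b = a := congrArg Prod.snd this
        apply hl ε
        dsimp at hinc
        rw [hinc, hba]; simp
      · dsimp at hinc ⊢
        rw [hinc, Sym2.eq_swap]
    have hcross : ∀ h, ∃ (c : E) (l1 l2 : List (E × V)) (y : V), h ∈ S → h ∈ cutI inc X →
        c ∈ C ∧ p c = l1 ++ (h, y) :: l2 ∧ y ∉ X ∧ ∃ a ∈ X, inc h = s(a, y) := by
      intro h
      by_cases hh : h ∈ S ∧ h ∈ cutI inc X
      · obtain ⟨hS, a, b, hab, ha, hb⟩ := hh
        have : (h, b) ∈ U := by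
          by_contra hn
          exact hb (Relation.ReflTransGen.tail ha ⟨h, ⟨hS, fun h' => hb (by
            have h' : b = t := h'
            rw [h']; exact htX), hn⟩, hab⟩)
        obtain ⟨c, hc, hm⟩ := this
        obtain ⟨l1, l2, h'⟩ := List.append_of_mem hm
        exact ⟨c, l1, l2, b, fun _ _ => ⟨hc, h', hb, a, ha, hab⟩⟩
      · exact ⟨h, [], [], t, fun h1 h2 => absurd ⟨h1, h2⟩ hh⟩
    choose cc l1 l2 yy hcr using hcross
    have hW1 : ∀ h, h ∈ S → h ∈ cutI inc X → ∀ a b, inc h = s(a, b) → a ∈ X → b ∉ X →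
        b = yy h ∧ IsW inc t (l1 h) a ∧ IsW inc b (l2 h) (e (cc h)) := by
      intro h hS hc a b hab ha hb
      obtain ⟨h1, h2, h3, a', ha', h4⟩ := hcr h hS hc
      have hw := hpW _ h1
      rw [h2] at hw
      obtain ⟨v, hv1, hv2, hv3⟩ := isW_append.1 hw
      dsimp at hv2 hv3
      rw [hab, Sym2.eq_iff] at h4 hv2
      rcases h4 with ⟨rfl, rfl⟩ | ⟨rfl, rfl⟩
      · rcases hv2 with ⟨rfl, -⟩ | ⟨rfl, rfl⟩
        · exact ⟨rfl, hv1, hv3⟩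
        · exact absurd ha hb
      · exact absurd ha h3
    have hsub : ∀ h, h ∈ S → h ∈ cutI inc X → (∀ d ∈ l1 h, d ∈ p (cc h)) ∧
        (∀ d ∈ l2 h, d ∈ p (cc h)) := by
      intro h hS hc
      rw [(hcr h hS hc).2.1]
      exact ⟨fun d hd => by simp [hd], fun d hd => by simp [hd]⟩
    have hin : ∀ h, h ∈ S → h ∈ cutI inc X → ∀ d ∈ l1 h, ∀ v ∈ inc d.1, v ∈ X := by
      intro h hS hc
      have hc' := hc
      obtain ⟨a, b, hab, ha, hb⟩ := hc'
      exact stay' hstep (l1 h) (hW1 h hS hc a b hab ha hb).2.1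
        (fun d hd => ⟨cc h, (hcr h hS hc).1, (hsub h hS hc).1 d hd⟩) ha
    have hout : ∀ h, h ∈ S → h ∈ cutI inc X → ∀ d ∈ l2 h, ∀ v ∈ inc d.1, v ∉ X := by
      intro h hS hc
      have hc' := hc
      obtain ⟨a, b, hab, ha, hb⟩ := hc'
      exact (stay hstep (l2 h) (hW1 h hS hc a b hab ha hb).2.2
        (fun d hd => ⟨cc h, (hcr h hS hc).1, (hsub h hS hc).2 d hd⟩) hb).1
    have huniq : ∀ h, h ∈ S → h ∈ cutI inc X → ∀ h', h' ∈ S → h' ∈ cutI inc X →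
        cc h = cc h' → h = h' := by
      intro h hS hc h' hS' hc' hcc
      have h1 : (h', yy h') ∈ p (cc h') := by
        rw [(hcr h' hS' hc').2.1]; simp
      rw [← hcc, (hcr h hS hc).2.1] at h1
      obtain ⟨a, b, hab, ha, hb⟩ := hc'
      rcases List.mem_append.1 h1 with h1 | h1
      · exact absurd (hin h hS hc _ h1 b (by dsimp; rw [hab]; simp)) hb
      · rcases List.mem_cons.1 h1 with h1 | h1
        · exact (congrArg Prod.fst h1).symm
        · exact absurd ha (hout h hS hc _ h1 a (by dsimp; rw [hab]; simp))
    refine ⟨X, fun h => {ε | ∃ d ∈ l1 h, d.1 = ε}, fun h => {ε | ∃ d ∈ l2 h, d.1 = ε},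
      ⟨htX, hs, ?_, ?_, ?_, ?_, ?_, ?_⟩, ?_⟩
    · rintro h hS hc ε ⟨d, hd, rfl⟩
      exact ⟨hpS _ (hcr h hS hc).1 _ ((hsub h hS hc).1 d hd), hin h hS hc d hd⟩
    · rintro h hS hc ε ⟨d, hd, rfl⟩
      exact ⟨hpS _ (hcr h hS hc).1 _ ((hsub h hS hc).2 d hd), hout h hS hc d hd⟩
    · intro h hS a b hab ha hb
      exact (hW1 h hS ⟨a, b, hab, ha, hb⟩ a b hab ha hb).2.1.reach fun d hd => ⟨d, hd, rfl⟩
    · intro h hS a b hab ha hb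
      have hc : h ∈ cutI inc X := ⟨a, b, hab, ha, hb⟩
      exact ⟨_, hpT _ (hcr h hS hc).1, hpt _ (hcr h hS hc).1,
        (hW1 h hS hc a b hab ha hb).2.2.reach fun d hd => ⟨d, hd, rfl⟩⟩
    · rintro h hS hc h' hS' hc' ε ⟨d, hd, rfl⟩ ⟨d', hd', hdd⟩
      exact huniq h hS hc h' hS' hc' (hpd _ (hcr h hS hc).1 _ (hcr h' hS' hc').1 d
        ((hsub h hS hc).1 d hd) d' ((hsub h' hS' hc').1 d' hd') hdd.symm)
    · rintro h hS hc h' hS' hc' ε ⟨d, hd, rfl⟩ ⟨d', hd', hdd⟩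
      exact huniq h hS hc h' hS' hc' (hpd _ (hcr h hS hc).1 _ (hcr h' hS' hc').1 d
        ((hsub h hS hc).2 d hd) d' ((hsub h' hS' hc').2 d' hd') hdd.symm)
    · rintro h hS hc ε ⟨d, hd, rfl⟩
      exact ⟨_, (hcr h hS hc).1, hpF _ (hcr h hS hc).1 _ ((hsub h hS hc).1 d hd)⟩

/-- Finite deficiency: either linkable or there is a tight set. -/
theorem linkable_or_tight {inc : E → Sym2 V} (hl : ∀ e, ¬ (inc e).IsDiag) {S : Set E}
    {T : Set V} {t : V} (n : ℕ) :
    ∀ {C : Set E} {F : E → Set E}, Fam inc S T t C F → C ⊆ del inc S t →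
    (del inc S t \ C).Finite → (del inc S t \ C).ncard ≤ n →
    Linkable inc S T t ∨ ∃ X I O, Tight inc S T t X I O := by
  induction n with
  | zero =>
    intro C F hF hC hfin hn
    left
    have h0 : del inc S t \ C = ∅ := (Set.ncard_eq_zero hfin).1 (by omega)
    have : C = del inc S t := Set.Subset.antisymm hC (Set.sdiff_eq_empty.1 h0)
    exact ⟨F, this ▸ hF⟩
  | succ n ih =>
    intro C F hF hC hfin hn
    rcases maxflow hl hF with ⟨g, hg, hgC, F', hF'⟩ | ⟨X, I, O, h, -⟩
    · refine ih hF' (Set.insert_subset hg hC) (hfin.subset ?_) ?_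
      · exact Set.sdiff_subset_sdiff_right (Set.subset_insert _ _)
      · have : (del inc S t \ insert g C) ⊂ (del inc S t \ C) := by
          refine ⟨Set.sdiff_subset_sdiff_right (Set.subset_insert _ _), fun h => ?_⟩
          exact (h ⟨hg, hgC⟩).2 (by simp)
        have := Set.ncard_lt_ncard this hfin
        omega
    · exact Or.inr ⟨X, I, O, h⟩

/-- touching edges -/
def touch (inc : E → Sym2 V) (X : Set V) : Set E := {e | ∃ v ∈ inc e, v ∈ X}

theorem Reach.exit_touch {inc : E → Sym2 V} {F : Set E} {X : Set V} {u w : V}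
    (h : Reach inc F u w) (hu : u ∈ X) (hw : w ∉ X) :
    ∃ y, y ∉ X ∧ Reach inc (F ∩ touch inc X) u y := by
  obtain ⟨e, he, x, y, h1, h2, h3, h4⟩ := h.exit hu hw
  refine ⟨y, h3, Reach.trans (h4.mono ?_) (Reach.single (e := e) ⟨he, x, by simp [h1], h2⟩ h1)⟩
  rintro ε ⟨ha, hb⟩
  refine ⟨ha, ?_⟩
  obtain ⟨⟨a, b⟩, hab⟩ := Quot.exists_rep (inc ε)
  have : a ∈ inc ε := by rw [← hab]; exact Sym2.mem_mk_left a b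
  exact ⟨a, this, hb a this⟩

theorem combine {inc : E → Sym2 V} {S : Set E} {T : Set V} {t : V} {X : Set V}
    {I O : E → Set E} (hX : Tight inc S T t X I O) {C : Set E} {J : E → Set E}
    (hsub : ∀ c ∈ C, J c ⊆ S ∩ touch inc X) (hmem : ∀ c ∈ C, c ∈ J c)
    (hinc : ∀ c ∈ C, t ∈ inc c)
    (hat : ∀ c ∈ C, ∀ e ∈ J c, t ∈ inc e → e = c)
    (hreach : ∀ c ∈ C, ∃ y, y ∉ X ∧ Reach inc (J c) t y)
    (hdisj : ∀ c ∈ C, ∀ c' ∈ C, ∀ e, e ∈ J c → e ∈ J c' → c = c') :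
    ∃ F, Fam inc S T t C F := by
  have hJO : ∀ c ∈ C, ∀ h ∈ S, h ∈ cutI inc X → ∀ e, e ∈ J c → e ∉ O h := by
    intro c hc h hS hh e he heO
    obtain ⟨v, hv, hvX⟩ := (hsub c hc he).2
    exact (hX.outO h hS hh e heO).2 v hv hvX
  refine ⟨fun c => J c ∪ {e | ∃ h ∈ J c, h ∈ cutI inc X ∧ e ∈ O h}, ?_, ?_, hinc, ?_, ?_, ?_⟩
  · rintro c hc e (he | ⟨h, h1, h2, h3⟩)
    · exact (hsub c hc he).1
    · exact (hX.outO h (hsub c hc h1).1 h2 e h3).1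
  · exact fun c hc => Or.inl (hmem c hc)
  · rintro c hc e (he | ⟨h, h1, h2, h3⟩) ht
    · exact hat c hc e he ht
    · exact absurd hX.tmem ((hX.outO h (hsub c hc h1).1 h2 e h3).2 t ht)
  · intro c hc
    obtain ⟨y, hy, hr⟩ := hreach c hc
    obtain ⟨h, hh, a, b, hab, ha, hb, hr2⟩ := hr.exit hX.tmem hy
    obtain ⟨s, hs, hst, hr3⟩ := hX.reachO h (hsub c hc hh).1 a b hab ha hb
    refine ⟨s, hs, hst, ?_⟩
    refine (hr2.mono fun ε hε => Or.inl hε.1).trans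
      ((Reach.single (e := h) (Or.inl hh) hab).trans (hr3.mono fun ε hε => Or.inr ?_))
    exact ⟨h, hh, ⟨a, b, hab, ha, hb⟩, hε⟩
  · rintro c hc c' hc' e (he | ⟨h, h1, h2, h3⟩) (he' | ⟨h', h1', h2', h3'⟩)
    · exact hdisj c hc c' hc' e he he'
    · exact absurd h3' (hJO c hc h' (hsub c' hc' h1').1 h2' e he)
    · exact absurd h3 (hJO c' hc' h (hsub c hc h1).1 h2 e he')
    · have := hX.disjO h (hsub c hc h1).1 h2 h' (hsub c' hc' h1').1 h2' e h3 h3'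
      subst this
      exact hdisj c hc c' hc' h h1 h1'

theorem reroute {inc : E → Sym2 V} {S : Set E} {T : Set V} {t t1 : V} {A B : Set V}
    {I O : E → Set E} (hA : Tight inc S T t A I O) (htB : t ∉ B) (ht1A : t1 ∉ A)
    {C : Set E} {F K : E → Set E}
    (hsub : ∀ c ∈ C, F c ⊆ S ∩ touch inc (A \ B)) (hmem : ∀ c ∈ C, c ∈ F c)
    (hinc : ∀ c ∈ C, t ∈ inc c)
    (hat : ∀ c ∈ C, ∀ e ∈ F c, t ∈ inc e → e = c)
    (hreach : ∀ c ∈ C, ∃ y, y ∉ A \ B ∧ Reach inc (F c) t y)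
    (hdisj : ∀ c ∈ C, ∀ c' ∈ C, ∀ e, e ∈ F c → e ∈ F c' → c = c')
    (hK : ∀ c ∈ C, ∀ h ∈ F c, h ∈ cutI inc B → ∀ e ∈ K h, e ∈ S ∧ ∀ v ∈ inc e, v ∈ B)
    (hKr : ∀ c ∈ C, ∀ h ∈ F c, ∀ x y, inc h = s(x, y) → x ∈ B → y ∉ B → Reach inc (K h) t1 x)
    (hKd : ∀ c ∈ C, ∀ h ∈ F c, h ∈ cutI inc B → ∀ c' ∈ C, ∀ h' ∈ F c', h' ∈ cutI inc B →
      ∀ e, e ∈ K h → e ∈ K h' → h = h') :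
    ∃ F, Fam inc S T t C F := by
  have hFK : ∀ c ∈ C, ∀ e ∈ F c, ∀ c' ∈ C, ∀ h ∈ F c', h ∈ cutI inc B → e ∉ K h := by
    intro c hc e he c' hc' h hh hcut heK
    obtain ⟨v, hv, hvA⟩ := (hsub c hc he).2
    exact hvA.2 ((hK c' hc' h hh hcut e heK).2 v hv)
  refine combine hA
    (J := fun c => F c ∪ {e | ∃ h ∈ F c, h ∈ cutI inc B ∧ e ∈ K h ∧ e ∈ touch inc A})
    ?_ (fun c hc => Or.inl (hmem c hc)) hinc ?_ ?_ ?_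
  · rintro c hc e (he | ⟨h, h1, h2, h3, h4⟩)
    · obtain ⟨hS, v, hv, hvA⟩ := hsub c hc he
      exact ⟨hS, v, hv, hvA.1⟩
    · exact ⟨(hK c hc h h1 h2 e h3).1, h4⟩
  · rintro c hc e (he | ⟨h, h1, h2, h3, h4⟩) ht
    · exact hat c hc e he ht
    · exact absurd ((hK c hc h h1 h2 e h3).2 t ht) htB
  · intro c hc
    obtain ⟨y, hy, hr⟩ := hreach c hc
    obtain ⟨h, hh, a, b, hab, ha, hb, hr2⟩ := hr.exit (X := A \ B) ⟨hA.tmem, htB⟩ hy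
    have hr3 := (hr2.mono fun ε hε => hε.1).trans (Reach.single hh hab)
    by_cases hbA : b ∈ A
    · have hbB : b ∈ B := by by_contra hbB; exact hb ⟨hbA, hbB⟩
      have hab' : inc h = s(b, a) := by rw [hab, Sym2.eq_swap]
      have hcut : h ∈ cutI inc B := ⟨b, a, hab', hbB, ha.2⟩
      obtain ⟨y', hy', hr4⟩ := (hKr c hc h hh b a hab' hbB ha.2).symm.exit_touch hbA ht1A
      refine ⟨y', hy', (hr3.mono fun ε hε => Or.inl hε).trans (hr4.mono fun ε hε => Or.inr ?_)⟩
      exact ⟨h, hh, hcut, hε.1, hε.2⟩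
    · exact ⟨b, hbA, hr3.mono fun ε hε => Or.inl hε⟩
  · rintro c hc c' hc' e (he | ⟨h, h1, h2, h3, -⟩) (he' | ⟨h', h1', h2', h3', -⟩)
    · exact hdisj c hc c' hc' e he he'
    · exact absurd h3' (hFK c hc e he c' hc' h' h1' h2')
    · exact absurd h3 (hFK c' hc' e he' c hc h h1 h2)
    · have := hKd c hc h h1 h2 c' hc' h' h1' h2' e h3 h3'
      subst this
      exact hdisj c hc c' hc' h h1 h1'
end LC

namespace LC

variable {V : Type u} {E : Type v}

/-- Inner Eulerian. -/
def Eul (inc : E → Sym2 V) (S : Set E) (T : Set V) : Prop :=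
  ∀ Y : Set V, Y ⊆ Tᶜ → ¬ ((S ∩ cutI inc Y).Finite ∧ Odd (S ∩ cutI inc Y).ncard)

theorem even_biUnion {ι : Type*} (B : Finset ι) (f : ι → Set E)
    (hfin : ∀ c ∈ B, (f c).Finite) (hev : ∀ c ∈ B, Even (f c).ncard)
    (hd : ∀ c ∈ B, ∀ c' ∈ B, ∀ e, e ∈ f c → e ∈ f c' → c = c') :
    {e | ∃ c ∈ B, e ∈ f c}.Finite ∧ Even {e | ∃ c ∈ B, e ∈ f c}.ncard := by
  classical
  induction B using Finset.induction_on with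
  | empty => simp
  | insert a B ha ih =>
    have h1 := ih (fun c hc => hfin c (by simp [hc])) (fun c hc => hev c (by simp [hc]))
      (fun c hc c' hc' => hd c (by simp [hc]) c' (by simp [hc']))
    have h2 : {e | ∃ c ∈ insert a B, e ∈ f c} = f a ∪ {e | ∃ c ∈ B, e ∈ f c} := by
      ext e; simp
    have h3 : Disjoint (f a) {e | ∃ c ∈ B, e ∈ f c} := by
      rw [Set.disjoint_left]
      rintro e he ⟨c, hc, hec⟩
      have := hd a (by simp) c (by simp [hc]) e he hec
      exact ha (this ▸ hc)
    have h4 := hfin a (by simp)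
    rw [h2, Set.ncard_union_eq h3 h4 h1.1]
    exact ⟨h4.union h1.1, (hev a (by simp)).add h1.2⟩

theorem parityP {inc : E → Sym2 V} {S : Set E} {T : Set V} {t : V}
    (hE : Eul inc S T) {g : E} (hg : g ∈ del inc S t) (hgl : ¬ (inc g).IsDiag) {F0 : E → Set E}
    (hF0 : Fam inc S T t (del inc S t \ {g}) F0) : Linkable inc S T t := by
  classical
  set C := del inc S t \ {g} with hC
  have hex : ∀ c, ∃ (v : V) (l : List (E × V)) (s : V), c ∈ C → s ∈ T ∧ s ≠ t ∧
      IsW inc t ((c, v) :: l) s ∧ (∀ d ∈ (c, v) :: l, d.1 ∈ F0 c) ∧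
      (t :: ((c, v) :: l).map Prod.snd).Nodup := by
    intro c
    by_cases hc : c ∈ C
    · obtain ⟨s, h1, h2, h3⟩ := hF0.reach c hc
      obtain ⟨v, l, h4⟩ := h3.pathList h2 (hF0.at_t c hc)
      exact ⟨v, l, s, fun _ => ⟨h1, h2, h4⟩⟩
    · exact ⟨t, [], t, fun h => absurd h hc⟩
  choose x l s hp using hex
  set P : E → Set E := fun c => {e | e ∈ ((c, x c) :: l c).map Prod.fst} with hPdef
  have hPF : ∀ c ∈ C, P c ⊆ F0 c := by
    intro c hc e he
    obtain ⟨d, hd, rfl⟩ := List.mem_map.1 he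
    exact (hp c hc).2.2.2.1 d hd
  have hPfin : ∀ c, (P c).Finite := fun c => List.finite_toSet _
  have hPmem : ∀ c, c ∈ P c := fun c => by simp [hPdef]
  have hPS : ∀ c ∈ C, P c ⊆ S := fun c hc => (hPF c hc).trans (hF0.sub c hc)
  have hPt : ∀ c ∈ C, ∀ e ∈ P c, t ∈ inc e → e = c := fun c hc e he =>
    hF0.at_t c hc e (hPF c hc he)
  have hPd : ∀ c ∈ C, ∀ c' ∈ C, ∀ e, e ∈ P c → e ∈ P c' → c = c' := fun c hc c' hc' e he he' =>
    hF0.disj c hc c' hc' e (hPF c hc he) (hPF c' hc' he')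
  have hPe : ∀ c ∈ C, (((c, x c) :: l c).map Prod.fst).Nodup := fun c hc =>
    (hp c hc).2.2.1.edges_nodup (hp c hc).2.2.2.2
  have hPr : ∀ c ∈ C, Reach inc (P c) t (s c) := fun c hc =>
    (hp c hc).2.2.1.reach fun d hd => List.mem_map.2 ⟨d, hd, rfl⟩
  have hPsplit : ∀ c ∈ C, ∀ e ∈ P c, ∀ y ∈ inc e, y ≠ t → ∃ Hd Tl : Set E, Hd ⊆ P c ∧ Tl ⊆ P c ∧
      (∀ e, e ∈ Hd → e ∉ Tl) ∧ c ∈ Hd ∧ Reach inc Hd t y ∧ Reach inc Tl y (s c) := by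
    intro c hc e he y hy hyt
    obtain ⟨d, hd, rfl⟩ := List.mem_map.1 he
    have hw := (hp c hc).2.2.1
    have h1 := hw.ends_mem hd hy
    have h2 : y ∈ x c :: (l c).map Prod.snd := by
      rcases List.mem_cons.1 h1 with h | h
      · exact absurd h hyt
      · simpa using h
    obtain ⟨l1, l2, hl, hw1, hw2⟩ := hw.2.split h2
    have hnd := hPe c hc
    rw [hl, ← List.cons_append, List.map_append] at hnd
    refine ⟨{e | e ∈ ((c, x c) :: l1).map Prod.fst}, {e | e ∈ l2.map Prod.fst}, ?_, ?_, ?_, ?_,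
      ?_, ?_⟩
    · intro e he
      show e ∈ ((c, x c) :: l c).map Prod.fst
      rw [hl, ← List.cons_append, List.map_append]
      exact List.mem_append_left _ he
    · intro e he
      show e ∈ ((c, x c) :: l c).map Prod.fst
      rw [hl, ← List.cons_append, List.map_append]
      exact List.mem_append_right _ he
    · intro e he he'
      exact (List.disjoint_of_nodup_append hnd) he he'
    · simp
    · have : IsW inc t ((c, x c) :: l1) y := ⟨hw.1, hw1⟩
      exact this.reach fun d hd => List.mem_map.2 ⟨d, hd, rfl⟩
    · exact hw2.reach fun d hd => List.mem_map.2 ⟨d, hd, rfl⟩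
  have hgP : ∀ c ∈ C, g ∉ P c := by
    intro c hc h
    exact hc.2 (hPt c hc g h hg.2).symm
  set K : Set E := {e | e ∈ S ∧ ∀ c ∈ C, e ∉ P c} with hK
  have hgK : g ∈ K := ⟨hg.1, hgP⟩
  have hKt : ∀ e ∈ K, t ∈ inc e → e = g := by
    intro e he h
    by_contra hne
    exact he.2 e ⟨⟨he.1, h⟩, hne⟩ (hPmem e)
  by_cases hdir : ∃ s ∈ T, s ≠ t ∧ Reach inc K t s
  · refine ⟨fun c => if c = g then K else P c, ?_, ?_, fun c hc => hc.2, ?_, ?_, ?_⟩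
    · intro c hc
      by_cases h : c = g
      · simp only [h, if_true]; exact fun e he => he.1
      · simp only [h, if_false]; exact hPS c ⟨hc, h⟩
    · intro c hc
      by_cases h : c = g
      · simp only [h, if_true]; exact hgK
      · simp only [h, if_false]; exact hPmem c
    · intro c hc
      by_cases h : c = g
      · simp only [h, if_true]; exact hKt
      · simp only [h, if_false]; exact hPt c ⟨hc, h⟩
    · intro c hc
      by_cases h : c = g
      · simp only [h, if_true]; exact hdir
      · simp only [h, if_false]
        exact ⟨s c, (hp c ⟨hc, h⟩).1, (hp c ⟨hc, h⟩).2.1, hPr c ⟨hc, h⟩⟩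
    · intro c hc c' hc' e
      by_cases h : c = g <;> by_cases h' : c' = g
      · intros; rw [h, h']
      · simp only [h, h', if_true, if_false]
        intro h1 h2
        exact absurd h2 (h1.2 c' ⟨hc', h'⟩)
      · simp only [h, h', if_true, if_false]
        intro h1 h2
        exact absurd h1 (h2.2 c ⟨hc, h⟩)
      · simp only [h, h', if_false]
        exact hPd c ⟨hc, h⟩ c' ⟨hc', h'⟩ e
  push Not at hdir
  -- the alternating sequence
  let Inv : Set E × V × Finset E → Prop := fun q => q.1.Finite ∧ q.1 ⊆ K ∧ g ∈ q.1 ∧ q.2.1 ≠ t ∧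
    Reach inc q.1 t q.2.1 ∧ (∀ Y : Set V, t ∉ Y → (Odd (q.1 ∩ cutI inc Y).ncard ↔ q.2.1 ∈ Y)) ∧
    (∀ c ∈ q.2.2, c ∈ C)
  have hstep : ∀ q : {q // Inv q}, ∃ (q' : {q // Inv q}) (c : E) (sg Hd Tl : Set E),
      c ∈ C ∧ c ∉ q.1.2.2 ∧ q'.1.2.2 = insert c q.1.2.2 ∧ sg ⊆ K ∧ (∀ e ∈ sg, e ∉ q.1.1) ∧
      q'.1.1 = q.1.1 ∪ sg ∧ Reach inc sg q.1.2.1 q'.1.2.1 ∧ Hd ⊆ P c ∧ Tl ⊆ P c ∧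
      (∀ e, e ∈ Hd → e ∉ Tl) ∧ c ∈ Hd ∧ Reach inc Hd t q'.1.2.1 ∧ Reach inc Tl q'.1.2.1 (s c) := by
    rintro ⟨⟨Z, y, B⟩, hZf, hZK, hgZ, hyt, hZr, hZp, hB⟩
    dsimp only at hZf hZK hgZ hyt hZr hZp hB ⊢
    set Y : Set V := {v | Reach inc (K \ Z) y v} with hY
    have htY : t ∉ Y := by
      intro h
      have h' := Reach.symm h
      rcases Relation.ReflTransGen.cases_head h' with h | ⟨v, ⟨e, he, hinc⟩, -⟩
      · exact hyt h.symm
      · have := hKt e he.1 (by rw [hinc]; simp)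
        exact he.2 (this ▸ hgZ)
    have hyY : y ∈ Y := Reach.refl
    have hYT : Y ⊆ Tᶜ := by
      intro v hv hvT
      exact hdir v hvT (fun h => htY (h ▸ hv)) ((hZr.mono hZK).trans (Reach.mono Set.sdiff_subset hv))
    have htouch : ∃ c ∈ C, c ∉ B ∧ ∃ e ∈ P c, ∃ v ∈ inc e, v ∈ Y := by
      by_contra hno
      push Not at hno
      obtain ⟨hf1, hf2⟩ := even_biUnion B (fun c => P c ∩ cutI inc Y)
        (fun c _ => (hPfin c).inter_of_left _)
        (fun c hc => ((hp c (hB c hc)).2.2.1.parity' (hPe c (hB c hc)) Y).2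
          ⟨fun h => absurd h htY, fun h => absurd (hp c (hB c hc)).1 (hYT h)⟩)
        (fun c hc c' hc' e he he' => hPd c (hB c hc) c' (hB c' hc') e he.1 he'.1)
      have heq : S ∩ cutI inc Y = (Z ∩ cutI inc Y) ∪ {e | ∃ c ∈ B, e ∈ P c ∩ cutI inc Y} := by
        ext e
        constructor
        · rintro ⟨heS, hec⟩
          by_cases hK' : e ∈ K
          · left
            refine ⟨?_, hec⟩
            by_contra hZ
            obtain ⟨a, b, hab, ha, hb⟩ := hec
            exact hb (Reach.trans ha (Reach.single ⟨hK', hZ⟩ hab))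
          · right
            have : ∃ c ∈ C, e ∈ P c := by
              by_contra h
              push Not at h
              exact hK' ⟨heS, h⟩
            obtain ⟨c, hc, hec'⟩ := this
            refine ⟨c, ?_, hec', hec⟩
            by_contra hcB
            obtain ⟨a, b, hab, ha, hb⟩ := hec
            exact hno c hc hcB e hec' a (by rw [hab]; simp) ha
        · rintro (⟨h1, h2⟩ | ⟨c, hc, h1, h2⟩)
          · exact ⟨(hZK h1).1, h2⟩
          · exact ⟨hPS c (hB c hc) h1, h2⟩
      have hdj : Disjoint (Z ∩ cutI inc Y) {e | ∃ c ∈ B, e ∈ P c ∩ cutI inc Y} := by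
        rw [Set.disjoint_left]
        rintro e ⟨h1, -⟩ ⟨c, hc, h2, -⟩
        exact (hZK h1).2 c (hB c hc) h2
      apply hE Y hYT
      rw [heq, Set.ncard_union_eq hdj (hZf.inter_of_left _) hf1]
      exact ⟨(hZf.inter_of_left _).union hf1, ((hZp Y htY).2 hyY).add_even hf2⟩
    obtain ⟨c, hc, hcB, e, heP, y', hy', hy'Y⟩ := htouch
    have hy't : y' ≠ t := fun h => htY (h ▸ hy'Y)
    obtain ⟨Hd, Tl, h1, h2, h3, h4, h5, h6⟩ := hPsplit c hc e heP y' hy' hy't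
    obtain ⟨r, hr1, hr2, hr3⟩ := Reach.simple hy'Y
    have hr4 := hr1.edges_nodup hr3
    have hsub : ∀ e ∈ {e | e ∈ r.map Prod.fst}, e ∈ K \ Z := by
      intro e he
      obtain ⟨d, hd, rfl⟩ := List.mem_map.1 he
      exact hr2 d hd
    have hfs : {e | e ∈ r.map Prod.fst}.Finite := List.finite_toSet _
    have hrr : Reach inc {e | e ∈ r.map Prod.fst} y y' :=
      hr1.reach fun d hd => List.mem_map.2 ⟨d, hd, rfl⟩
    refine ⟨⟨(Z ∪ {e | e ∈ r.map Prod.fst}, y', insert c B), ?_, ?_, ?_, ?_, ?_, ?_, ?_⟩, c,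
      {e | e ∈ r.map Prod.fst}, Hd, Tl, hc, hcB, rfl, fun e he => (hsub e he).1,
      fun e he => (hsub e he).2, rfl, hrr, h1, h2, h3, h4, h5, h6⟩
    · exact hZf.union hfs
    · exact Set.union_subset hZK fun e he => (hsub e he).1
    · exact Or.inl hgZ
    · exact hy't
    · exact (hZr.mono Set.subset_union_left).trans (hrr.mono Set.subset_union_right)
    · intro Y' htY'
      have e1 := hZp Y' htY'
      have e2 := hr1.parity' hr4 Y'
      dsimp only
      rw [Set.union_inter_distrib_right, Set.ncard_union_eq ?_ (hZf.inter_of_left _)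
        (hfs.inter_of_left _), Nat.odd_add, e1, e2]
      · tauto
      · rw [Set.disjoint_left]
        exact fun e he he' => (hsub e he'.1).2 he.1
    · intro c' hc'
      rcases Finset.mem_insert.1 hc' with rfl | h
      · exact hc
      · exact hB c' h
  choose nx cc sg Hd Tl hn using hstep
  have hinit : ∃ y, inc g = s(t, y) := by
    obtain ⟨y, hy⟩ := Sym2.mem_iff_exists.1 hg.2
    exact ⟨y, hy⟩
  obtain ⟨y0, hy0⟩ := hinit
  have hI0 : Inv ({g}, y0, ∅) := by
    refine ⟨Set.finite_singleton g, by simpa using hgK, rfl, ?_, Reach.single rfl hy0, ?_, by simp⟩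
    · intro h
      apply hgl
      rw [hy0]
      exact h.symm
    · intro Y htY
      dsimp only
      have := mem_cutI (X := Y) hy0
      by_cases hyY : y0 ∈ Y
      · have h1 : {g} ∩ cutI inc Y = {g} := by
          rw [Set.inter_eq_left]; simpa using this.2 (by tauto)
        rw [h1]; simp [hyY]
      · have h1 : {g} ∩ cutI inc Y = ∅ := by
          rw [Set.singleton_inter_eq_empty, this]; tauto
        rw [h1]; simp [hyY]
  let σ : ℕ → {q // Inv q} := fun n => Nat.rec ⟨_, hI0⟩ (fun _ q => nx q) n
  have hσ0 : σ 0 = ⟨_, hI0⟩ := rfl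
  have hσs : ∀ n, σ (n+1) = nx (σ n) := fun n => rfl
  set c : ℕ → E := fun n => cc (σ n) with hc
  have hcC : ∀ n, c n ∈ C := fun n => (hn (σ n)).1
  have hZmono : ∀ n m, n ≤ m → (σ n).1.1 ⊆ (σ m).1.1 := by
    intro n m h
    induction h with
    | refl => exact subset_rfl
    | step _ ih =>
      refine ih.trans ?_
      rw [Nat.succ_eq_add_one, hσs, (hn _).2.2.2.2.2.1]
      exact Set.subset_union_left
  have hBmono : ∀ n m, n ≤ m → (σ n).1.2.2 ⊆ (σ m).1.2.2 := by
    intro n m h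
    induction h with
    | refl => exact subset_rfl
    | step _ ih =>
      refine ih.trans ?_
      rw [Nat.succ_eq_add_one, hσs, (hn _).2.2.1]
      exact Finset.subset_insert _ _
  have hclt : ∀ n m, n < m → c n ≠ c m := by
    intro n m h heq
    apply (hn (σ m)).2.1
    apply hBmono (n+1) m h
    rw [hσs, (hn _).2.2.1]
    show c m ∈ _
    rw [← heq]
    exact Finset.mem_insert_self _ _
  have hcinj : ∀ n m, c n = c m → n = m := by
    intro n m h
    rcases lt_trichotomy n m with h' | h' | h'
    · exact absurd h (hclt _ _ h')
    · exact h'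
    · exact absurd h.symm (hclt _ _ h')
  have hslt : ∀ n m, n < m → ∀ e ∈ sg (σ n), e ∉ sg (σ m) := by
    intro n m h e he he'
    apply (hn (σ m)).2.2.2.2.1 e he'
    apply hZmono (n+1) m h
    rw [hσs, (hn _).2.2.2.2.2.1]
    exact Or.inr he
  have hsinj : ∀ n m e, e ∈ sg (σ n) → e ∈ sg (σ m) → n = m := by
    intro n m e h1 h2
    rcases lt_trichotomy n m with h' | h' | h'
    · exact absurd h2 (hslt _ _ h' e h1)
    · exact h'
    · exact absurd h1 (hslt _ _ h' e h2)
  have hgs : ∀ n, g ∉ sg (σ n) := fun n h => (hn (σ n)).2.2.2.2.1 g h (σ n).2.2.2.1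
  have hsK : ∀ n, sg (σ n) ⊆ K := fun n => (hn (σ n)).2.2.2.1
  have hHP : ∀ n, Hd (σ n) ⊆ P (c n) := fun n => (hn (σ n)).2.2.2.2.2.2.2.1
  have hTP : ∀ n, Tl (σ n) ⊆ P (c n) := fun n => (hn (σ n)).2.2.2.2.2.2.2.2.1
  have hHT : ∀ n e, e ∈ Hd (σ n) → e ∉ Tl (σ n) := fun n => (hn (σ n)).2.2.2.2.2.2.2.2.2.1
  have hcH : ∀ n, c n ∈ Hd (σ n) := fun n => (hn (σ n)).2.2.2.2.2.2.2.2.2.2.1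
  have hgc : ∀ n, c n ≠ g := fun n => (hcC n).2
  set a : ℕ → E := fun n => Nat.casesOn n g c with ha
  set M : ℕ → Set E := fun n => Nat.casesOn n {g} (fun n => Hd (σ n)) with hM
  have hainj : ∀ n m, a n = a m → n = m := by
    rintro (_ | n) (_ | m) h
    · rfl
    · exact absurd h.symm (hgc m)
    · exact absurd h (hgc n)
    · exact congrArg _ (hcinj n m h)
  have hMr : ∀ n, Reach inc (M n) t (σ n).1.2.1 := by
    rintro (_ | n)
    · exact Reach.single (e := g) rfl hy0
    · exact (hn (σ n)).2.2.2.2.2.2.2.2.2.2.2.1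
  have hMa : ∀ n, a n ∈ M n := by
    rintro (_ | n)
    · rfl
    · exact hcH n
  have hadel : ∀ n, a n ∈ del inc S t := by
    rintro (_ | n)
    · exact hg
    · exact (hcC n).1
  have hMt : ∀ n, ∀ e ∈ M n, t ∈ inc e → e = a n := by
    rintro (_ | n) e he h
    · exact he
    · exact hPt _ (hcC n) e (hHP n he) h
  have hMS : ∀ n, M n ⊆ S := by
    rintro (_ | n) e he
    · have : e = g := he
      rw [this]; exact hg.1
    · exact hPS _ (hcC n) (hHP n he)
  have hMM : ∀ n m e, e ∈ M n → e ∈ M m → n = m := by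
    rintro (_ | n) (_ | m) e h1 h2
    · rfl
    · have : e = g := h1
      exact absurd (hHP m h2) (this ▸ hgP _ (hcC m))
    · have : e = g := h2
      exact absurd (hHP n h1) (this ▸ hgP _ (hcC n))
    · exact congrArg _ (hcinj n m (hPd _ (hcC n) _ (hcC m) e (hHP n h1) (hHP m h2)))
  have hMs : ∀ n m e, e ∈ M n → e ∉ sg (σ m) := by
    rintro (_ | n) m e h1 h2
    · have : e = g := h1
      exact hgs m (this ▸ h2)
    · exact (hsK m h2).2 _ (hcC n) (hHP n h1)
  have hMT : ∀ n m e, e ∈ M n → e ∉ Tl (σ m) := by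
    rintro (_ | n) m e h1 h2
    · have : e = g := h1
      exact absurd (hTP m h2) (this ▸ hgP _ (hcC m))
    · have := hcinj n m (hPd _ (hcC n) _ (hcC m) e (hHP n h1) (hTP m h2))
      subst this
      exact hHT n e h1 h2
  have hsT : ∀ n m e, e ∈ sg (σ n) → e ∉ Tl (σ m) := fun n m e h1 h2 =>
    (hsK n h1).2 _ (hcC m) (hTP m h2)
  have hTT : ∀ n m e, e ∈ Tl (σ n) → e ∈ Tl (σ m) → n = m := fun n m e h1 h2 =>
    hcinj n m (hPd _ (hcC n) _ (hcC m) e (hTP n h1) (hTP m h2))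
  set Q : ℕ → Set E := fun n => M n ∪ sg (σ n) ∪ Tl (σ n) with hQ
  have hQQ : ∀ n m e, e ∈ Q n → e ∈ Q m → n = m := by
    rintro n m e ((h1 | h1) | h1) ((h2 | h2) | h2)
    · exact hMM n m e h1 h2
    · exact absurd h2 (hMs n m e h1)
    · exact absurd h2 (hMT n m e h1)
    · exact absurd h1 (hMs m n e h2)
    · exact hsinj n m e h1 h2
    · exact absurd h2 (hsT n m e h1)
    · exact absurd h1 (hMT m n e h2)
    · exact absurd h1 (hsT m n e h2)
    · exact hTT n m e h1 h2
  have hQP : ∀ n e, e ∈ Q n → ∀ c' ∈ C, (∀ m, c' ≠ a m) → e ∉ P c' := by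
    rintro n e ((h1 | h1) | h1) c' hc' hca h
    · cases n with
      | zero =>
        have : e = g := h1
        exact hgP c' hc' (this ▸ h)
      | succ n => exact hca (n+1) (hPd _ hc' _ (hcC n) e h (hHP n h1))
    · exact (hsK n h1).2 c' hc' h
    · exact hca (n+1) (hPd _ hc' _ (hcC n) e h (hTP n h1))
  have hnot : ∀ c' ∈ del inc S t, (∀ m, c' ≠ a m) → c' ∈ C := fun c' h h' => ⟨h, h' 0⟩
  refine ⟨fun c' => {e | (∃ n, c' = a n ∧ e ∈ Q n) ∨ ((∀ n, c' ≠ a n) ∧ e ∈ P c')}, ?_, ?_,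
    fun c hc => hc.2, ?_, ?_, ?_⟩
  · rintro c' hc' e (⟨n, rfl, (h | h) | h⟩ | ⟨h1, h2⟩)
    · exact hMS n h
    · exact (hsK n h).1
    · exact hPS _ (hcC n) (hTP n h)
    · exact hPS _ (hnot c' hc' h1) h2
  · intro c' hc'
    by_cases h : ∃ n, c' = a n
    · obtain ⟨n, rfl⟩ := h
      exact Or.inl ⟨n, rfl, Or.inl (Or.inl (hMa n))⟩
    · push Not at h
      exact Or.inr ⟨h, hPmem c'⟩
  · rintro c' hc' e (⟨n, rfl, (h | h) | h⟩ | ⟨h1, h2⟩) het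
    · exact hMt n e h het
    · exact absurd h (hKt e (hsK n h) het ▸ hgs n)
    · have := hPt _ (hcC n) e (hTP n h) het
      exact absurd h (this ▸ hHT n _ (hcH n))
    · exact hPt c' (hnot c' hc' h1) e h2 het
  · intro c' hc'
    by_cases h : ∃ n, c' = a n
    · obtain ⟨n, rfl⟩ := h
      refine ⟨s (c n), (hp _ (hcC n)).1, (hp _ (hcC n)).2.1, ?_⟩
      refine Reach.mono (F := Q n) (fun e he => Or.inl ⟨n, rfl, he⟩) ?_
      refine ((hMr n).mono fun e he => Or.inl (Or.inl he)).trans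
        (Reach.trans (((hn (σ n)).2.2.2.2.2.2.1).mono fun e he => Or.inl (Or.inr he))
          (((hn (σ n)).2.2.2.2.2.2.2.2.2.2.2.2).mono fun e he => Or.inr he))
    · push Not at h
      have hh := hnot c' hc' h
      exact ⟨s c', (hp c' hh).1, (hp c' hh).2.1, (hPr c' hh).mono fun e he => Or.inr ⟨h, he⟩⟩
  · rintro c1 hc1 c2 hc2 e (⟨n, rfl, h1⟩ | ⟨h0, h1⟩) (⟨m, rfl, h2⟩ | ⟨h0', h2⟩)
    · rw [hQQ n m e h1 h2]
    · exact absurd h2 (hQP n e h1 c2 (hnot _ hc2 h0') h0')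
    · exact absurd h1 (hQP m e h2 c1 (hnot _ hc1 h0) h0)
    · exact hPd c1 (hnot _ hc1 h0) c2 (hnot _ hc2 h0') e h1 h2
end LC

namespace LC

variable {V : Type u} {E : Type v}

open Classical in
/-- The incidence map after splitting: the edge `e` becomes an edge from `t` to `w`. -/
noncomputable def ninc (inc : E → Sym2 V) (e : E) (t w : V) : E → Sym2 V :=
  fun x => if x = e then s(t, w) else inc x

theorem ninc_self (inc : E → Sym2 V) (e : E) (t w : V) : ninc inc e t w e = s(t, w) := by
  simp [ninc]

theorem ninc_ne (inc : E → Sym2 V) {e x : E} (t w : V) (h : x ≠ e) :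
    ninc inc e t w x = inc x := by
  simp [ninc, h]

structure Ctx (inc : E → Sym2 V) (S : Set E) (T : Set V) (t : V) (e : E) (z : V) (f : E)
    (w : V) : Prop where
  hl : ∀ x, ¬ (inc x).IsDiag
  ht : t ∈ T
  he : e ∈ S
  hinc : inc e = s(t, z)
  hz : z ∉ T
  hf : f ∈ S
  hfe : f ≠ e
  hfinc : inc f = s(z, w)
  hw : w ≠ t

theorem Fam.transport {inc inc' : E → Sym2 V} {S S' : Set E} {T : Set V} {t : V} {C : Set E}
    {F : E → Set E} (hF : Fam inc S T t C F)
    (h : ∀ c ∈ C, ∀ x ∈ F c, inc x = inc' x ∧ x ∈ S') : Fam inc' S' T t C F := by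
  refine ⟨fun c hc x hx => (h c hc x hx).2, hF.mem, ?_, ?_, ?_, hF.disj⟩
  · intro c hc
    rw [← (h c hc c (hF.mem c hc)).1]
    exact hF.inc_t c hc
  · intro c hc x hx ht
    rw [← (h c hc x hx).1] at ht
    exact hF.at_t c hc x hx ht
  · intro c hc
    obtain ⟨s, h1, h2, h3⟩ := hF.reach c hc
    exact ⟨s, h1, h2, h3.congr fun x hx => (h c hc x hx).1⟩

theorem Fam.subset {inc : E → Sym2 V} {S : Set E} {T : Set V} {t : V} {C C' : Set E}
    {F : E → Set E} (hF : Fam inc S T t C F) (h : C' ⊆ C) : Fam inc S T t C' F :=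
  ⟨fun c hc => hF.sub c (h hc), fun c hc => hF.mem c (h hc), fun c hc => hF.inc_t c (h hc),
    fun c hc => hF.at_t c (h hc), fun c hc => hF.reach c (h hc),
    fun c hc c' hc' => hF.disj c (h hc) c' (h hc')⟩

section
variable {inc : E → Sym2 V} {S : Set E} {T : Set V} {t : V} {e : E} {z : V} {f : E} {w : V}

theorem Ctx.zt (h : Ctx inc S T t e z f w) : z ≠ t := fun h' => h.hz (h' ▸ h.ht)

theorem Ctx.hl' (h : Ctx inc S T t e z f w) : ∀ x, ¬ (ninc inc e t w x).IsDiag := by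
  intro x
  by_cases hx : x = e
  · subst hx; rw [ninc_self]; intro h'; exact h.hw (h' : t = w).symm
  · rw [ninc_ne _ _ _ hx]; exact h.hl x

theorem Ctx.eul (h : Ctx inc S T t e z f w) (hE : Eul inc S T) :
    Eul (ninc inc e t w) (S \ {f}) T := by
  intro Y hY
  have htY : t ∉ Y := fun h' => hY h' h.ht
  have hA := hE Y hY
  have he1 : e ∈ cutI inc Y ↔ z ∈ Y := by rw [mem_cutI h.hinc]; simp [htY]
  have hf1 := mem_cutI (X := Y) h.hfinc
  have he2 : e ∈ cutI (ninc inc e t w) Y ↔ w ∈ Y := by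
    rw [mem_cutI (ninc_self inc e t w)]; simp [htY]
  have hne : ∀ x, x ≠ e → (x ∈ cutI (ninc inc e t w) Y ↔ x ∈ cutI inc Y) := by
    intro x hx
    simp only [cutI, ninc_ne inc t w hx, Set.mem_ofPred_eq]
  set A := S ∩ cutI inc Y with hAdef
  set B := (S \ {f}) ∩ cutI (ninc inc e t w) Y with hBdef
  have hAB : ∀ x, x ≠ e → x ≠ f → (x ∈ B ↔ x ∈ A) := by
    intro x h1 h2
    simp only [hAdef, hBdef, Set.mem_inter_iff, Set.mem_sdiff, Set.mem_singleton_iff, h2, hne x h1,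
      not_false_eq_true, and_true]
  have heA : e ∈ A ↔ z ∈ Y := by
    simp only [hAdef, Set.mem_inter_iff, h.he, he1, true_and]
  have hfA : f ∈ A ↔ ¬ (z ∈ Y ↔ w ∈ Y) := by
    simp only [hAdef, Set.mem_inter_iff, h.hf, hf1, true_and]
  have heB : e ∈ B ↔ w ∈ Y := by
    simp only [hBdef, Set.mem_inter_iff, Set.mem_sdiff, Set.mem_singleton_iff, h.he, he2,
      h.hfe.symm, not_false_eq_true, true_and]
  have hfB : f ∉ B := by
    simp [hBdef]
  have hfe := h.hfe
  by_cases hz : z ∈ Y <;> by_cases hw : w ∈ Y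
  · have : B = A := by
      ext x
      by_cases h1 : x = e
      · rw [h1, heA, heB]; simp [hz, hw]
      by_cases h2 : x = f
      · rw [h2, hfA]; simp [hz, hw, hfB]
      exact hAB x h1 h2
    rwa [this]
  · have : A = insert e (insert f B) := by
      ext x
      by_cases h1 : x = e
      · rw [h1, heA]; simp [hz]
      by_cases h2 : x = f
      · rw [h2, hfA]; simp [hz, hw]
      simp [h1, h2, hAB x h1 h2]
    rintro ⟨h1, h2⟩
    apply hA
    rw [this]
    have hn : e ∉ insert f B := by simp [h.hfe.symm, heB, hw]
    refine ⟨(h1.insert f).insert e, ?_⟩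
    rw [Set.ncard_insert_of_notMem hn (h1.insert f), Set.ncard_insert_of_notMem hfB h1]
    simpa [Nat.odd_add_one] using h2
  · set R := B \ {e} with hR
    have hBR : B = insert e R := by
      rw [hR, Set.insert_sdiff_singleton, Set.insert_eq_of_mem (heB.2 hw)]
    have hAR : A = insert f R := by
      ext x
      by_cases h1 : x = e
      · rw [h1, heA]; simp [hR, h.hfe.symm, hz]
      by_cases h2 : x = f
      · rw [h2, hfA]; simp [hz, hw]
      simp [h1, h2, hR, hAB x h1 h2]
    rintro ⟨h1, h2⟩
    have hRf : R.Finite := h1.subset Set.sdiff_subset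
    apply hA
    have heR : e ∉ R := by simp [hR]
    have hfR : f ∉ R := fun h' => hfB h'.1
    rw [hBR, Set.ncard_insert_of_notMem heR hRf] at h2
    rw [hAR, Set.ncard_insert_of_notMem hfR hRf]
    exact ⟨hRf.insert f, h2⟩
  · have : B = A := by
      ext x
      by_cases h1 : x = e
      · rw [h1, heA, heB]; simp [hz, hw]
      by_cases h2 : x = f
      · rw [h2, hfA]; simp [hz, hw, hfB]
      exact hAB x h1 h2
    rwa [this]

theorem Ctx.del_ne (h : Ctx inc S T t e z f w) {x : V} (hx : x ∈ T) (hxw : x ≠ w) :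
    del (ninc inc e t w) (S \ {f}) x = del inc S x := by
  have hxz : x ≠ z := fun h' => h.hz (h' ▸ hx)
  ext y
  simp only [del, Set.mem_ofPred_eq, Set.mem_sdiff, Set.mem_singleton_iff]
  by_cases h1 : y = e
  · subst h1
    rw [ninc_self, h.hinc]
    simp [hxw, hxz, h.hfe.symm]
  · rw [ninc_ne _ _ _ h1]
    by_cases h2 : y = f
    · subst h2; rw [h.hfinc]; simp [hxw, hxz]
    · simp [h2]

theorem Ctx.del_w (h : Ctx inc S T t e z f w) :
    del (ninc inc e t w) (S \ {f}) w = insert e (del inc S w \ {f}) := by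
  ext y
  simp only [del, Set.mem_ofPred_eq, Set.mem_sdiff, Set.mem_singleton_iff, Set.mem_insert_iff]
  by_cases h1 : y = e
  · subst h1
    rw [ninc_self]
    simp [h.he, h.hfe.symm]
  · rw [ninc_ne _ _ _ h1]; simp [h1]; tauto

theorem Ctx.transport (h : Ctx inc S T t e z f w) {S1 : Set E} (hS : S1 ⊆ S) {x : V}
    {C : Set E} {F : E → Set E} (hF : Fam inc S1 T x C F)
    (hav : ∀ c ∈ C, e ∉ F c ∧ f ∉ F c) : Fam (ninc inc e t w) (S \ {f}) T x C F := by
  refine hF.transport fun c hc y hy => ⟨?_, hS (hF.sub c hc hy), ?_⟩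
  · rw [ninc_ne]; rintro rfl; exact (hav c hc).1 hy
  · rintro rfl; exact (hav c hc).2 hy

/-- If `w` is a terminal, the edge `e` becomes a direct link. -/
theorem Ctx.addE (h : Ctx inc S T t e z f w) {S1 : Set E} (hS : S1 ⊆ S) {F : E → Set E}
    (hF : Fam inc S1 T w (del inc S w \ {f}) F)
    (hav : ∀ c ∈ del inc S w \ {f}, e ∉ F c ∧ f ∉ F c) :
    Linkable (ninc inc e t w) (S \ {f}) T w := by
  classical
  have hF' := h.transport hS hF hav
  unfold Linkable
  rw [h.del_w]
  set C := del inc S w \ {f} with hC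
  have heC : e ∉ C := fun h' => (hav e h').1 (hF.mem e h')
  have hce : ∀ c ∈ C, c ≠ e := fun c hc h' => heC (h' ▸ hc)
  refine ⟨fun c => if c = e then {e} else F c, ?_, ?_, ?_, ?_, ?_, ?_⟩
  · rintro c (rfl | hc)
    · simp [h.he, h.hfe.symm]
    · simp only [hce c hc, if_false]; exact hF'.sub c hc
  · rintro c (rfl | hc)
    · simp
    · simp only [hce c hc, if_false]; exact hF'.mem c hc
  · rintro c (rfl | hc)
    · rw [ninc_self]; simp
    · exact hF'.inc_t c hc
  · rintro c (rfl | hc)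
    · intro y hy _; simpa using hy
    · simp only [hce c hc, if_false]; exact hF'.at_t c hc
  · rintro c (rfl | hc)
    · refine ⟨t, h.ht, h.hw.symm, ?_⟩
      simp only [if_true]
      exact Reach.single (e := c) rfl (by rw [ninc_self, Sym2.eq_swap])
    · simp only [hce c hc, if_false]; exact hF'.reach c hc
  · rintro c (rfl | hc) c' (rfl | hc') y
    · intros; rfl
    · simp only [hce c' hc', if_true, if_false]
      rintro rfl h'
      exact absurd h' (hav c' hc').1
    · simp only [hce c hc, if_true, if_false]
      rintro h' rfl
      exact absurd h' (hav c hc).1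
    · simp only [hce c hc, hce c' hc', if_false]; exact hF'.disj c hc c' hc' y

/-- (A): a terminal for which `e` is not essential stays linkable. -/
theorem Ctx.stepA (h : Ctx inc S T t e z f w) (hE : Eul inc S T) {x : V} (hx : x ∈ T)
    (hxt : x ≠ t) (hL : Linkable inc (S \ {e}) T x) :
    Linkable (ninc inc e t w) (S \ {f}) T x := by
  obtain ⟨F, hF⟩ := hL
  have hxz : x ≠ z := fun h' => h.hz (h' ▸ hx)
  have hd : del inc (S \ {e}) x = del inc S x := by
    ext y
    simp only [del, Set.mem_ofPred_eq, Set.mem_sdiff, Set.mem_singleton_iff]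
    by_cases h1 : y = e
    · subst h1; rw [h.hinc]; simp [hxt, hxz]
    · simp [h1]
  rw [hd] at hF
  have heF : ∀ c ∈ del inc S x, e ∉ F c := fun c hc h' => (hF.sub c hc h').2 rfl
  by_cases hxw : x = w
  · subst hxw
    refine h.addE (S1 := S \ {e}) Set.sdiff_subset (hF.subset Set.sdiff_subset) ?_
    intro c hc
    refine ⟨heF c hc.1, fun h' => hc.2 ?_⟩
    exact (hF.at_t c hc.1 f h' (by rw [h.hfinc]; simp)).symm
  · have hd' := h.del_ne hx hxw
    by_cases hff : ∃ c ∈ del inc S x, f ∈ F c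
    · obtain ⟨c, hc, hfc⟩ := hff
      refine parityP (h.eul hE) (g := c) (hd' ▸ hc) (h.hl' c) (F0 := F) ?_
      rw [hd']
      refine h.transport (S1 := S \ {e}) Set.sdiff_subset (hF.subset Set.sdiff_subset) ?_
      intro c' hc'
      exact ⟨heF c' hc'.1, fun h' => hc'.2 (hF.disj c' hc'.1 c hc f h' hfc)⟩
    · push Not at hff
      refine ⟨F, ?_⟩
      rw [hd']
      exact h.transport (S1 := S \ {e}) Set.sdiff_subset hF fun c hc => ⟨heF c hc, hff c hc⟩

/-- (B): following the path of `t`. -/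
theorem Ctx.stepB (h : Ctx inc S T t e z f w) {F : E → Set E}
    (hF : Fam inc S T t (del inc S t) F) {s : V} (hs : s ∈ T) (hst : s ≠ t)
    (hfF : f ∈ F e) (hr : Reach inc (F e \ {e, f}) w s) :
    Fam (ninc inc e t w) (S \ {f}) T t (del (ninc inc e t w) (S \ {f}) t)
      (fun c => F c \ {f}) := by
  rw [h.del_ne h.ht h.hw.symm]
  have heD : e ∈ del inc S t := ⟨h.he, by rw [h.hinc]; simp⟩
  have hfD : ∀ c ∈ del inc S t, c ≠ f := by
    rintro c hc rfl
    have := hc.2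
    rw [h.hfinc] at this
    rcases Sym2.mem_iff.1 this with h' | h'
    · exact h.zt h'.symm
    · exact h.hw h'.symm
  have hmem : ∀ x, t ∈ ninc inc e t w x ↔ t ∈ inc x := by
    intro x
    by_cases hx : x = e
    · subst hx; rw [ninc_self, h.hinc]; simp
    · rw [ninc_ne _ _ _ hx]
  refine ⟨?_, ?_, ?_, ?_, ?_, ?_⟩
  · intro c hc x hx
    exact ⟨hF.sub c hc hx.1, hx.2⟩
  · intro c hc
    exact ⟨hF.mem c hc, hfD c hc⟩
  · intro c hc
    rw [hmem]; exact hc.2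
  · intro c hc x hx ht
    rw [hmem] at ht
    exact hF.at_t c hc x hx.1 ht
  · intro c hc
    by_cases hce : c = e
    · subst hce
      refine ⟨s, hs, hst, ?_⟩
      refine Reach.trans (Reach.single (e := c) ⟨hF.mem c hc, hfD c hc⟩ (ninc_self inc c t w)) ?_
      refine Reach.mono (F := F c \ {c, f}) ?_ (hr.congr ?_)
      · intro x hx; exact ⟨hx.1, fun h' => hx.2 (Or.inr h')⟩
      · intro x hx
        rw [ninc_ne]; exact fun h' => hx.2 (Or.inl h')
    · obtain ⟨s', h1, h2, h3⟩ := hF.reach c hc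
      refine ⟨s', h1, h2, ?_⟩
      refine (h3.congr ?_).mono ?_
      · intro x hx
        rw [ninc_ne]; rintro rfl
        exact hce (hF.disj c hc x heD x hx (hF.mem x heD))
      · intro x hx
        refine ⟨hx, ?_⟩
        rintro rfl
        exact hce (hF.disj c hc e heD x hx hfF)
  · intro c hc c' hc' x hx hx'
    exact hF.disj c hc c' hc' x hx.1 hx'.1

end

/-- The data attached to an essential edge. -/
structure Ess (inc : E → Sym2 V) (S : Set E) (T : Set V) (e : E) (t' : V) (Φ : E → Set E)
    (c : E) (X : Set V) (I O : E → Set E) : Prop where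
  tight : Tight inc (S \ {e}) T t' X I O
  sub : ∀ h ∈ S \ {e}, h ∈ cutI inc X → ∀ ε ∈ I h, ∃ c' ∈ del inc S t', c' ≠ c ∧ ε ∈ Φ c'
  inX : ∀ v, Reach inc (Φ c \ {e}) t' v → v ∈ X

theorem del_sdiff {inc : E → Sym2 V} {S : Set E} {e : E} {x : V} (h : x ∉ inc e) :
    del inc (S \ {e}) x = del inc S x := by
  ext y
  simp only [del, Set.mem_ofPred_eq, Set.mem_sdiff, Set.mem_singleton_iff]
  constructor
  · rintro ⟨⟨h1, h2⟩, h3⟩; exact ⟨h1, h3⟩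
  · rintro ⟨h1, h3⟩
    exact ⟨⟨h1, fun h' => h (h' ▸ h3)⟩, h3⟩

theorem essential {inc : E → Sym2 V} (hl : ∀ e, ¬ (inc e).IsDiag) {S : Set E} {T : Set V}
    {t t' z : V} {e : E} (ht : t ∈ T) (htt : t' ≠ t) (hinc : inc e = s(t, z))
    (hzt : z ≠ t') {Φ : E → Set E} (hΦ : Fam inc S T t' (del inc S t') Φ)
    (hn : ¬ Linkable inc (S \ {e}) T t') :
    ∃ c ∈ del inc S t', e ∈ Φ c ∧ Reach inc (Φ c \ {e}) t' z ∧ ∃ X I O,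
      Ess inc S T e t' Φ c X I O := by
  have hte : t' ∉ inc e := by
    rw [hinc]; intro h
    rcases Sym2.mem_iff.1 h with h | h
    · exact htt h
    · exact hzt h.symm
  have hd := del_sdiff (S := S) hte
  have hce : ∀ c ∈ del inc S t', c ≠ e := fun c hc h => hte (h ▸ hc.2)
  have h1 : ∃ c ∈ del inc S t', e ∈ Φ c := by
    by_contra hno
    push Not at hno
    apply hn
    refine ⟨Φ, ?_⟩
    rw [hd]
    exact hΦ.transport fun c hc x hx => ⟨rfl, hΦ.sub c hc hx, fun h => hno c hc (h ▸ hx)⟩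
  obtain ⟨c, hc, hec⟩ := h1
  have huniq : ∀ c' ∈ del inc S t', c' ≠ c → e ∉ Φ c' := fun c' hc' hne h =>
    hne (hΦ.disj c' hc' c hc e h hec)
  -- general observation: a set system avoiding `e`
  have hno : ∀ s ∈ T, s ≠ t' → ¬ Reach inc (Φ c \ {e}) t' s := by
    intro s hs hst hr
    apply hn
    refine ⟨fun c => Φ c \ {e}, ?_⟩
    rw [hd]
    refine ⟨?_, ?_, ?_, ?_, ?_, ?_⟩
    · exact fun c hc x hx => ⟨hΦ.sub c hc hx.1, hx.2⟩
    · exact fun c hc => ⟨hΦ.mem c hc, hce c hc⟩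
    · exact hΦ.inc_t
    · exact fun c hc x hx => hΦ.at_t c hc x hx.1
    · intro c' hc'
      by_cases h : c' = c
      · subst h; exact ⟨s, hs, hst, hr⟩
      · obtain ⟨s', h1, h2, h3⟩ := hΦ.reach c' hc'
        refine ⟨s', h1, h2, Reach.mono (F := Φ c') (F' := Φ c' \ {e}) (fun x hx => ⟨hx, fun hxe => ?_⟩) h3⟩
        have hxe : x = e := hxe
        exact huniq c' hc' h (hxe ▸ hx)
    · exact fun c hc c' hc' x hx hx' => hΦ.disj c hc c' hc' x hx.1 hx'.1
  have hz : Reach inc (Φ c \ {e}) t' z := by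
    obtain ⟨s, hs, hst, hr⟩ := hΦ.reach c hc
    rcases hr.avoid hinc with h | h | h
    · exact absurd h (hno s hs hst)
    · exact absurd h (hno t ht htt.symm)
    · exact h
  refine ⟨c, hc, hec, hz, ?_⟩
  have hF1 : Fam inc (S \ {e}) T t' (del inc S t' \ {c}) Φ := by
    refine (hΦ.subset Set.sdiff_subset).transport fun c' hc' x hx => ⟨rfl, ?_, ?_⟩
    · exact hΦ.sub c' hc'.1 hx
    · rintro rfl; exact huniq c' hc'.1 hc'.2 hx
  rcases maxflow hl hF1 with ⟨g, hg, hgC, F', hF'⟩ | ⟨X, I, O, hT, hI⟩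
  · exfalso
    apply hn
    rw [hd] at hg
    have hgc : g = c := by
      by_contra h; exact hgC ⟨hg, h⟩
    subst hgc
    refine ⟨F', ?_⟩
    rw [hd]
    rw [Set.insert_sdiff_singleton, Set.insert_eq_of_mem hg] at hF'
    exact hF'
  · refine ⟨X, I, O, hT, ?_, ?_⟩
    · intro h hS hcut ε hε
      obtain ⟨c', hc', h'⟩ := hI h hS hcut ε hε
      exact ⟨c', hc'.1, hc'.2, h'⟩
    · intro v hv
      by_contra hvX
      apply hn
      unfold Linkable
      rw [hd]
      refine combine hT (J := fun c => (Φ c \ {e}) ∩ touch inc X) ?_ ?_ hΦ.inc_t ?_ ?_ ?_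
      · exact fun c hc x hx => ⟨⟨hΦ.sub c hc hx.1.1, hx.1.2⟩, hx.2⟩
      · exact fun c hc => ⟨⟨hΦ.mem c hc, hce c hc⟩, t', hc.2, hT.tmem⟩
      · exact fun c hc x hx => hΦ.at_t c hc x hx.1.1
      · intro c' hc'
        by_cases h : c' = c
        · subst h; exact hv.exit_touch hT.tmem hvX
        · obtain ⟨s', h1, h2, h3⟩ := hΦ.reach c' hc'
          obtain ⟨y, hy, hr⟩ := h3.exit_touch hT.tmem (hT.tdisj s' h1 h2)
          refine ⟨y, hy, Reach.mono (F' := (Φ c' \ {e}) ∩ touch inc X)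
            (fun x hx => ⟨⟨hx.1, fun hxe => ?_⟩, hx.2⟩) hr⟩
          have hxe : x = e := hxe
          exact huniq c' hc' h (hxe ▸ hx.1)
      · exact fun c hc c' hc' x hx hx' => hΦ.disj c hc c' hc' x hx.1.1 hx'.1.1

/-- (D): an edge is essential for at most one other terminal. -/
theorem essential_unique {inc : E → Sym2 V} (hl : ∀ e, ¬ (inc e).IsDiag) {S : Set E} {T : Set V}
    {t t' t'' z : V} {e : E} (ht : t ∈ T) (ht' : t' ∈ T) (ht'' : t'' ∈ T) (htt : t' ≠ t)
    (htt2 : t'' ≠ t) (hne : t' ≠ t'') (hinc : inc e = s(t, z)) (hz : z ∉ T)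
    (hL1 : Linkable inc S T t') (hL2 : Linkable inc S T t'')
    (hn1 : ¬ Linkable inc (S \ {e}) T t') (hn2 : ¬ Linkable inc (S \ {e}) T t'') : False := by
  obtain ⟨Φ, hΦ⟩ := hL1
  obtain ⟨Ψ, hΨ⟩ := hL2
  have hz1 : z ≠ t' := fun h => hz (h ▸ ht')
  have hz2 : z ≠ t'' := fun h => hz (h ▸ ht'')
  obtain ⟨c, hc, hec, hr, X, I, O, hX⟩ := essential hl ht htt hinc hz1 hΦ hn1
  obtain ⟨c2, hc2, hec2, hr2, Y, I2, O2, hY⟩ := essential hl ht htt2 hinc hz2 hΨ hn2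
  have hzY : z ∈ Y := hY.inX z hr2
  apply hn1
  have hte : t' ∉ inc e := by
    rw [hinc]; intro h
    rcases Sym2.mem_iff.1 h with h | h
    · exact htt h
    · exact hz1 h.symm
  have heT : e ∉ touch inc (X \ Y) := by
    rintro ⟨v, hv, hvX, hvY⟩
    rw [hinc] at hv
    rcases Sym2.mem_iff.1 hv with rfl | rfl
    · exact hX.tight.tdisj _ ht htt.symm hvX
    · exact hvY hzY
  unfold Linkable
  rw [del_sdiff hte]
  have htY : t' ∉ Y := hY.tight.tdisj t' ht' hne
  have hh : ∀ c ∈ del inc S t', ∀ h ∈ Φ c ∩ touch inc (X \ Y), h ∈ S \ {e} := fun c hc h hh =>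
    ⟨hΦ.sub c hc hh.1, fun h' => heT (h' ▸ hh.2)⟩
  refine reroute hX.tight (B := Y) (t1 := t'') htY (hX.tight.tdisj t'' ht'' hne.symm)
    (F := fun c => Φ c ∩ touch inc (X \ Y)) (K := I2) ?_ ?_ hΦ.inc_t ?_ ?_ ?_ ?_ ?_ ?_
  · exact fun c hc x hx => ⟨hh c hc x hx, hx.2⟩
  · exact fun c hc => ⟨hΦ.mem c hc, t', hc.2, hX.tight.tmem, htY⟩
  · exact fun c hc x hx => hΦ.at_t c hc x hx.1
  · intro c hc
    obtain ⟨s, h1, h2, h3⟩ := hΦ.reach c hc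
    exact h3.exit_touch ⟨hX.tight.tmem, htY⟩ (fun h => hX.tight.tdisj s h1 h2 h.1)
  · exact fun c hc c' hc' x hx hx' => hΦ.disj c hc c' hc' x hx.1 hx'.1
  · exact fun c hc h h' hcut => hY.tight.inI h (hh c hc h h') hcut
  · exact fun c hc h h' => hY.tight.reachI h (hh c hc h h')
  · exact fun c hc h h' hcut c' hc' h2 h2' hcut2 =>
      hY.tight.disjI h (hh c hc h h') hcut h2 (hh c' hc' h2 h2') hcut2
end LC

namespace LC

variable {V : Type u} {E : Type v}

theorem isW_congr {inc inc' : E → Sym2 V} {l : List (E × V)} {w : V} :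
    ∀ {u : V}, (∀ d ∈ l, inc d.1 = inc' d.1) → IsW inc u l w → IsW inc' u l w := by
  induction l with
  | nil => intro u _ h; exact h
  | cons d l ih =>
    intro u hd h
    refine ⟨?_, ih (fun d' hd' => hd d' (by simp [hd'])) h.2⟩
    rw [← hd d (by simp)]
    exact h.1

section
variable {inc : E → Sym2 V} {S : Set E} {T : Set V} {t : V} {e : E} {z : V} {f : E} {w : V}

/-- (C), terminal case. -/
theorem Ctx.stepC_w (h : Ctx inc S T t e z f w) {Φ : E → Set E}
    (hΦ : Fam inc S T w (del inc S w) Φ) {c : E} (hc : c ∈ del inc S w) (hec : e ∈ Φ c)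
    (hfc : f ∈ Φ c) : Linkable (ninc inc e t w) (S \ {f}) T w := by
  have hfw : w ∈ inc f := by rw [h.hfinc]; simp
  have hcf : f = c := hΦ.at_t c hc f hfc hfw
  refine h.addE (S1 := S) subset_rfl (hΦ.subset Set.sdiff_subset) ?_
  intro c' hc'
  have hne : c' ≠ c := fun h' => hc'.2 (h'.trans hcf.symm)
  exact ⟨fun h' => hne (hΦ.disj c' hc'.1 c hc e h' hec),
    fun h' => hne (hΦ.disj c' hc'.1 c hc f h' hfc)⟩

/-- (C), nonterminal case. -/
theorem Ctx.stepC (h : Ctx inc S T t e z f w) {t' : V} (ht' : t' ∈ T) (htt : t' ≠ t)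
    (hwt : w ≠ t') {Φ : E → Set E}
    (hΦ : Fam inc S T t' (del inc S t') Φ) {c : E} (hc : c ∈ del inc S t') (hec : e ∈ Φ c)
    (hfc : f ∈ Φ c) (hr : Reach inc (Φ c \ {e, f}) w t') :
    Fam (ninc inc e t w) (S \ {f}) T t' (del (ninc inc e t w) (S \ {f}) t')
      (fun c => Φ c \ {f}) := by
  have htz : t' ≠ z := fun h' => h.hz (h' ▸ ht')
  rw [h.del_ne ht' hwt.symm]
  have hfD : ∀ c ∈ del inc S t', c ≠ f := by
    rintro c hc rfl
    have := hc.2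
    rw [h.hfinc] at this
    rcases Sym2.mem_iff.1 this with h' | h'
    · exact htz h'
    · exact hwt h'.symm
  have hmem : ∀ x, t' ∈ ninc inc e t w x ↔ t' ∈ inc x := by
    intro x
    by_cases hx : x = e
    · subst hx; rw [ninc_self, h.hinc]; simp [htt, htz, hwt.symm]
    · rw [ninc_ne _ _ _ hx]
  refine ⟨?_, ?_, ?_, ?_, ?_, ?_⟩
  · intro c hc x hx
    exact ⟨hΦ.sub c hc hx.1, hx.2⟩
  · intro c hc
    exact ⟨hΦ.mem c hc, hfD c hc⟩
  · intro c hc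
    rw [hmem]; exact hc.2
  · intro c hc x hx ht
    rw [hmem] at ht
    exact hΦ.at_t c hc x hx.1 ht
  · intro c' hc'
    by_cases hce : c' = c
    · subst hce
      refine ⟨t, h.ht, htt.symm, ?_⟩
      refine Reach.trans (v := w) ?_ (Reach.single (e := e) ⟨hec, h.hfe.symm⟩ ?_)
      · refine Reach.mono (F := Φ c' \ {e, f}) ?_ (hr.symm.congr ?_)
        · intro x hx; exact ⟨hx.1, fun h' => hx.2 (Or.inr h')⟩
        · intro x hx
          rw [ninc_ne]; exact fun h' => hx.2 (Or.inl h')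
      · rw [ninc_self, Sym2.eq_swap]
    · obtain ⟨s', h1, h2, h3⟩ := hΦ.reach c' hc'
      refine ⟨s', h1, h2, ?_⟩
      refine (h3.congr ?_).mono ?_
      · intro x hx
        rw [ninc_ne]; rintro rfl
        exact hce (hΦ.disj c' hc' c hc x hx hec)
      · intro x hx
        refine ⟨hx, ?_⟩
        rintro rfl
        exact hce (hΦ.disj c' hc' c hc x hx hfc)
  · intro c hc c' hc' x hx hx'
    exact hΦ.disj c hc c' hc' x hx.1 hx'.1

/-- essential edges stay essential -/
theorem Ctx.persist (h : Ctx inc S T t e z f w) {t' : V} (ht' : t' ∈ T) (htt : t' ≠ t)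
    (hwt : w ≠ t') (hn : ¬ Linkable inc (S \ {e}) T t') :
    ¬ Linkable (ninc inc e t w) ((S \ {f}) \ {e}) T t' := by
  have htz : t' ≠ z := fun h' => h.hz (h' ▸ ht')
  rintro ⟨F, hF⟩
  apply hn
  have h1 : t' ∉ inc e := by rw [h.hinc]; simp [htt, htz]
  have h2 : t' ∉ ninc inc e t w e := by rw [ninc_self]; simp [htt, hwt.symm]
  rw [del_sdiff h2, h.del_ne ht' hwt.symm] at hF
  refine ⟨F, ?_⟩
  rw [del_sdiff h1]
  refine hF.transport fun c hc x hx => ?_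
  have := hF.sub c hc hx
  exact ⟨ninc_ne _ _ _ this.2, this.1.1, this.2⟩

/-- (E): `t` stays linkable when following the path of `t'`. -/
theorem Ctx.stepE (h : Ctx inc S T t e z f w) (hE : Eul inc S T) {t' : V} (ht' : t' ∈ T)
    (htt : t' ≠ t) {Φ : E → Set E} {c : E} {X : Set V} {I O : E → Set E}
    (hΦ : Fam inc S T t' (del inc S t') Φ) (hc : c ∈ del inc S t')
    (hfc : f ∈ Φ c) (hX : Ess inc S T e t' Φ c X I O) (hzX : z ∈ X) (hwX : w ∈ X)
    (hL : Linkable inc S T t) : Linkable (ninc inc e t w) (S \ {f}) T t := by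
  obtain ⟨F, hF⟩ := hL
  have hd := h.del_ne h.ht h.hw.symm
  have heD : e ∈ del inc S t := ⟨h.he, by rw [h.hinc]; simp⟩
  have heF : ∀ c ∈ del inc S t, c ≠ e → e ∉ F c := fun c hc hne h' =>
    hne (hF.disj c hc e heD e h' (hF.mem e heD))
  set C0 : Set E := {c | c ∈ del inc S t ∧ c ≠ e ∧ f ∉ F c} with hC0
  have hC0d : C0 ⊆ del inc S t := fun c hc => hc.1
  have hF0 : Fam (ninc inc e t w) (S \ {f}) T t C0 F :=
    h.transport (S1 := S) subset_rfl (hF.subset hC0d) fun c hc => ⟨heF c hc.1 hc.2.1, hc.2.2⟩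
  have hfin : ∃ c1, del (ninc inc e t w) (S \ {f}) t \ C0 ⊆ {e, c1} := by
    rw [hd]
    by_cases hff : ∃ c1 ∈ del inc S t, f ∈ F c1
    · obtain ⟨c1, hc1, hfc1⟩ := hff
      refine ⟨c1, fun x hx => ?_⟩
      by_contra hne
      simp only [Set.mem_insert_iff, Set.mem_singleton_iff, not_or] at hne
      exact hx.2 ⟨hx.1, hne.1, fun h' => hne.2 (hF.disj x hx.1 c1 hc1 f h' hfc1)⟩
    · push Not at hff
      refine ⟨e, fun x hx => ?_⟩
      by_contra hne
      simp only [Set.mem_insert_iff, Set.mem_singleton_iff, not_or] at hne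
      exact hx.2 ⟨hx.1, hne.1, hff x hx.1⟩
  obtain ⟨c1, hc1⟩ := hfin
  rcases linkable_or_tight h.hl' 2 hF0 (by rw [hd]; exact hC0d)
    ((Set.toFinite _).subset hc1)
    ((Set.ncard_le_ncard hc1 (Set.toFinite _)).trans ((Set.ncard_insert_le _ _).trans (by simp))) with hL | hA
  · exact hL
  obtain ⟨A, IA, OA, hA⟩ := hA
  have htX : t ∉ X := hX.tight.tdisj t h.ht htt.symm
  have ht'A : t' ∉ A := hA.tdisj t' ht' htt
  have hfX : f ∉ touch (ninc inc e t w) (A \ X) := by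
    rintro ⟨v, hv, -, hvX⟩
    rw [ninc_ne _ _ _ h.hfe, h.hfinc] at hv
    rcases Sym2.mem_iff.1 hv with rfl | rfl <;> exact hvX ‹_›
  have heD' : e ∈ del (ninc inc e t w) (S \ {f}) t := by rw [hd]; exact heD
  suffices hsuf : ∃ F', Fam (ninc inc e t w) (S \ {f}) T t
      (del (ninc inc e t w) (S \ {f}) t \ {e}) F' by
    obtain ⟨F', hF'⟩ := hsuf
    exact parityP (h.eul hE) heD' (h.hl' e) hF'
  rw [hd]
  have hne : ∀ c ∈ del inc S t \ {e}, ∀ x ∈ F c, x ≠ e := by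
    rintro c hc x hx rfl
    exact heF c hc.1 hc.2 hx
  have hcut : ∀ x, x ≠ e → x ∈ cutI (ninc inc e t w) X → x ∈ cutI inc X := by
    rintro x hx ⟨a, b, hab, h'⟩
    rw [ninc_ne _ _ _ hx] at hab
    exact ⟨a, b, hab, h'⟩
  have hS : ∀ c ∈ del inc S t \ {e}, ∀ x ∈ F c, x ∈ S \ {e} := fun c hc x hx =>
    ⟨hF.sub c hc.1 hx, hne c hc x hx⟩
  have hIe : ∀ x ∈ S \ {e}, x ∈ cutI inc X → ∀ ε ∈ I x, ε ≠ e := fun x hx hxc ε hε =>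
    (hX.tight.inI x hx hxc ε hε).1.2
  refine reroute hA (B := X) (t1 := t') htX ht'A
    (F := fun c => F c ∩ touch (ninc inc e t w) (A \ X)) (K := I) ?_ ?_ ?_ ?_ ?_ ?_ ?_ ?_ ?_
  · intro c hc x hx
    exact ⟨⟨hF.sub c hc.1 hx.1, fun h' => hfX (h' ▸ hx.2)⟩, hx.2⟩
  · intro c hc
    refine ⟨hF.mem c hc.1, t, ?_, hA.tmem, htX⟩
    rw [ninc_ne _ _ _ hc.2]
    exact hc.1.2
  · intro c hc
    rw [ninc_ne _ _ _ hc.2]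
    exact hc.1.2
  · intro c hc x hx hxt
    rw [ninc_ne _ _ _ (hne c hc x hx.1)] at hxt
    exact hF.at_t c hc.1 x hx.1 hxt
  · intro c hc
    obtain ⟨s, h1, h2, h3⟩ := hF.reach c hc.1
    have h4 : Reach (ninc inc e t w) (F c) t s :=
      h3.congr fun x hx => (ninc_ne _ _ _ (hne c hc x hx)).symm
    exact h4.exit_touch ⟨hA.tmem, htX⟩ (fun h' => hA.tdisj s h1 h2 h'.1)
  · exact fun c hc c' hc' x hx hx' => hF.disj c hc.1 c' hc'.1 x hx.1 hx'.1
  · intro d hd x hx hxc ε hε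
    have hxc' := hcut x (hne d hd x hx.1) hxc
    have hxS := hS d hd x hx.1
    have hεe := hIe x hxS hxc' ε hε
    refine ⟨⟨(hX.tight.inI x hxS hxc' ε hε).1.1, ?_⟩, ?_⟩
    · intro hεf
      have hεf : ε = f := hεf
      obtain ⟨c', hc', hcc, hε'⟩ := hX.sub x hxS hxc' ε hε
      exact hcc (hΦ.disj c' hc' c hc f (hεf ▸ hε') hfc)
    · rw [ninc_ne _ _ _ hεe]
      exact (hX.tight.inI x hxS hxc' ε hε).2
  · intro d hd x hx a b hab ha hb
    have hxS := hS d hd x hx.1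
    rw [ninc_ne _ _ _ hxS.2] at hab
    exact (hX.tight.reachI x hxS a b hab ha hb).congr fun ε hε =>
      (ninc_ne _ _ _ (hIe x hxS ⟨a, b, hab, ha, hb⟩ ε hε)).symm
  · intro d hd x hx hxc d' hd' x' hx' hxc' ε
    have hxS := hS d hd x hx.1
    have hxS' := hS d' hd' x' hx'.1
    exact hX.tight.disjI x hxS (hcut x hxS.2 hxc) x' hxS' (hcut x' hxS'.2 hxc') ε

end

/-- The conclusion of the main induction. -/
def Good (inc : E → Sym2 V) (S : Set E) (T : Set V) (t : V) (e : E) : Prop :=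
  ∃ (Z : Set E) (s : V) (h : E), Z ⊆ S ∧ e ∈ Z ∧ s ∈ T ∧ s ≠ t ∧ Reach inc Z t s ∧
    (∀ x ∈ Z, t ∈ inc x → x = e) ∧ (∀ x ∈ Z, s ∈ inc x → x = h) ∧
    (∀ x ∈ Z, ∀ y ∈ T, y ≠ t → y ≠ s → y ∉ inc x) ∧
    ∀ x ∈ T, Linkable inc (S \ Z) T x

theorem Ctx.lift {inc : E → Sym2 V} {S : Set E} {T : Set V} {t : V} {e : E} {z : V} {f : E} {w : V}
    (hc : Ctx inc S T t e z f w) (hG : Good (ninc inc e t w) (S \ {f}) T t e) :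
    Good inc S T t e := by
  obtain ⟨Z, s, h, hZS, heZ, hs, hst, hr, hZt, hZs, hZo, hL⟩ := hG
  have hzT : ∀ y ∈ T, y ≠ z := fun y hy h' => hc.hz (h' ▸ hy)
  have hfne : ∀ y ∈ T, y ∈ inc f → y = w := by
    intro y hy h'
    rw [hc.hfinc] at h'
    rcases Sym2.mem_iff.1 h' with h' | h'
    · exact absurd h' (hzT y hy)
    · exact h'
  have hene : ∀ y ∈ T, y ∈ inc e → y = t := by
    intro y hy h'
    rw [hc.hinc] at h'
    rcases Sym2.mem_iff.1 h' with h' | h'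
    · exact h'
    · exact absurd h' (hzT y hy)
  have hwe : w ∈ ninc inc e t w e := by rw [ninc_self]; simp
  have hmem : ∀ y ∈ T, y ≠ t → ∀ x, y ∈ inc x → x ≠ e ∧ y ∈ ninc inc e t w x := by
    intro y hy hyt x hx
    have : x ≠ e := fun h' => hyt (hene y hy (h' ▸ hx))
    exact ⟨this, by rwa [ninc_ne _ _ _ this]⟩
  obtain ⟨h2, hh2⟩ : ∃ h2, ∀ x ∈ insert f Z, s ∈ inc x → x = h2 := by
    by_cases hws : w = s
    · refine ⟨f, ?_⟩
      rintro x (rfl | hx) hsx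
      · rfl
      · have h1 := hZs e heZ (hws ▸ hwe)
        obtain ⟨h3, h4⟩ := hmem s hs hst x hsx
        exact absurd ((hZs x hx h4).trans h1.symm) h3
    · refine ⟨h, ?_⟩
      rintro x (rfl | hx) hsx
      · exact absurd (hfne s hs hsx).symm hws
      · exact hZs x hx (hmem s hs hst x hsx).2
  refine ⟨insert f Z, s, h2, ?_, Or.inr heZ, hs, hst, ?_, ?_, hh2, ?_, ?_⟩
  · exact Set.insert_subset hc.hf (hZS.trans Set.sdiff_subset)
  · clear hh2 hst hs hZs hZo hL
    induction hr with
    | refl => exact Reach.refl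
    | tail _ h' ih =>
      obtain ⟨x, hx, hxi⟩ := h'
      refine ih.trans ?_
      by_cases hxe : x = e
      · subst hxe
        have hbase : Reach inc (insert f Z) t w :=
          (Reach.single (e := x) (Or.inr hx) hc.hinc).trans (Reach.single (e := f) (Or.inl rfl) hc.hfinc)
        rw [ninc_self, Sym2.eq_iff] at hxi
        rcases hxi with ⟨rfl, rfl⟩ | ⟨rfl, rfl⟩
        · exact hbase
        · exact hbase.symm
      · rw [ninc_ne _ _ _ hxe] at hxi
        exact Reach.single (e := x) (Or.inr hx) hxi
  · rintro x (rfl | hx) htx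
    · exact absurd (hfne t hc.ht htx).symm hc.hw
    · by_cases hxe : x = e
      · exact hxe
      · exact hZt x hx (by rwa [ninc_ne _ _ _ hxe])
  · rintro x (rfl | hx) y hy hyt hys hyx
    · have := hfne y hy hyx
      subst this
      exact hZo e heZ y hy hyt hys hwe
    · exact hZo x hx y hy hyt hys (hmem y hy hyt x hyx).2
  · intro x hx
    obtain ⟨F, hF⟩ := hL x hx
    have hSS : (S \ {f}) \ Z = S \ insert f Z := by
      ext y; simp only [Set.mem_sdiff, Set.mem_singleton_iff, Set.mem_insert_iff]; tauto
    have hne : ∀ y ∈ (S \ {f}) \ Z, y ≠ e := fun y hy h' => hy.2 (h' ▸ heZ)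
    have hd : del (ninc inc e t w) ((S \ {f}) \ Z) x = del inc ((S \ {f}) \ Z) x := by
      ext y
      constructor
      · rintro ⟨h1, h2⟩
        exact ⟨h1, by rwa [ninc_ne _ _ _ (hne y h1)] at h2⟩
      · rintro ⟨h1, h2⟩
        exact ⟨h1, by rwa [ninc_ne _ _ _ (hne y h1)]⟩
    rw [hd] at hF
    rw [← hSS]
    refine ⟨F, hF.transport fun c hc' y hy => ?_⟩
    have h1 := hF.sub c hc' hy
    exact ⟨ninc_ne _ _ _ (hne y h1), h1⟩

theorem base {inc : E → Sym2 V} {S : Set E} {T : Set V} {t : V} {e : E} {z : V}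
    (hl : ∀ x, ¬ (inc x).IsDiag) (ht : t ∈ T) (hz : z ∈ T) (he : e ∈ S) (hinc : inc e = s(t, z))
    (hL : ∀ x ∈ T, Linkable inc S T x) : Good inc S T t e := by
  have hzt : z ≠ t := by
    rintro rfl
    apply hl e; rw [hinc]; rfl
  refine ⟨{e}, z, e, by simpa using he, rfl, hz, hzt, Reach.single (e := e) rfl hinc,
    fun x hx _ => hx, fun x hx _ => hx, ?_, ?_⟩
  · rintro x hx y hy h1 h2 h3
    have hx : x = e := hx
    rw [hx, hinc] at h3
    rcases Sym2.mem_iff.1 h3 with h | h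
    · exact h1 h
    · exact h2 h
  · intro x hx
    obtain ⟨F, hF⟩ := hL x hx
    have hsub : ∀ c, c ∈ del inc (S \ {e}) x → c ∈ del inc S x := fun c hc => ⟨hc.1.1, hc.2⟩
    refine ⟨fun c => F c \ {e}, ?_, ?_, ?_, ?_, ?_, ?_⟩
    · exact fun c hc y hy => ⟨hF.sub c (hsub c hc) hy.1, hy.2⟩
    · exact fun c hc => ⟨hF.mem c (hsub c hc), hc.1.2⟩
    · exact fun c hc => hc.2
    · exact fun c hc y hy => hF.at_t c (hsub c hc) y hy.1
    · intro c hc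
      obtain ⟨s, h1, h2, h3⟩ := hF.reach c (hsub c hc)
      by_cases hxe : x ∈ inc e
      · refine ⟨s, h1, h2, Reach.mono (F := F c) (F' := F c \ {e}) ?_ h3⟩
        intro y hy
        refine ⟨hy, fun h' => ?_⟩
        have h' : y = e := h'
        exact hc.1.2 (hF.at_t c (hsub c hc) e (h' ▸ hy) hxe).symm
      · have hxt : t ≠ x := by rintro rfl; apply hxe; rw [hinc]; simp
        have hxz : z ≠ x := by rintro rfl; apply hxe; rw [hinc]; simp
        rcases h3.avoid hinc with h | h | h
        · exact ⟨s, h1, h2, h⟩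
        · exact ⟨t, ht, hxt, h⟩
        · exact ⟨z, hz, hxz, h⟩
    · exact fun c hc c' hc' y hy hy' => hF.disj c (hsub c hc) c' (hsub c' hc') y hy.1 hy'.1

theorem stage2 {T : Set V} {t : V} {e : E} (ht : t ∈ T) {t' : V} (ht' : t' ∈ T) (htt : t' ≠ t)
    (l : List (E × V)) :
    ∀ (inc : E → Sym2 V) (S : Set E) (z : V) (Φ : E → Set E) (c : E),
      (∀ x, ¬ (inc x).IsDiag) → Eul inc S T → (∀ x ∈ T, Linkable inc S T x) → e ∈ S →
      inc e = s(t, z) → z ∉ T → ¬ Linkable inc (S \ {e}) T t' →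
      Fam inc S T t' (del inc S t') Φ → c ∈ del inc S t' → e ∈ Φ c → IsW inc z l t' →
      (∀ d ∈ l, d.1 ∈ Φ c \ {e}) → (z :: l.map Prod.snd).Nodup → Good inc S T t e := by
  induction l with
  | nil =>
    intro inc S z Φ c _ _ _ _ _ hz _ _ _ _ hw
    exact absurd ((show z = t' from hw) ▸ ht') hz
  | cons d l ih =>
    obtain ⟨f, w⟩ := d
    intro inc S z Φ c hl hE hL he hinc hz hn hΦ hc hec hw hlΦ hnd
    have hfinc : inc f = s(z, w) := hw.1
    have hf := hlΦ (f, w) (by simp)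
    have hfS : f ∈ S := hΦ.sub c hc hf.1
    have hef : e ≠ f := fun h => hf.2 h.symm
    have hzt' : z ≠ t' := fun h => hz (h ▸ ht')
    obtain ⟨c2, hc2, hec2, hrz, X, I, O, hX⟩ := essential hl ht htt hinc hzt' hΦ hn
    have hcc : c2 = c := hΦ.disj c2 hc2 c hc e hec2 hec
    subst hcc
    have hnl : ∀ d ∈ l, d.1 ≠ f := by
      have := hw.edges_nodup hnd
      rw [List.map_cons, List.nodup_cons] at this
      intro d hd h
      exact this.1 (List.mem_map.2 ⟨d, hd, h⟩)
    have hr : Reach inc (Φ c2 \ {e, f}) w t' := by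
      refine hw.2.reach fun d hd => ?_
      have h1 := hlΦ d (by simp [hd])
      exact ⟨h1.1, by
        rintro (h2 | h2)
        · exact h1.2 h2
        · exact hnl d hd h2⟩
    have hwX : w ∈ X := hX.inX w (Reach.mono (F := Φ c2 \ {e, f}) (F' := Φ c2 \ {e})
      (fun x hx => ⟨hx.1, fun h => hx.2 (Or.inl h)⟩) hr.symm)
    have hzX : z ∈ X := hX.inX z hrz
    have hwt : w ≠ t := by
      rintro rfl
      exact hX.tight.tdisj w ht htt.symm hwX
    have ctx : Ctx inc S T t e z f w := ⟨hl, ht, he, hinc, hz, hfS, hf.2, hfinc, hwt⟩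
    apply ctx.lift
    have heS' : e ∈ S \ {f} := ⟨he, hef⟩
    have hothers : ∀ x ∈ T, x ≠ t' → Linkable (ninc inc e t w) (S \ {f}) T x := by
      intro x hx hxt'
      by_cases hxt : x = t
      · subst hxt
        exact ctx.stepE hE ht' htt hΦ hc2 hf.1 hX hzX hwX (hL x hx)
      · apply ctx.stepA hE hx hxt
        by_contra hno
        exact essential_unique hl ht hx ht' hxt htt hxt' hinc hz (hL x hx) (hL t' ht') hno hn
    by_cases hwT : w ∈ T
    · have hwt' : w = t' := by
        by_contra h
        exact hX.tight.tdisj w hwT h hwX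
      subst hwt'
      refine base ctx.hl' ht hwT heS' (ninc_self _ _ _ _) fun x hx => ?_
      by_cases hxw : x = w
      · subst hxw
        exact ctx.stepC_w hΦ hc2 hec hf.1
      · exact hothers x hx hxw
    · have hwt' : w ≠ t' := fun h => hwT (h ▸ ht')
      have hΦ' := ctx.stepC ht' htt hwt' hΦ hc2 hec hf.1 hr
      refine ih (ninc inc e t w) (S \ {f}) w (fun c => Φ c \ {f}) c2 ctx.hl' (ctx.eul hE) ?_ heS'
        (ninc_self _ _ _ _) hwT (ctx.persist ht' htt hwt' hn) hΦ' ?_ ⟨hec, hef⟩ ?_ ?_ ?_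
      · intro x hx
        by_cases hxt' : x = t'
        · subst hxt'; exact ⟨_, hΦ'⟩
        · exact hothers x hx hxt'
      · rw [ctx.del_ne ht' hwt'.symm]; exact hc2
      · have hw2 := hw.2
        exact isW_congr (fun d hd => (ninc_ne _ _ _ (hlΦ d (by simp [hd])).2).symm) hw2
      · intro d hd
        have h1 := hlΦ d (by simp [hd])
        exact ⟨⟨h1.1, hnl d hd⟩, h1.2⟩
      · exact (List.nodup_cons.1 hnd).2

theorem stage1 {T : Set V} {t : V} {e : E} (ht : t ∈ T) {s : V} (hs : s ∈ T) (hst : s ≠ t)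
    (l : List (E × V)) :
    ∀ (inc : E → Sym2 V) (S : Set E) (z : V) (F : E → Set E),
      (∀ x, ¬ (inc x).IsDiag) → Eul inc S T → (∀ x ∈ T, Linkable inc S T x) → e ∈ S →
      inc e = s(t, z) → Fam inc S T t (del inc S t) F → IsW inc z l s →
      (∀ d ∈ l, d.1 ∈ F e \ {e}) → (z :: l.map Prod.snd).Nodup → Good inc S T t e := by
  induction l with
  | nil =>
    intro inc S z F hl hE hL he hinc _ hw _ _
    exact base hl ht ((show z = s from hw) ▸ hs) he hinc hL
  | cons d l ih =>
    obtain ⟨f, w⟩ := d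
    intro inc S z F hl hE hL he hinc hF hw hlF hnd
    by_cases hz : z ∈ T
    · exact base hl ht hz he hinc hL
    by_cases hess : ∃ t' ∈ T, t' ≠ t ∧ ¬ Linkable inc (S \ {e}) T t'
    · obtain ⟨t', ht', htt, hn⟩ := hess
      have hzt' : z ≠ t' := fun h => hz (h ▸ ht')
      obtain ⟨Φ, hΦ⟩ := hL t' ht'
      obtain ⟨c, hc, hec, hrz, -⟩ := essential hl ht htt hinc hzt' hΦ hn
      obtain ⟨l2, h1, h2, h3⟩ := hrz.symm.simple
      exact stage2 ht ht' htt l2 inc S z Φ c hl hE hL he hinc hz hn hΦ hc hec h1 h2 h3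
    · push Not at hess
      have heD : e ∈ del inc S t := ⟨he, by rw [hinc]; simp⟩
      have hfinc : inc f = s(z, w) := hw.1
      have hf := hlF (f, w) (by simp)
      have hfS : f ∈ S := hF.sub e heD hf.1
      have hef : e ≠ f := fun h => hf.2 h.symm
      have hwt : w ≠ t := by
        rintro rfl
        exact hf.2 (hF.at_t e heD f hf.1 (by rw [hfinc]; simp))
      have ctx : Ctx inc S T t e z f w := ⟨hl, ht, he, hinc, hz, hfS, hf.2, hfinc, hwt⟩
      have hnl : ∀ d ∈ l, d.1 ≠ f := by
        have := hw.edges_nodup hnd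
        rw [List.map_cons, List.nodup_cons] at this
        intro d hd h
        exact this.1 (List.mem_map.2 ⟨d, hd, h⟩)
      have hr : Reach inc (F e \ {e, f}) w s := by
        refine hw.2.reach fun d hd => ?_
        have h1 := hlF d (by simp [hd])
        exact ⟨h1.1, by
          rintro (h2 | h2)
          · exact h1.2 h2
          · exact hnl d hd h2⟩
      have hF' := ctx.stepB hF hs hst hf.1 hr
      apply ctx.lift
      refine ih (ninc inc e t w) (S \ {f}) w (fun c => F c \ {f}) ctx.hl' (ctx.eul hE) ?_
        ⟨he, hef⟩ (ninc_self _ _ _ _) hF' ?_ ?_ ?_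
      · intro x hx
        by_cases hxt : x = t
        · subst hxt; exact ⟨_, hF'⟩
        · exact ctx.stepA hE hx hxt (hess x hx hxt)
      · have hw2 := hw.2
        exact isW_congr (fun d hd => (ninc_ne _ _ _ (hlF d (by simp [hd])).2).symm) hw2
      · intro d hd
        have h1 := hlF d (by simp [hd])
        exact ⟨⟨h1.1, hnl d hd⟩, h1.2⟩
      · exact (List.nodup_cons.1 hnd).2

theorem main_good {inc : E → Sym2 V} {S : Set E} {T : Set V} {t : V} {e : E}
    (hl : ∀ x, ¬ (inc x).IsDiag) (hE : Eul inc S T) (hL : ∀ x ∈ T, Linkable inc S T x)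
    (ht : t ∈ T) (he : e ∈ del inc S t) : Good inc S T t e := by
  obtain ⟨F, hF⟩ := hL t ht
  obtain ⟨s, hs, hst, hr⟩ := hF.reach e he
  obtain ⟨z, l, hw, hlF, hnd⟩ := hr.pathList hst (hF.at_t e he)
  have hnd2 : (z :: l.map Prod.snd).Nodup := (List.nodup_cons.1 hnd).2
  refine stage1 ht hs hst l inc S z F hl hE hL he.1 hw.1 hF hw.2 ?_ hnd2
  intro d hd
  refine ⟨hlF d (by simp [hd]), fun h => ?_⟩
  have := hw.edges_nodup hnd
  rw [List.map_cons, List.nodup_cons] at this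
  exact this.1 (List.mem_map.2 ⟨d, hd, h⟩)
end LC


namespace LC

variable {V : Type u} {E : Type v}

theorem walk_toL {G : Multigraph V E} {a b : V} (p : G.Walk a b) :
    ∃ l, IsW G.inc a l b ∧ l.map Prod.fst = p.edges ∧ a :: l.map Prod.snd = p.support := by
  induction p with
  | nil v => exact ⟨[], rfl, rfl, rfl⟩
  | cons e he p ih =>
    rename_i x y z
    obtain ⟨l, h1, h2, h3⟩ := ih
    exact ⟨(e, y) :: l, ⟨he, h1⟩, by simp [Multigraph.Walk.edges, h2],
      by simp [Multigraph.Walk.support, h3]⟩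

theorem toWalk {G : Multigraph V E} {a b : V} {l : List (E × V)} (h : IsW G.inc a l b) :
    ∃ p : G.Walk a b, p.edges = l.map Prod.fst ∧ p.support = a :: l.map Prod.snd := by
  induction l generalizing a with
  | nil => cases h; exact ⟨.nil _, rfl, rfl⟩
  | cons d l ih =>
    obtain ⟨p, h1, h2⟩ := ih h.2
    exact ⟨.cons d.1 h.1 p, by simp [Multigraph.Walk.edges, h1],
      by simp [Multigraph.Walk.support, h2]⟩

theorem IsW.last_mem {inc : E → Sym2 V} {a b : V} {l : List (E × V)} (h : IsW inc a l b) :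
    b ∈ a :: l.map Prod.snd := by
  induction l generalizing a with
  | nil => cases h; simp
  | cons d l ih => exact List.mem_cons_of_mem _ (by simpa using ih h.2)

theorem IsW.closed_nil {inc : E → Sym2 V} {a : V} {l : List (E × V)} (h : IsW inc a l a)
    (hn : (a :: l.map Prod.snd).Nodup) : l = [] := by
  cases l with
  | nil => rfl
  | cons d l => exact absurd (by simpa using h.2.last_mem) (List.nodup_cons.1 hn).1

theorem IsW.last_unique {inc : E → Sym2 V} {a b : V} {l : List (E × V)} (h : IsW inc a l b)
    (hn : (a :: l.map Prod.snd).Nodup) {d d' : E × V} (hd : d ∈ l) (hd' : d' ∈ l)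
    (hb : b ∈ inc d.1) (hb' : b ∈ inc d'.1) : d.1 = d'.1 := by
  induction l generalizing a with
  | nil => simp at hd
  | cons c l ih =>
    have hn2 := List.nodup_cons.1 hn
    have key : b ∈ inc c.1 → l = [] := by
      intro hc
      rw [h.1] at hc
      have hm : b ∈ (c :: l).map Prod.snd := by simpa using h.2.last_mem
      rcases Sym2.mem_iff.1 hc with rfl | hc
      · exact absurd hm hn2.1
      · subst hc
        exact h.2.closed_nil hn2.2
    rcases List.mem_cons.1 hd with rfl | h1
    · have := key hb
      subst this
      simp at hd'
      rw [hd']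
    · rcases List.mem_cons.1 hd' with rfl | h2
      · have := key hb'
        subst this
        simp at h1
      · exact ih h.2 hn2.2 h1 h2

theorem IsW.last_edge {inc : E → Sym2 V} {a b : V} {l : List (E × V)} (h : IsW inc a l b)
    (hl : l ≠ []) : ∃ d ∈ l, b ∈ inc d.1 := by
  induction l generalizing a with
  | nil => exact absurd rfl hl
  | cons c l ih =>
    by_cases hl' : l = []
    · subst hl'
      refine ⟨c, by simp, ?_⟩
      have h2 : c.2 = b := h.2
      rw [h.1, h2]; simp
    · obtain ⟨d, hd, hb⟩ := ih h.2 hl'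
      exact ⟨d, List.mem_cons_of_mem _ hd, hb⟩

theorem IsW.first_unique {inc : E → Sym2 V} {a b : V} {l : List (E × V)} (h : IsW inc a l b)
    (hn : (a :: l.map Prod.snd).Nodup) {d d' : E × V} (hd : d ∈ l) (hd' : d' ∈ l)
    (hb : a ∈ inc d.1) (hb' : a ∈ inc d'.1) : d.1 = d'.1 := by
  cases l with
  | nil => simp at hd
  | cons c l =>
    have hne : ∀ d' ∈ c :: l, d'.2 ≠ a := by
      intro d' hd' h'
      exact (List.nodup_cons.1 hn).1 (List.mem_map.2 ⟨d', hd', h'⟩)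
    have := h.tail_not_start hne
    rcases List.mem_cons.1 hd with rfl | h1
    · rcases List.mem_cons.1 hd' with rfl | h2
      · rfl
      · exact absurd hb' (this _ h2)
    · exact absurd hb (this _ h1)

theorem IsW.trim {inc : E → Sym2 V} {T : Set V} {a b x : V} {l : List (E × V)}
    (h : IsW inc a l b) (hb : b ∈ T) (hbx : b ≠ x) :
    ∃ l₁ l₂ s, l = l₁ ++ l₂ ∧ IsW inc a l₁ s ∧ s ∈ T ∧ s ≠ x ∧
      ∀ y ∈ a :: l₁.map Prod.snd, y ∈ T → y = x ∨ y = s := by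
  induction l generalizing a with
  | nil => cases h; exact ⟨[], [], _, rfl, rfl, hb, hbx, by simp⟩
  | cons d l ih =>
    by_cases ha : a ∈ T ∧ a ≠ x
    · exact ⟨[], d :: l, a, rfl, rfl, ha.1, ha.2, by simp⟩
    · obtain ⟨l₁, l₂, s, h1, h2, h3, h4, h5⟩ := ih h.2
      refine ⟨d :: l₁, l₂, s, by simp [h1], ⟨h.1, h2⟩, h3, h4, ?_⟩
      intro y hy hyT
      rcases List.mem_cons.1 hy with rfl | hy
      · by_contra hc
        exact ha ⟨hyT, fun h => hc (Or.inl h)⟩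
      · exact h5 y (by simpa using hy) hyT

theorem linkable_of_system {G : Multigraph V E} {T : Set V} {x : V} (hx : x ∈ T)
    (h : ∃ Pt : Set (G.TPath T), G.TPathDisjoint Pt ∧
      ∀ e ∈ G.inci x, ∃ p ∈ Pt, e ∈ p.walk.edges) : Linkable G.inc Set.univ T x := by
  classical
  obtain ⟨Pt, hd, hc⟩ := h
  by_cases hne : (G.inci x).Nonempty
  swap
  · have hno : ∀ c, c ∉ del G.inc Set.univ x := fun c hcc => hne ⟨c, hcc.2⟩
    exact ⟨fun _ => ∅, fun c h => absurd h (hno c), fun c h => absurd h (hno c),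
      fun c h => absurd h (hno c), fun c h => absurd h (hno c), fun c h => absurd h (hno c),
      fun c h => absurd h (hno c)⟩
  obtain ⟨e₀, he₀⟩ := hne
  obtain ⟨p₀, -⟩ := hc e₀ he₀
  have : Nonempty (G.TPath T) := ⟨p₀⟩
  choose! f hf hfe using hc
  have at_t : ∀ c ∈ G.inci x, (∀ e ∈ (f c).walk.edges, x ∈ G.inc e → e = c) ∧
      ∃ s ∈ T, s ≠ x ∧ Reach G.inc {e | e ∈ (f c).walk.edges} x s := by
    intro c hc
    obtain ⟨l, h1, h2, h3⟩ := walk_toL (f c).walk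
    have hn := (f c).support_nodup
    rw [← h3] at hn
    have hce := hfe c hc
    rw [← h2] at hce
    obtain ⟨d, hdl, rfl⟩ := List.mem_map.1 hce
    have hxs := h1.ends_mem hdl hc
    rw [h3] at hxs
    have hr : Reach G.inc {e | e ∈ (f d.1).walk.edges} (f d.1).first (f d.1).last :=
      h1.reach fun d' hd' => by
        show d'.1 ∈ (f d.1).walk.edges
        rw [← h2]; exact List.mem_map_of_mem hd'
    rcases (f d.1).internal x hxs hx with hxf | hxf
    · constructor
      · intro e he hxe
        rw [← h2] at he
        obtain ⟨d', hd', rfl⟩ := List.mem_map.1 he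
        exact h1.first_unique hn hd' hdl (hxf ▸ hxe) (hxf ▸ hc)
      · refine ⟨_, (f d.1).last_mem, ?_, ?_⟩
        · rw [hxf]; exact (f d.1).ne.symm
        · rw [hxf]; exact hr
    · constructor
      · intro e he hxe
        rw [← h2] at he
        obtain ⟨d', hd', rfl⟩ := List.mem_map.1 he
        exact h1.last_unique hn hd' hdl (hxf ▸ hxe) (hxf ▸ hc)
      · refine ⟨_, (f d.1).first_mem, ?_, ?_⟩
        · rw [hxf]; exact (f d.1).ne
        · rw [hxf]; exact hr.symm
  refine ⟨fun c => {e | e ∈ (f c).walk.edges}, fun _ _ _ _ => trivial, fun c hc => hfe c hc.2,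
    fun c hc => hc.2, fun c hc => (at_t c hc.2).1, fun c hc => (at_t c hc.2).2, ?_⟩
  intro c hc c' hc' e he he'
  by_cases hff : f c = f c'
  · have := hfe c hc.2
    rw [hff] at this
    exact (at_t c' hc'.2).1 c this hc.2
  · exact absurd he' (hd _ (hf c hc.2) _ (hf c' hc'.2) hff e he)

theorem system_of_linkable {G : Multigraph V E} {T : Set V} {x : V} (hx : x ∈ T)
    (h : Linkable G.inc Set.univ T x) : ∃ Pt : Set (G.TPath T), G.TPathDisjoint Pt ∧
      ∀ e ∈ G.inci x, ∃ p ∈ Pt, e ∈ p.walk.edges := by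
  obtain ⟨F, hF⟩ := h
  have key : ∀ c ∈ G.inci x, ∃ p : G.TPath T, c ∈ p.walk.edges ∧ ∀ e ∈ p.walk.edges, e ∈ F c := by
    intro c hc
    have hcd : c ∈ del G.inc Set.univ x := ⟨trivial, hc⟩
    obtain ⟨s, hs, hsx, hr⟩ := hF.reach c hcd
    obtain ⟨l, h1, h2, h3⟩ := hr.simple
    obtain ⟨l₁, l₂, s', rfl, h4, h5, h6, h7⟩ := h1.trim hs hsx
    have hn : (x :: l₁.map Prod.snd).Nodup := by
      rw [List.map_append, ← List.cons_append] at h3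
      exact (List.nodup_append.1 h3).1
    obtain ⟨p, hp1, hp2⟩ := toWalk (G := G) h4
    refine ⟨⟨x, s', p, hx, h5, h6.symm, hp2 ▸ hn, by rw [hp2]; exact h7⟩, ?_, ?_⟩
    · show c ∈ p.edges
      rw [hp1]
      cases l₁ with
      | nil => exact absurd h4.symm h6
      | cons d l =>
        have := hF.at_t c hcd d.1 (h2 d (by simp)) (by rw [h4.1]; simp)
        simp [this]
    · intro e he
      have he : e ∈ p.edges := he
      rw [hp1] at he
      obtain ⟨d, hd, rfl⟩ := List.mem_map.1 he
      exact h2 d (by simp [hd])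
  choose f hf using key
  refine ⟨{p | ∃ c hc, f c hc = p}, ?_, fun e he => ⟨f e he, ⟨e, he, rfl⟩, (hf e he).1⟩⟩
  rintro _ ⟨c, hc, rfl⟩ _ ⟨c', hc', rfl⟩ hne e he he'
  have := hF.disj c ⟨trivial, hc⟩ c' ⟨trivial, hc'⟩ e ((hf c hc).2 e he) ((hf c' hc').2 e he')
  subst this
  exact hne rfl

theorem linkable_delete {G : Multigraph V E} {T : Set V} {x : V} {Z D : Set E} (hDZ : D ⊆ Z)
    (hZD : ∀ e ∈ Z, x ∈ G.inc e → e ∈ D)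
    (h : Linkable G.inc (Set.univ \ Z) T x) : Linkable (G.deleteEdges D).inc Set.univ T x := by
  obtain ⟨F, hF⟩ := h
  have hdel : ∀ c ∈ del (G.deleteEdges D).inc Set.univ x, c.1 ∈ del G.inc (Set.univ \ Z) x :=
    fun c hc => ⟨⟨trivial, fun h => c.2 (hZD _ h hc.2)⟩, hc.2⟩
  refine ⟨fun c => {e | e.1 ∈ F c.1}, fun _ _ _ _ => trivial, fun c hc => hF.mem _ (hdel c hc),
    fun c hc => hc.2, fun c hc e he hxe => Subtype.ext (hF.at_t _ (hdel c hc) _ he hxe), ?_,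
    fun c hc c' hc' e he he' => Subtype.ext (hF.disj _ (hdel c hc) _ (hdel c' hc') _ he he')⟩
  intro c hc
  obtain ⟨s, hs, hsx, hr⟩ := hF.reach _ (hdel c hc)
  refine ⟨s, hs, hsx, Relation.ReflTransGen.mono ?_ _ _ hr⟩
  rintro a b ⟨e, he, hi⟩
  exact ⟨⟨e, fun h => (hF.sub _ (hdel c hc) he).2 (hDZ h)⟩, he, hi⟩

theorem eul_delete {G : Multigraph V E} {X : Set V} {a b : V} {l : List (E × V)} {D : Set E}
    (h : IsW G.inc a l b) (hn : (a :: l.map Prod.snd).Nodup) (ha : a ∉ X) (hb : b ∉ X)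
    (hD : D = {e | e ∈ l.map Prod.fst})
    (hE : ¬ ((G.cut X).Finite ∧ Odd (G.cut X).ncard)) :
    ¬ (((G.deleteEdges D).cut X).Finite ∧ Odd ((G.deleteEdges D).cut X).ncard) := by
  rintro ⟨hf, ho⟩
  apply hE
  have hDf : (D ∩ G.cut X).Finite := by
    apply Set.Finite.inter_of_left
    rw [hD]; exact List.finite_toSet _
  have hDe : Even (D ∩ G.cut X).ncard := by
    rw [hD]
    exact (h.parity' (h.edges_nodup hn) X).2 ⟨fun h => absurd h ha, fun h => absurd h hb⟩
  have heq : G.cut X = Subtype.val '' ((G.deleteEdges D).cut X) ∪ (D ∩ G.cut X) := by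
    ext e
    constructor
    · intro he
      by_cases hed : e ∈ D
      · exact Or.inr ⟨hed, he⟩
      · exact Or.inl ⟨⟨e, hed⟩, he, rfl⟩
    · rintro (⟨e, he, rfl⟩ | he)
      · exact he
      · exact he.2
  have hdis : Disjoint (Subtype.val '' ((G.deleteEdges D).cut X)) (D ∩ G.cut X) := by
    rw [Set.disjoint_left]
    rintro _ ⟨e, _, rfl⟩ h2
    exact e.2 h2.1
  have hif := hf.image Subtype.val
  refine ⟨by rw [heq]; exact hif.union hDf, ?_⟩
  rw [heq, Set.ncard_union_eq hdis hif hDf,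
    Set.ncard_image_of_injective _ Subtype.val_injective]
  exact ho.add_even hDe

end LC

/-- If `G` is inner Eulerian w.r.t. `T` and the linkability condition holds for
every `t ∈ T`, then for every `t ∈ T` and `e ∈ δ(t)` there is a `T`-path `P`
through `e` such that after deleting the edges of `P` the linkability condition
still holds for every vertex of `T` and the graph remains inner Eulerian. -/
theorem exists_good_TPath {V : Type u} {E : Type v} (G : Multigraph V E)
    (T : Set V)
    (hEul : ∀ X : Set V, X ⊆ Tᶜ → ¬ ((G.cut X).Finite ∧ Odd (G.cut X).ncard))
    (hlink : ∀ t ∈ T, ∃ Pt : Set (G.TPath T), G.TPathDisjoint Pt ∧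
      ∀ e ∈ G.inci t, ∃ p ∈ Pt, e ∈ p.walk.edges) :
    ∀ t ∈ T, ∀ e ∈ G.inci t,
      ∃ P : G.TPath T, e ∈ P.walk.edges ∧
        (∀ t' ∈ T, ∃ P' : Set ((G.deleteEdges {f | f ∈ P.walk.edges}).TPath T),
          (G.deleteEdges {f | f ∈ P.walk.edges}).TPathDisjoint P' ∧
          ∀ g ∈ (G.deleteEdges {f | f ∈ P.walk.edges}).inci t',
            ∃ q ∈ P', g ∈ q.walk.edges) ∧
        (∀ X : Set V, X ⊆ Tᶜ →
          ¬ (((G.deleteEdges {f | f ∈ P.walk.edges}).cut X).Finite ∧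
            Odd ((G.deleteEdges {f | f ∈ P.walk.edges}).cut X).ncard)) := by

  intro t ht e he
  obtain ⟨Z, s, h, -, heZ, hs, hst, hr, hZt, hZs, hZo, hL⟩ :=
    LC.main_good (inc := G.inc) (S := Set.univ) (T := T) (t := t) (e := e) G.not_isDiag
      (fun Y hY => by rw [Set.univ_inter]; exact hEul Y hY)
      (fun x hx => LC.linkable_of_system hx (hlink x hx)) ht ⟨trivial, he⟩
  obtain ⟨v, l, h1, h2, h3⟩ := hr.pathList hst hZt
  obtain ⟨p, hp1, hp2⟩ := LC.toWalk (G := G) h1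
  obtain ⟨d, hd, hsd⟩ := h1.last_edge (by simp)
  have hhp : h ∈ p.edges := by
    rw [hp1, ← hZs _ (h2 d hd) hsd]
    exact List.mem_map_of_mem hd
  have hep : e ∈ p.edges := by rw [hp1]; simp
  have hinner : ∀ y ∈ p.support, y ∈ T → y = t ∨ y = s := by
    intro y hy hyT
    rw [hp2] at hy
    by_contra hc
    push Not at hc
    rcases List.mem_cons.1 hy with hy | hy
    · exact hc.1 hy
    · obtain ⟨d', hd', rfl⟩ := List.mem_map.1 hy
      obtain ⟨l₁, l₂, hl⟩ := List.append_of_mem hd'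
      rw [hl, LC.isW_append] at h1
      obtain ⟨w, -, hw, -⟩ := h1
      exact hZo d'.1 (h2 d' hd') d'.2 hyT hc.1 hc.2 (by rw [hw]; simp)
  refine ⟨⟨t, s, p, ht, hs, hst.symm, hp2 ▸ h3, hinner⟩, hep, ?_, ?_⟩
  · intro x hx
    refine LC.system_of_linkable hx (LC.linkable_delete (Z := Z) ?_ ?_ (hL x hx))
    · intro f hf
      have hf : f ∈ p.edges := hf
      rw [hp1] at hf
      obtain ⟨d', hd', rfl⟩ := List.mem_map.1 hf
      exact h2 d' hd'
    · intro f hf hxf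
      show f ∈ p.edges
      by_cases hxt : x = t
      · subst hxt; rw [hZt f hf hxf]; exact hep
      · by_cases hxs : x = s
        · subst hxs; rw [hZs f hf hxf]; exact hhp
        · exact absurd hxf (hZo f hf x hx hxt hxs)
  · intro X hX
    exact LC.eul_delete h1 h3 (fun h => hX h ht) (fun h => hX h hs)
      (by rw [← hp1]) (hEul X hX)
end
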